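/- Let a, b be real numbers with a not an integer, b not a nonpositive integer, and b − a not a nonpositive integer. For x > 0 set m₀(x) := ⌊x + 2a − b⌋ and α(x) := m₀(x) − x − 2a + b ∈ (−1, 0]. Then as x → +∞, the optimally truncated remainder F(x) := (1/Γ(b)) · ₁F₁(a; b; x) − (x^{a−b} e^x / Γ(a)) ∑_{j=0}^{m₀(x)−1} (b−a)_j (1−a)_j / (j! x^j) satisfies F(x) = (x^{−a}/Γ(b−a)) · [ cos(πa) + (2 sin(πa)/√(2πx)) · (2/3 − α(x)) ] + O(x^{−a−1}). -/

import Mathlib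

open Complex Filter Asymptotics

/-- The Kummer confluent hypergeometric function `₁F₁(a; b; z)`,
defined by its everywhere convergent power series. -/
noncomputable def kummer (a b z : ℂ) : ℂ :=
  ∑' n : ℕ, ((ascPochhammer ℂ n).eval a / (ascPochhammer ℂ n).eval b) * z ^ n / n.factorial

section
open MeasureTheory Set Topology

namespace KSL

/-- Series `∑ z^n / ((n+p) n!)`. -/
noncomputable def Sp (p : ℝ) (z : ℂ) : ℂ := ∑' n : ℕ, z ^ n / (((n : ℂ) + p) * n.factorial)

lemma nonint_lb (p : ℝ) (hp : ∀ n : ℤ, p ≠ n) : ∃ c > 0, ∀ n : ℕ, c ≤ ‖((n : ℂ) + p)‖ := by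
  refine ⟨min (Int.fract p) (1 - Int.fract p), ?_, ?_⟩
  · apply lt_min
    · apply lt_of_le_of_ne (Int.fract_nonneg p)
      intro h
      exact hp ⌊p⌋ (by have := Int.self_sub_floor p; linarith)
    · linarith [Int.fract_lt_one p]
  · intro n
    have : ((n : ℂ) + p) = (((n : ℝ) + p : ℝ) : ℂ) := by push_cast; rfl
    rw [this, Complex.norm_real, Real.norm_eq_abs]
    have h1 : (n : ℝ) + p = ((n : ℤ) + ⌊p⌋ : ℤ) + Int.fract p := by
      push_cast; rw [← Int.self_sub_floor p]; ring
    rw [h1]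
    rcases le_or_gt 0 ((n : ℤ) + ⌊p⌋ : ℤ) with h | h
    · have : (0 : ℝ) ≤ ((n : ℤ) + ⌊p⌋ : ℤ) := by exact_mod_cast h
      refine (min_le_left _ _).trans (le_trans ?_ (le_abs_self _))
      linarith
    · have h' : ((n : ℤ) + ⌊p⌋ : ℤ) ≤ -1 := by omega
      have : (((n : ℤ) + ⌊p⌋ : ℤ) : ℝ) ≤ -1 := by exact_mod_cast h'
      refine (min_le_right _ _).trans (le_trans ?_ (neg_le_abs _))
      linarith

lemma nonint_ne (p : ℝ) (hp : ∀ n : ℤ, p ≠ n) (n : ℕ) : ((n : ℂ) + p) ≠ 0 := by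
  obtain ⟨c, hc, h⟩ := nonint_lb p hp
  intro h0
  have := h n
  rw [h0, norm_zero] at this
  linarith

lemma Sp_summable (p : ℝ) (hp : ∀ n : ℤ, p ≠ n) (z : ℂ) :
    Summable (fun n : ℕ => z ^ n / (((n : ℂ) + p) * n.factorial)) := by
  obtain ⟨c, hc, h⟩ := nonint_lb p hp
  refine Summable.of_norm_bounded (g := fun n : ℕ => c⁻¹ * (‖z‖ ^ n / n.factorial))
    ((Real.summable_pow_div_factorial _).mul_left _) (fun n => ?_)
  rw [norm_div, norm_mul, norm_pow, Complex.norm_natCast, div_mul_eq_div_div, div_right_comm,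
    div_eq_inv_mul _ ‖(n : ℂ) + p‖]
  gcongr
  exact h n

lemma hasSum_cg {f g : ℕ → ℂ} {s : ℂ} (h : HasSum g s) (e : ∀ n, f n = g n) : HasSum f s := by
  rw [show f = g from funext e]; exact h

lemma exp_tsum (z : ℂ) : HasSum (fun n : ℕ => z ^ n / (n.factorial : ℂ)) (Complex.exp z) := by
  rw [Complex.exp_eq_exp_ℂ]
  exact NormedSpace.expSeries_div_hasSum_exp z

lemma Sp_rec (p : ℝ) (hp : ∀ n : ℤ, p ≠ n) (z : ℂ) :
    (p : ℂ) * Sp p z = Complex.exp z - z * Sp (p + 1) z := by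
  have hp1 : ∀ n : ℤ, p + 1 ≠ n := fun n h => hp (n - 1) (by push_cast; linarith)
  have h1 := (Sp_summable p hp z).hasSum.mul_left (p : ℂ)
  have h2 := (exp_tsum z).sub h1
  have h3 := (Sp_summable (p + 1) hp1 z).hasSum.mul_left z
  have h4 : HasSum (fun n : ℕ => z ^ n / (n.factorial : ℂ) - p * (z ^ n / (((n : ℂ) + p) * n.factorial)))
      (z * Sp (p + 1) z) := by
    rw [← hasSum_nat_add_iff' 1]
    have h0 : (p : ℂ) ≠ 0 := by simpa using nonint_ne p hp 0
    have : ∑ i ∈ Finset.range 1, (z ^ i / (i.factorial : ℂ) - p * (z ^ i / (((i : ℂ) + p) * i.factorial))) = 0 := by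
      simp [h0]
    rw [this, sub_zero]
    refine hasSum_cg h3 (fun n => ?_)
    have hn := nonint_ne p hp (n + 1)
    have hf : ((n + 1).factorial : ℂ) = (n + 1) * n.factorial := by
      rw [Nat.factorial_succ]; push_cast; ring
    have hf0 : (n.factorial : ℂ) ≠ 0 := by exact_mod_cast n.factorial_ne_zero
    have hn1 : (n : ℂ) + 1 ≠ 0 := by exact_mod_cast n.succ_ne_zero
    rw [hf]
    push_cast at hn ⊢
    have hn' : (n : ℂ) + (p + 1) ≠ 0 := by convert hn using 1; ring
    field_simp
    ring
  have := h2.unique h4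
  simp only [Sp] at this ⊢
  linear_combination -this

lemma Sp_hasDerivAt (p : ℝ) (hp0 : 0 < p) (z : ℂ) :
    ∃ D : ℂ, HasDerivAt (Sp p) D z ∧ z * D + p * Sp p z = Complex.exp z := by
  have hp' : ∀ n : ℕ, ((n : ℂ) + p) ≠ 0 := fun n => by
    have : (n : ℝ) + p ≠ 0 := by positivity
    exact_mod_cast this
  have hnorm : ∀ n : ℕ, ‖((n : ℂ) + p)‖ = n + p := fun n => by
    have : ((n : ℂ) + p) = (((n : ℝ) + p : ℝ) : ℂ) := by push_cast; rfl
    rw [this, Complex.norm_real, Real.norm_eq_abs, abs_of_pos (by positivity)]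
  set R : ℝ := ‖z‖ + 1 with hR
  have hR1 : 1 ≤ R := by rw [hR]; linarith [norm_nonneg z]
  have hzR : z ∈ Metric.ball (0 : ℂ) R := by simp [hR]
  have hbd : ∀ (n : ℕ) (y : ℂ), y ∈ Metric.ball (0 : ℂ) R →
      ‖(n : ℂ) * y ^ (n - 1) / (((n : ℂ) + p) * n.factorial)‖ ≤ R ^ n / n.factorial := by
    intro n y hy
    rw [norm_div, norm_mul, norm_mul, norm_pow, Complex.norm_natCast, Complex.norm_natCast, hnorm,
      mul_div_mul_comm, mul_comm]
    have hy' : ‖y‖ ≤ R := by simpa using (Metric.mem_ball.1 hy).le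
    have h1 : (n : ℝ) / (n + p) ≤ 1 := by
      rw [div_le_one (by positivity)]; linarith
    have h2 : ‖y‖ ^ (n - 1) ≤ R ^ n :=
      (pow_le_pow_left₀ (norm_nonneg _) hy' _).trans (pow_le_pow_right₀ hR1 (Nat.sub_le _ _))
    calc ‖y‖ ^ (n - 1) / (n.factorial : ℝ) * (n / (n + p)) ≤ ‖y‖ ^ (n - 1) / (n.factorial : ℝ) * 1 := by
          gcongr
      _ ≤ _ := by rw [mul_one]; gcongr
  have hg0 : Summable (fun n : ℕ => z ^ n / (((n : ℂ) + p) * n.factorial)) := by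
    refine Summable.of_norm_bounded (g := fun n : ℕ => p⁻¹ * (‖z‖ ^ n / n.factorial))
      ((Real.summable_pow_div_factorial _).mul_left _) (fun n => ?_)
    rw [norm_div, norm_mul, norm_pow, Complex.norm_natCast, div_mul_eq_div_div, div_right_comm,
      div_eq_inv_mul _ ‖(n : ℂ) + p‖, hnorm]
    gcongr
    simp
  have hD := hasDerivAt_tsum_of_isPreconnected (𝕜 := ℂ) (F := ℂ)
    (u := fun n : ℕ => R ^ n / n.factorial)
    (g := fun (n : ℕ) (y : ℂ) => y ^ n / (((n : ℂ) + p) * n.factorial))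
    (g' := fun (n : ℕ) (y : ℂ) => (n : ℂ) * y ^ (n - 1) / (((n : ℂ) + p) * n.factorial))
    (Real.summable_pow_div_factorial R) Metric.isOpen_ball
    ((convex_ball (0 : ℂ) R).isPreconnected)
    (fun n y _ => (hasDerivAt_pow n y).div_const _) hbd hzR hg0 hzR
  refine ⟨_, hD, ?_⟩
  have hs : Summable (fun n : ℕ => (n : ℂ) * z ^ (n - 1) / (((n : ℂ) + p) * n.factorial)) :=
    Summable.of_norm_bounded (Real.summable_pow_div_factorial R) (fun n => hbd n z hzR)
  have h1 := (hs.hasSum.mul_left z).add (hg0.hasSum.mul_left (p : ℂ))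
  refine h1.unique ?_
  refine hasSum_cg (exp_tsum z) (fun n => ?_)
  have hf0 : (n.factorial : ℂ) ≠ 0 := by exact_mod_cast n.factorial_ne_zero
  have := hp' n
  rcases n with _ | n
  · have h0 : (p : ℂ) ≠ 0 := by exact_mod_cast hp0.ne'
    simp [h0]
  · simp only [Nat.add_sub_cancel]
    rw [pow_succ]
    field_simp
    
end KSL

end

section
open MeasureTheory Set Topology

namespace KSL

/-- Laplace integral along the vertical ray. -/
noncomputable def Hq (q : ℝ) (ζ : ℂ) : ℂ :=
  ∫ τ in Ioi (0 : ℝ), Complex.exp (-ζ * τ) * (1 + I * τ) ^ (q : ℂ)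

lemma slit (τ : ℝ) : (1 + I * (τ : ℂ)) ∈ slitPlane := by
  left; simp

lemma ne0 (τ : ℝ) : (1 + I * (τ : ℂ)) ≠ 0 := slitPlane_ne_zero (slit τ)

lemma norm_one_add (τ : ℝ) : ‖(1 + I * (τ : ℂ))‖ = Real.sqrt (1 + τ ^ 2) := by
  have : (1 + I * (τ : ℂ)) = (1 : ℝ) + (τ : ℝ) * I := by push_cast; ring
  rw [this, Complex.norm_add_mul_I]; simp

lemma norm_cpow_real (z : ℂ) (hz : z ≠ 0) (q : ℝ) : ‖z ^ (q : ℂ)‖ = ‖z‖ ^ q := by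
  rw [Complex.norm_cpow_of_ne_zero hz]; simp

lemma one_le_norm (τ : ℝ) : 1 ≤ ‖(1 + I * (τ : ℂ))‖ := by
  rw [norm_one_add]; apply Real.one_le_sqrt.2; nlinarith [sq_nonneg τ]

lemma norm_bd (q : ℝ) (hq : q ≤ 1) (τ : ℝ) (hτ : 0 < τ) : ‖(1 + I * (τ : ℂ)) ^ (q : ℂ)‖ ≤ 1 + τ := by
  rw [norm_cpow_real _ (ne0 τ)]
  calc _ ≤ ‖(1 + I * (τ : ℂ))‖ ^ (1 : ℝ) := Real.rpow_le_rpow_of_exponent_le (one_le_norm τ) hq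
    _ ≤ _ := by
      rw [Real.rpow_one]
      refine (norm_add_le _ _).trans ?_
      simp [abs_of_pos hτ]

lemma cont_cpow (q : ℝ) : Continuous (fun τ : ℝ => (1 + I * (τ : ℂ)) ^ (q : ℂ)) := by
  apply Continuous.cpow (by fun_prop) continuous_const
  exact slit

lemma cont_Hq (q : ℝ) (ζ : ℂ) :
    Continuous (fun τ : ℝ => Complex.exp (-ζ * τ) * (1 + I * (τ : ℂ)) ^ (q : ℂ)) :=
  Continuous.mul (by fun_prop) (cont_cpow q)

lemma norm_exp_neg (ζ : ℂ) (τ : ℝ) : ‖Complex.exp (-ζ * τ)‖ = Real.exp (-ζ.re * τ) := by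
  rw [Complex.norm_exp]; simp

lemma int_pow_exp (k : ℕ) (r : ℝ) (hr : 0 < r) :
    IntegrableOn (fun τ : ℝ => τ ^ k * Real.exp (-r * τ)) (Ioi 0) := by
  have := integrableOn_rpow_mul_exp_neg_mul_rpow (p := 1) (s := k) (b := r)
    (by have : (0 : ℝ) ≤ k := by positivity
        linarith) one_pos hr
  simpa using this

lemma int_bd (r : ℝ) (hr : 0 < r) :
    IntegrableOn (fun τ : ℝ => Real.exp (-r * τ) * (1 + τ)) (Ioi 0) := by
  have h := (int_pow_exp 0 r hr).add (int_pow_exp 1 r hr)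
  refine h.congr_fun (fun τ _ => ?_) measurableSet_Ioi
  simp; ring

lemma int_bd2 (r : ℝ) (hr : 0 < r) :
    IntegrableOn (fun τ : ℝ => τ * (Real.exp (-r * τ) * (1 + τ))) (Ioi 0) := by
  have h := (int_pow_exp 1 r hr).add (int_pow_exp 2 r hr)
  refine h.congr_fun (fun τ _ => ?_) measurableSet_Ioi
  simp; ring

lemma Hq_integrable (q : ℝ) (hq : q ≤ 1) (ζ : ℂ) (hζ : 0 < ζ.re) :
    IntegrableOn (fun τ : ℝ => Complex.exp (-ζ * τ) * (1 + I * (τ : ℂ)) ^ (q : ℂ)) (Ioi 0) := by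
  refine Integrable.mono' (int_bd ζ.re hζ) (cont_Hq q ζ).aestronglyMeasurable ?_
  filter_upwards [ae_restrict_mem measurableSet_Ioi] with τ hτ
  rw [norm_mul, norm_exp_neg]
  gcongr
  exact norm_bd q hq τ hτ

lemma Hq_rec (p : ℝ) (hp : p ≤ 1) (ζ : ℂ) (hζ : 0 < ζ.re) :
    -1 = -ζ * Hq p ζ + I * p * Hq (p - 1) ζ := by
  have hd : ∀ τ ∈ Ici (0 : ℝ), HasDerivAt
      (fun τ : ℝ => Complex.exp (-ζ * τ) * (1 + I * (τ : ℂ)) ^ (p : ℂ))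
      (-ζ * (Complex.exp (-ζ * τ) * (1 + I * (τ : ℂ)) ^ (p : ℂ)) +
        I * p * (Complex.exp (-ζ * τ) * (1 + I * (τ : ℂ)) ^ ((p - 1 : ℝ) : ℂ))) τ := by
    intro τ _
    have h1 : HasDerivAt (fun z : ℂ => Complex.exp (-ζ * z) * (1 + I * z) ^ (p : ℂ))
      ((Complex.exp (-ζ * τ) * (-ζ * 1)) * (1 + I * τ) ^ (p : ℂ) +
        Complex.exp (-ζ * τ) * ((p : ℂ) * (1 + I * τ) ^ ((p : ℂ) - 1) * (I * 1))) (τ : ℂ) := by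
      apply HasDerivAt.mul
      · exact ((hasDerivAt_id' (τ : ℂ)).const_mul (-ζ)).cexp
      · exact (((hasDerivAt_id' (τ : ℂ)).const_mul I).const_add 1).cpow_const (slit τ)
    have := h1.comp_ofReal
    convert this using 1
    push_cast; ring
  have hi1 := Hq_integrable p hp ζ hζ
  have hi2 := Hq_integrable (p - 1) (by linarith) ζ hζ
  have hlim : Tendsto (fun τ : ℝ => Complex.exp (-ζ * τ) * (1 + I * (τ : ℂ)) ^ (p : ℂ)) atTop (𝓝 0) := by
    rw [tendsto_zero_iff_norm_tendsto_zero]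
    have hg : Tendsto (fun τ : ℝ => Real.exp (-ζ.re * τ) * (1 + τ)) atTop (𝓝 0) := by
      have h0 := tendsto_rpow_mul_exp_neg_mul_atTop_nhds_zero 0 ζ.re hζ
      have h1 := tendsto_rpow_mul_exp_neg_mul_atTop_nhds_zero 1 ζ.re hζ
      have := h0.add h1
      simp only [add_zero] at this
      refine this.congr (fun τ => ?_)
      simp; ring
    refine squeeze_zero' (Eventually.of_forall fun τ => norm_nonneg _) ?_ hg
    filter_upwards [eventually_gt_atTop 0] with τ hτ
    rw [norm_mul, norm_exp_neg]
    gcongr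
    exact norm_bd p hp τ hτ
  have := integral_Ioi_of_hasDerivAt_of_tendsto' hd
    ((hi1.const_mul (-ζ)).add (hi2.const_mul (I * p))) hlim
  rw [integral_add (hi1.const_mul (-ζ)) (hi2.const_mul (I * p)), integral_const_mul,
    integral_const_mul] at this
  simp only [Hq]
  rw [this]; simp

lemma Hq_hasDerivAt (p : ℝ) (hp : p ≤ 1) (ζ : ℂ) (hζ : 0 < ζ.re) :
    ∃ D : ℂ, HasDerivAt (Hq (p - 1)) D ζ ∧ ζ * (D + I * Hq (p - 1) ζ) + p * Hq (p - 1) ζ = I := by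
  have hs : {w : ℂ | ζ.re / 2 < w.re} ∈ 𝓝 ζ :=
    (isOpen_lt continuous_const Complex.continuous_re).mem_nhds (by simp; linarith)
  have hD := hasDerivAt_integral_of_dominated_loc_of_deriv_le (𝕜 := ℂ)
    (μ := volume.restrict (Ioi (0 : ℝ)))
    (F := fun (ζ : ℂ) (τ : ℝ) => Complex.exp (-ζ * τ) * (1 + I * (τ : ℂ)) ^ ((p - 1 : ℝ) : ℂ))
    (F' := fun (ζ : ℂ) (τ : ℝ) => -(τ : ℂ) * (Complex.exp (-ζ * τ) * (1 + I * (τ : ℂ)) ^ ((p - 1 : ℝ) : ℂ)))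
    (bound := fun τ : ℝ => τ * (Real.exp (-(ζ.re / 2) * τ) * (1 + τ))) hs
    (Eventually.of_forall fun w => (cont_Hq _ w).aestronglyMeasurable)
    (Hq_integrable (p - 1) (by linarith) ζ hζ)
    (Continuous.aestronglyMeasurable (Continuous.mul (by fun_prop) (cont_Hq _ ζ)))
    (by
      filter_upwards [ae_restrict_mem measurableSet_Ioi] with τ hτ w hw
      have hτ' : (0 : ℝ) < τ := hτ
      rw [norm_mul, norm_mul, norm_exp_neg, norm_neg, Complex.norm_real, Real.norm_eq_abs,
        abs_of_pos hτ']
      have hw' : ζ.re / 2 < w.re := hw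
      have hn := norm_bd (p - 1) (by linarith) τ hτ
      have he : Real.exp (-w.re * τ) ≤ Real.exp (-(ζ.re / 2) * τ) := by
        apply Real.exp_le_exp.2; nlinarith
      gcongr)
    (int_bd2 _ (by linarith))
    (by
      refine Eventually.of_forall fun τ w _ => ?_
      have := (((hasDerivAt_id' w).fun_neg.mul_const (τ : ℂ)).cexp).mul_const
        ((1 + I * (τ : ℂ)) ^ ((p - 1 : ℝ) : ℂ))
      exact this.congr_deriv (by ring))
  refine ⟨_, hD.2, ?_⟩
  set D := ∫ τ in Ioi (0 : ℝ), -(τ : ℂ) * (Complex.exp (-ζ * τ) * (1 + I * (τ : ℂ)) ^ ((p - 1 : ℝ) : ℂ))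
    with hDdef
  have hsplit : Hq p ζ = Hq (p - 1) ζ - I * D := by
    rw [hDdef, ← integral_const_mul, Hq, Hq, ← integral_sub (Hq_integrable (p - 1) (by linarith) ζ hζ)
      (hD.1.const_mul I)]
    apply integral_congr_ae
    refine Eventually.of_forall fun τ => ?_
    have : (1 + I * (τ : ℂ)) ^ (p : ℂ) = (1 + I * (τ : ℂ)) ^ ((p - 1 : ℝ) : ℂ) * (1 + I * τ) := by
      have h := Complex.cpow_add ((p - 1 : ℝ) : ℂ) 1 (ne0 τ)
      rw [Complex.cpow_one] at h
      rw [← h]; push_cast; ring_nf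
    simp only
    rw [this]; ring
  have hr := Hq_rec p hp ζ hζ
  rw [hsplit] at hr
  linear_combination I * hr + (ζ * D) * I_sq + (p * Hq (p - 1) ζ) * I_sq
end KSL

end

section
open MeasureTheory Set Topology

namespace KSL

lemma pos_mul_cpow (r : ℝ) (hr : 0 < r) (z : ℂ) (hz : z ≠ 0) (w : ℂ) :
    ((r : ℂ) * z) ^ w = (r : ℂ) ^ w * z ^ w := by
  have hr' : (r : ℂ) ≠ 0 := by exact_mod_cast hr.ne'
  rw [Complex.cpow_def_of_ne_zero (mul_ne_zero hr' hz), Complex.cpow_def_of_ne_zero hr',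
    Complex.cpow_def_of_ne_zero hz, Complex.log_ofReal_mul hr hz, ← Complex.exp_add,
    Complex.ofReal_log hr.le]
  ring_nf

lemma Hq_scale (p ε : ℝ) (hε : 0 < ε) :
    (ε : ℂ) ^ (p : ℂ) * Hq (p - 1) ε =
      ∫ u in Ioi (0 : ℝ), Complex.exp (-(u : ℂ)) * ((ε : ℂ) + I * u) ^ ((p - 1 : ℝ) : ℂ) := by
  have hε' : (ε : ℂ) ≠ 0 := by exact_mod_cast hε.ne'
  have h := integral_comp_mul_left_Ioi
    (fun u : ℝ => Complex.exp (-(u : ℂ)) * (1 + I * ((ε : ℂ)⁻¹ * u)) ^ ((p - 1 : ℝ) : ℂ)) 0 hε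
  rw [mul_zero] at h
  have h1 : Hq (p - 1) ε = ∫ x in Ioi (0 : ℝ), (fun u : ℝ => Complex.exp (-(u : ℂ)) *
      (1 + I * ((ε : ℂ)⁻¹ * u)) ^ ((p - 1 : ℝ) : ℂ)) (ε * x) := by
    rw [Hq]
    congr 1
    funext x
    simp only [Complex.ofReal_mul]
    rw [inv_mul_cancel_left₀ hε', neg_mul]
  rw [h1, h, Complex.real_smul, ← integral_const_mul, ← integral_const_mul]
  congr 1
  funext u
  have h2 : (ε : ℂ) + I * u = ε * (1 + I * ((ε⁻¹ * u : ℝ) : ℂ)) := by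
    push_cast; field_simp
  rw [h2, pos_mul_cpow ε hε _ (ne0 _)]
  have h3 : (ε : ℂ) ^ (p : ℂ) = ε ^ ((p - 1 : ℝ) : ℂ) * ε := by
    have h := Complex.cpow_add ((p - 1 : ℝ) : ℂ) 1 hε'
    rw [Complex.cpow_one] at h
    rw [← h]; push_cast; ring_nf
  rw [h3]
  push_cast
  field_simp

lemma I_mul_cpow (u : ℝ) (hu : 0 < u) (q : ℂ) : (I * (u : ℂ)) ^ q = I ^ q * (u : ℂ) ^ q := by
  rw [mul_comm, pos_mul_cpow u hu I I_ne_zero]; ring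

lemma Hq_lim (p : ℝ) (hp0 : 0 < p) (hp1 : p < 1) :
    Tendsto (fun ε : ℝ => (ε : ℂ) ^ (p : ℂ) * Hq (p - 1) ε) (𝓝[>] 0)
      (𝓝 (I ^ ((p - 1 : ℝ) : ℂ) * (Real.Gamma p : ℂ))) := by
  have hG : I ^ ((p - 1 : ℝ) : ℂ) * (Real.Gamma p : ℂ) =
      ∫ u in Ioi (0 : ℝ), Complex.exp (-(u : ℂ)) * (I * (u : ℂ)) ^ ((p - 1 : ℝ) : ℂ) := by
    rw [Real.Gamma_eq_integral hp0, ← integral_complex_ofReal, ← integral_const_mul]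
    refine setIntegral_congr_fun measurableSet_Ioi (fun u hu => ?_)
    have hu' : (0 : ℝ) < u := hu
    rw [I_mul_cpow u hu', Complex.ofReal_mul, Complex.ofReal_exp, Complex.ofReal_cpow hu'.le]
    push_cast
    ring
  rw [hG]
  have : (fun ε : ℝ => (ε : ℂ) ^ (p : ℂ) * Hq (p - 1) ε) =ᶠ[𝓝[>] 0] (fun ε : ℝ =>
      ∫ u in Ioi (0 : ℝ), Complex.exp (-(u : ℂ)) * ((ε : ℂ) + I * u) ^ ((p - 1 : ℝ) : ℂ)) := by
    filter_upwards [self_mem_nhdsWithin] with ε hε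
    exact Hq_scale p ε hε
  refine Tendsto.congr' this.symm ?_
  refine tendsto_integral_filter_of_dominated_convergence
    (fun u : ℝ => Real.exp (-u) * u ^ (p - 1)) ?_ ?_ (Real.GammaIntegral_convergent hp0) ?_
  · filter_upwards [self_mem_nhdsWithin] with ε hε
    apply Continuous.aestronglyMeasurable
    apply Continuous.mul (by fun_prop)
    apply Continuous.cpow (by fun_prop) continuous_const
    intro u; left; simpa using hε
  · filter_upwards [self_mem_nhdsWithin] with ε hε
    filter_upwards [ae_restrict_mem measurableSet_Ioi] with u hu
    have hu' : (0 : ℝ) < u := hu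
    have hε' : (0 : ℝ) < ε := hε
    have hn : (ε : ℂ) + I * u ≠ 0 := fun h => by
      have := congrArg Complex.re h; simp at this; linarith
    rw [norm_mul, Complex.norm_exp, norm_cpow_real _ hn]
    simp only [Complex.neg_re, Complex.ofReal_re]
    refine mul_le_mul_of_nonneg_left ?_ (Real.exp_pos _).le
    apply Real.rpow_le_rpow_of_nonpos hu' _ (by linarith)
    have := Complex.abs_im_le_norm ((ε : ℂ) + I * u)
    simp at this
    rwa [abs_of_pos hu'] at this
  · filter_upwards [ae_restrict_mem measurableSet_Ioi] with u hu
    have hu' : (0 : ℝ) < u := hu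
    apply Tendsto.const_mul
    have hc : ContinuousAt (fun ε : ℝ => ((ε : ℂ) + I * u) ^ ((p - 1 : ℝ) : ℂ)) 0 := by
      apply ContinuousAt.cpow (by fun_prop) continuousAt_const
      right; simpa using hu'.ne'
    have := hc.tendsto
    simp only [Complex.ofReal_zero, zero_add] at this
    exact this.mono_left nhdsWithin_le_nhds

lemma vert_base (p : ℝ) (hp0 : 0 < p) (hp1 : p < 1) (ζ : ℂ) (hζ : 0 < ζ.re) :
    ζ ^ (p : ℂ) * (Sp p (I * ζ) + I * Complex.exp (I * ζ) * Hq (p - 1) ζ) =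
      I ^ (p : ℂ) * (Real.Gamma p : ℂ) := by
  set G : ℂ → ℂ := fun ζ => ζ ^ (p : ℂ) * (Sp p (I * ζ) + I * Complex.exp (I * ζ) * Hq (p - 1) ζ)
    with hGdef
  set U : Set ℂ := {w : ℂ | 0 < w.re} with hU
  have hUo : IsOpen U := isOpen_lt continuous_const Complex.continuous_re
  have hUc : IsPreconnected U := (convex_halfSpace_re_gt 0).isPreconnected
  have hder : ∀ w ∈ U, HasDerivAt G 0 w := by
    intro w hw
    have hw' : 0 < w.re := hw
    have hw0 : w ≠ 0 := fun h => by simp [h] at hw'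
    obtain ⟨D1, h1, e1⟩ := Sp_hasDerivAt p hp0 (I * w)
    obtain ⟨D2, h2, e2⟩ := Hq_hasDerivAt p hp1.le w hw
    have hIw : HasDerivAt (fun w : ℂ => I * w) (I * 1) w := (hasDerivAt_id' w).const_mul I
    have hS : HasDerivAt (fun w : ℂ => Sp p (I * w)) (D1 * (I * 1)) w := h1.comp w hIw
    have hE : HasDerivAt (fun w : ℂ => I * Complex.exp (I * w)) (I * (Complex.exp (I * w) * (I * 1))) w :=
      hIw.cexp.const_mul I
    have hP : HasDerivAt (fun w : ℂ => w ^ (p : ℂ)) ((p : ℂ) * w ^ ((p : ℂ) - 1) * 1) w :=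
      (hasDerivAt_id' w).cpow_const (Or.inl hw')
    have := hP.mul (hS.add (hE.mul h2))
    refine HasDerivAt.congr_deriv this ?_
    have h3 : w ^ (p : ℂ) = w ^ ((p : ℂ) - 1) * w := by
      have h := Complex.cpow_add ((p : ℂ) - 1) 1 hw0
      rw [Complex.cpow_one] at h
      rw [← h]; ring_nf
    rw [h3]
    simp only [Pi.add_apply, Pi.mul_apply]
    linear_combination (w ^ ((p : ℂ) - 1)) * e1 + (w ^ ((p : ℂ) - 1)) * I * Complex.exp (I * w) * e2
      + w ^ ((p : ℂ) - 1) * Complex.exp (I * w) * I_sq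
  have hconst : ∀ w ∈ U, G ζ = G w := fun w hw =>
    hUo.is_const_of_deriv_eq_zero hUc
      (fun w hw => (hder w hw).differentiableAt.differentiableWithinAt)
      (fun w hw => (hder w hw).deriv) hζ hw
  have hlim : Tendsto (fun ε : ℝ => G ε) (𝓝[>] 0) (𝓝 (I ^ (p : ℂ) * (Real.Gamma p : ℂ))) := by
    have hS : ContinuousAt (fun ε : ℝ => Sp p (I * (ε : ℂ))) 0 := by
      obtain ⟨D1, h1, e1⟩ := Sp_hasDerivAt p hp0 (I * ((0 : ℝ) : ℂ))
      exact ContinuousAt.comp (f := fun ε : ℝ => I * (ε : ℂ)) h1.continuousAt (by fun_prop)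
    have hS' := hS.tendsto.mono_left (nhdsWithin_le_nhds (s := Ioi 0))
    have hpow : Tendsto (fun ε : ℝ => (ε : ℂ) ^ (p : ℂ)) (𝓝[>] 0) (𝓝 0) := by
      have : Tendsto (fun ε : ℝ => ε ^ p) (𝓝[>] 0) (𝓝 0) := by
        have := (Real.continuousAt_rpow_const 0 p (Or.inr hp0.le)).tendsto
        rw [Real.zero_rpow hp0.ne'] at this
        exact this.mono_left nhdsWithin_le_nhds
      have h2 := (Complex.continuous_ofReal.tendsto 0).comp this
      rw [Complex.ofReal_zero] at h2
      refine h2.congr' ?_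
      filter_upwards [self_mem_nhdsWithin] with ε hε
      simp only [Function.comp_apply]
      rw [Complex.ofReal_cpow (le_of_lt hε)]
    have hE : Tendsto (fun ε : ℝ => I * Complex.exp (I * (ε : ℂ))) (𝓝[>] 0) (𝓝 I) := by
      have : ContinuousAt (fun ε : ℝ => I * Complex.exp (I * (ε : ℂ))) 0 := by fun_prop
      have := this.tendsto
      simp at this
      exact this.mono_left nhdsWithin_le_nhds
    have := (hpow.mul hS').add (hE.mul (Hq_lim p hp0 hp1))
    have hI : I ^ (p : ℂ) = I * I ^ ((p - 1 : ℝ) : ℂ) := by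
      have h := Complex.cpow_add ((p - 1 : ℝ) : ℂ) 1 I_ne_zero
      rw [Complex.cpow_one] at h
      rw [mul_comm, ← h]; push_cast; ring_nf
    rw [hI, mul_assoc]
    rw [zero_mul, zero_add] at this
    refine this.congr (fun ε => ?_)
    simp only [hGdef]
    ring
  have hev : (fun ε : ℝ => G ε) =ᶠ[𝓝[>] 0] fun _ => G ζ := by
    filter_upwards [self_mem_nhdsWithin] with ε hε
    exact (hconst ε (by simpa [hU] using hε)).symm
  exact tendsto_nhds_unique (tendsto_const_nhds.congr' hev.symm) hlim

lemma vert_step (p : ℝ) (hp : p < 0) (hpi : ∀ n : ℤ, p ≠ n) (ζ : ℂ) (hζ : 0 < ζ.re)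
    (h : ζ ^ ((p + 1 : ℝ) : ℂ) * (Sp (p + 1) (I * ζ) + I * Complex.exp (I * ζ) * Hq (p + 1 - 1) ζ) =
      I ^ ((p + 1 : ℝ) : ℂ) * (Real.Gamma (p + 1) : ℂ)) :
    ζ ^ (p : ℂ) * (Sp p (I * ζ) + I * Complex.exp (I * ζ) * Hq (p - 1) ζ) =
      I ^ (p : ℂ) * (Real.Gamma p : ℂ) := by
  have hw0 : ζ ≠ 0 := fun h => by simp [h] at hζ
  have hp0 : (p : ℂ) ≠ 0 := by exact_mod_cast hp.ne
  rw [Real.Gamma_add_one hp.ne, add_sub_cancel_right] at h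
  have e1 : ζ ^ ((p + 1 : ℝ) : ℂ) = ζ ^ (p : ℂ) * ζ := by
    have h := Complex.cpow_add (p : ℂ) 1 hw0
    rw [Complex.cpow_one] at h
    rw [← h]; push_cast; ring_nf
  have e2 : I ^ ((p + 1 : ℝ) : ℂ) = I ^ (p : ℂ) * I := by
    have h := Complex.cpow_add (p : ℂ) 1 I_ne_zero
    rw [Complex.cpow_one] at h
    rw [← h]; push_cast; ring_nf
  rw [e1, e2] at h
  have r1 := Sp_rec p hpi (I * ζ)
  have r2 := Hq_rec p (by linarith) ζ hζ
  apply mul_left_cancel₀ hp0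
  push_cast at h
  linear_combination (-I) * h + ζ ^ (p : ℂ) * r1 - ζ ^ (p : ℂ) * Complex.exp (I * ζ) * r2
    + (Complex.exp (I * ζ) * Hq p ζ * ζ ^ (p : ℂ) * ζ) * I_sq -  (I ^ (p : ℂ) * p * Real.Gamma p) * I_sq

lemma vert (p : ℝ) (hp : p < 1) (hpi : ∀ n : ℤ, p ≠ n) (ζ : ℂ) (hζ : 0 < ζ.re) :
    ζ ^ (p : ℂ) * (Sp p (I * ζ) + I * Complex.exp (I * ζ) * Hq (p - 1) ζ) =
      I ^ (p : ℂ) * (Real.Gamma p : ℂ) := by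
  obtain ⟨n, hn⟩ := exists_nat_gt (-p)
  induction n generalizing p with
  | zero => 
    apply vert_base p _ hp ζ hζ
    simp at hn; linarith
  | succ n ih =>
    rcases lt_or_gt_of_ne (a := p) (b := 0) (by simpa using hpi 0) with h | h
    · apply vert_step p h hpi ζ hζ
      apply ih (p + 1) (by linarith) (fun k hk => hpi (k - 1) (by push_cast; linarith))
      push_cast at hn; linarith
    · exact vert_base p h hp ζ hζ

end KSL

end

section
open MeasureTheory Set Topology

namespace KSL

lemma Sp_continuous (p : ℝ) (hpi : ∀ n : ℤ, p ≠ n) : Continuous (Sp p) := by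
  obtain ⟨n, hn⟩ := exists_nat_gt (-p)
  induction n generalizing p with
  | zero =>
    have hp : 0 < p := by simp at hn; linarith
    rw [continuous_iff_continuousAt]
    intro z
    obtain ⟨D, h, _⟩ := Sp_hasDerivAt p hp z
    exact h.continuousAt
  | succ n ih =>
    have hp0 : (p : ℂ) ≠ 0 := by simpa using nonint_ne p hpi 0
    have h1 := ih (p + 1) (fun k hk => hpi (k - 1) (by push_cast; linarith))
      (by push_cast at hn; linarith)
    have : Sp p = fun z => (Complex.exp z - z * Sp (p + 1) z) / p := by
      funext z
      rw [eq_div_iff hp0, mul_comm]; exact Sp_rec p hpi z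
    rw [this]
    fun_prop

lemma int_one_add_sq (s : ℝ) (hs : 1 < s) :
    Integrable (fun u : ℝ => (1 + u ^ 2) ^ (-s / 2)) := by
  have := integrable_rpow_neg_one_add_norm_sq (E := ℝ) (μ := volume) (r := s) (by simpa using hs)
  simpa using this

lemma norm_cpow_sq (s u : ℝ) : ‖(1 + I * (u : ℂ)) ^ ((-s : ℝ) : ℂ)‖ = (1 + u ^ 2) ^ (-s / 2) := by
  rw [norm_cpow_real _ (ne0 u), norm_one_add, Real.sqrt_eq_rpow, ← Real.rpow_mul (by positivity)]
  ring_nf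

lemma vert_axis (p : ℝ) (hp : p < 0) (hpi : ∀ n : ℤ, p ≠ n) (x : ℝ) (hx : 0 < x) :
    (x : ℂ) ^ (p : ℂ) * (Sp p x + I * Complex.exp x * Hq (p - 1) (-I * x)) =
      I ^ (p : ℂ) * I ^ (p : ℂ) * (Real.Gamma p : ℂ) := by
  have hlim : Tendsto (fun ε : ℝ => ((ε : ℂ) - I * x) ^ (p : ℂ) * (Sp p (I * ((ε : ℂ) - I * x)) +
      I * Complex.exp (I * ((ε : ℂ) - I * x)) * Hq (p - 1) ((ε : ℂ) - I * x))) (𝓝[>] 0)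
      (𝓝 ((-I * x) ^ (p : ℂ) * (Sp p x + I * Complex.exp x * Hq (p - 1) (-I * x)))) := by
    have hIx : I * (-(I * (x : ℂ))) = x := by linear_combination (-x : ℂ) * I_sq
    have h1 : Tendsto (fun ε : ℝ => ((ε : ℂ) - I * x) ^ (p : ℂ)) (𝓝[>] 0) (𝓝 ((-I * x) ^ (p : ℂ))) := by
      have hc : ContinuousAt (fun ε : ℝ => ((ε : ℂ) - I * x) ^ (p : ℂ)) 0 := by
        apply ContinuousAt.cpow (by fun_prop) continuousAt_const
        right; simpa using hx.ne'
      have := hc.tendsto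
      simp only [Complex.ofReal_zero, zero_sub] at this
      rw [neg_mul]
      exact this.mono_left nhdsWithin_le_nhds
    have h2 : Tendsto (fun ε : ℝ => Sp p (I * ((ε : ℂ) - I * x))) (𝓝[>] 0) (𝓝 (Sp p x)) := by
      have hc : Continuous (fun ε : ℝ => Sp p (I * ((ε : ℂ) - I * x))) :=
        (Sp_continuous p hpi).comp (by fun_prop)
      have := hc.tendsto 0
      simp only [Complex.ofReal_zero, zero_sub, hIx] at this
      exact this.mono_left nhdsWithin_le_nhds
    have h3 : Tendsto (fun ε : ℝ => I * Complex.exp (I * ((ε : ℂ) - I * x))) (𝓝[>] 0)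
        (𝓝 (I * Complex.exp x)) := by
      have hc : Continuous (fun ε : ℝ => I * Complex.exp (I * ((ε : ℂ) - I * x))) := by fun_prop
      have := hc.tendsto 0
      simp only [Complex.ofReal_zero, zero_sub, hIx] at this
      exact this.mono_left nhdsWithin_le_nhds
    have h4 : Tendsto (fun ε : ℝ => Hq (p - 1) ((ε : ℂ) - I * x)) (𝓝[>] 0)
        (𝓝 (Hq (p - 1) (-I * x))) := by
      refine tendsto_integral_filter_of_dominated_convergence
        (fun u : ℝ => (1 + u ^ 2) ^ (-(1 - p) / 2)) ?_ ?_
        (int_one_add_sq (1 - p) (by linarith)).integrableOn ?_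
      · exact Eventually.of_forall fun ε => (cont_Hq _ _).aestronglyMeasurable
      · filter_upwards [self_mem_nhdsWithin] with ε hε
        filter_upwards [ae_restrict_mem measurableSet_Ioi] with u hu
        have hu' : (0 : ℝ) < u := hu
        have hε' : (0 : ℝ) < ε := hε
        rw [norm_mul, norm_exp_neg, ← norm_cpow_sq]
        have : -(1 - p) = p - 1 := by ring
        rw [this]
        apply mul_le_of_le_one_left (norm_nonneg _)
        apply Real.exp_le_one_iff.2
        simp
        positivity
      · refine Eventually.of_forall fun u => ?_
        apply Tendsto.mul_const
        have hc : Continuous (fun ε : ℝ => Complex.exp (-((ε : ℂ) - I * x) * u)) := by fun_prop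
        have := hc.tendsto 0
        simp only [Complex.ofReal_zero, zero_sub] at this
        rw [neg_mul I]
        exact this.mono_left nhdsWithin_le_nhds
    exact h1.mul (h2.add (h3.mul h4))
  have hev : (fun ε : ℝ => ((ε : ℂ) - I * x) ^ (p : ℂ) * (Sp p (I * ((ε : ℂ) - I * x)) +
      I * Complex.exp (I * ((ε : ℂ) - I * x)) * Hq (p - 1) ((ε : ℂ) - I * x))) =ᶠ[𝓝[>] 0]
      fun _ => I ^ (p : ℂ) * (Real.Gamma p : ℂ) := by
    filter_upwards [self_mem_nhdsWithin] with ε hε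
    apply vert p (by linarith) hpi
    simpa using hε
  have key := tendsto_nhds_unique hlim (tendsto_const_nhds.congr' hev.symm)
  have hpow : (-I * (x : ℂ)) ^ (p : ℂ) = (-I) ^ (p : ℂ) * (x : ℂ) ^ (p : ℂ) := by
    rw [mul_comm, pos_mul_cpow x hx (-I) (neg_ne_zero.2 I_ne_zero)]; ring
  have hII : (-I) ^ (p : ℂ) * I ^ (p : ℂ) = 1 := by
    rw [Complex.cpow_def_of_ne_zero (neg_ne_zero.2 I_ne_zero), Complex.cpow_def_of_ne_zero I_ne_zero,
      Complex.log_neg_I, Complex.log_I, ← Complex.exp_add]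
    rw [show -(Real.pi / 2 : ℂ) * I * p + Real.pi / 2 * I * p = 0 by ring, Complex.exp_zero]
  rw [hpow] at key
  linear_combination I ^ (p : ℂ) * key - (x : ℂ) ^ (p : ℂ) *
    (Sp p x + I * Complex.exp x * Hq (p - 1) (-I * x)) * hII

lemma one_add_polar (u : ℝ) : (1 + I * (u : ℂ)) =
    (Real.sqrt (1 + u ^ 2) : ℂ) * Complex.exp (I * (Real.arctan u : ℂ)) := by
  rw [mul_comm I (Real.arctan u : ℂ), Complex.exp_mul_I, ← Complex.ofReal_cos, ← Complex.ofReal_sin, Real.cos_arctan,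
    Real.sin_arctan]
  have h : (Real.sqrt (1 + u ^ 2) : ℂ) ≠ 0 := by
    have : 0 < Real.sqrt (1 + u ^ 2) := by positivity
    exact_mod_cast this.ne'
  push_cast
  field_simp

lemma cpow_polar (s u : ℝ) : (1 + I * (u : ℂ)) ^ ((-s : ℝ) : ℂ) =
    ((1 + u ^ 2) ^ (-s / 2) : ℝ) * Complex.exp (((-s * Real.arctan u : ℝ) : ℂ) * I) := by
  have h0 : 0 < Real.sqrt (1 + u ^ 2) := by positivity
  conv_lhs => rw [one_add_polar]
  rw [pos_mul_cpow _ h0 _ (Complex.exp_ne_zero _), ← Complex.ofReal_cpow h0.le, Real.sqrt_eq_rpow,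
    ← Real.rpow_mul (by positivity), Complex.cpow_def_of_ne_zero (Complex.exp_ne_zero _),
    Complex.log_exp]
  · congr 1
    · ring_nf
    · push_cast; ring_nf
  · simp only [Complex.mul_im, Complex.I_re, Complex.I_im, Complex.ofReal_re, Complex.ofReal_im]
    linarith [Real.neg_pi_div_two_lt_arctan u, Real.pi_pos]
  · simp only [Complex.mul_im, Complex.I_re, Complex.I_im, Complex.ofReal_re, Complex.ofReal_im]
    linarith [Real.arctan_lt_pi_div_two u, Real.pi_pos]

/-- Sine integral. -/
noncomputable def Ai (y s : ℝ) : ℝ :=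
  ∫ u in Ioi (0 : ℝ), (1 + u ^ 2) ^ (-s / 2) * Real.sin (y * u - s * Real.arctan u)

/-- Cosine integral. -/
noncomputable def Bi (y s : ℝ) : ℝ :=
  ∫ u in Ioi (0 : ℝ), (1 + u ^ 2) ^ (-s / 2) * Real.cos (y * u - s * Real.arctan u)

lemma Ai_int (y s : ℝ) (hs : 1 < s) : IntegrableOn
    (fun u : ℝ => (1 + u ^ 2) ^ (-s / 2) * Real.sin (y * u - s * Real.arctan u)) (Ioi 0) := by
  refine Integrable.mono' (int_one_add_sq s hs).integrableOn ?_ ?_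
  · apply Continuous.aestronglyMeasurable
    apply Continuous.mul
    · apply Continuous.rpow_const (by fun_prop); intro u; left; positivity
    · have := Real.continuous_arctan; fun_prop
  · refine Eventually.of_forall fun u => ?_
    rw [norm_mul, Real.norm_of_nonneg (by positivity)]
    apply mul_le_of_le_one_right (by positivity)
    exact Real.abs_sin_le_one _

lemma Bi_int (y s : ℝ) (hs : 1 < s) : IntegrableOn
    (fun u : ℝ => (1 + u ^ 2) ^ (-s / 2) * Real.cos (y * u - s * Real.arctan u)) (Ioi 0) := by
  refine Integrable.mono' (int_one_add_sq s hs).integrableOn ?_ ?_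
  · apply Continuous.aestronglyMeasurable
    apply Continuous.mul
    · apply Continuous.rpow_const (by fun_prop); intro u; left; positivity
    · have := Real.continuous_arctan; fun_prop
  · refine Eventually.of_forall fun u => ?_
    rw [norm_mul, Real.norm_of_nonneg (by positivity)]
    apply mul_le_of_le_one_right (by positivity)
    exact Real.abs_cos_le_one _

lemma Hq_AB (y s : ℝ) (hs : 1 < s) : Hq (-s) (-I * y) = (Bi y s : ℂ) + I * (Ai y s : ℂ) := by
  have hB : Integrable (fun u : ℝ => (((1 + u ^ 2) ^ (-s / 2) *
    Real.cos (y * u - s * Real.arctan u) : ℝ) : ℂ)) (volume.restrict (Ioi 0)) := (Bi_int y s hs).ofReal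
  have hA : Integrable (fun u : ℝ => (((1 + u ^ 2) ^ (-s / 2) *
    Real.sin (y * u - s * Real.arctan u) : ℝ) : ℂ)) (volume.restrict (Ioi 0)) := (Ai_int y s hs).ofReal
  rw [Hq, Bi, Ai, ← integral_complex_ofReal, ← integral_complex_ofReal, ← integral_const_mul,
    ← integral_add hB (hA.const_mul I)]
  congr 1
  funext u
  rw [cpow_polar]
  have : Complex.exp (-(-I * y) * u) = Complex.exp ((y * u : ℝ) * I) := by
    congr 1; push_cast; ring
  rw [this, mul_left_comm, ← Complex.exp_add]
  have : ((y * u : ℝ) : ℂ) * I + ((-s * Real.arctan u : ℝ) : ℂ) * I =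
    ((y * u - s * Real.arctan u : ℝ) : ℂ) * I := by push_cast; ring
  rw [this, Complex.exp_mul_I, ← Complex.ofReal_cos, ← Complex.ofReal_sin]
  push_cast
  ring

/-- Real version of `Sp`. -/
noncomputable def Sr (p x : ℝ) : ℝ := ∑' n : ℕ, x ^ n / (((n : ℝ) + p) * n.factorial)

lemma Sp_ofReal (p x : ℝ) : Sp p x = (Sr p x : ℂ) := by
  rw [Sp, Sr, Complex.ofReal_tsum]
  congr 1; funext n; push_cast; rfl

lemma vert_real (s : ℝ) (hs : 1 < s) (hsi : ∀ n : ℤ, s ≠ n) (x : ℝ) (hx : 0 < x) :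
    x ^ (1 - s) * Sr (1 - s) x = Real.Gamma (1 - s) * Real.cos (Real.pi * (1 - s)) +
        Real.exp x * x ^ (1 - s) * Ai x s ∧
    Real.exp x * x ^ (1 - s) * Bi x s = Real.Gamma (1 - s) * Real.sin (Real.pi * (1 - s)) := by
  have h := vert_axis (1 - s) (by linarith) (fun n hn => hsi (1 - n) (by push_cast; linarith)) x hx
  rw [show 1 - s - 1 = -s by ring, Hq_AB x s hs, Sp_ofReal, ← Complex.ofReal_cpow hx.le] at h
  have hI : I ^ ((1 - s : ℝ) : ℂ) * I ^ ((1 - s : ℝ) : ℂ) =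
      Real.cos (Real.pi * (1 - s)) + Real.sin (Real.pi * (1 - s)) * I := by
    rw [Complex.cpow_def_of_ne_zero I_ne_zero, Complex.log_I, ← Complex.exp_add,
      Complex.ofReal_cos, Complex.ofReal_sin, ← Complex.exp_mul_I]
    congr 1; push_cast; ring
  rw [hI] at h
  have h' : ((x ^ (1 - s) * Sr (1 - s) x - Real.exp x * x ^ (1 - s) * Ai x s : ℝ) : ℂ) +
      ((Real.exp x * x ^ (1 - s) * Bi x s : ℝ) : ℂ) * I =
      ((Real.Gamma (1 - s) * Real.cos (Real.pi * (1 - s)) : ℝ) : ℂ) +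
      ((Real.Gamma (1 - s) * Real.sin (Real.pi * (1 - s)) : ℝ) : ℂ) * I := by
    push_cast at h ⊢
    linear_combination h - ((x ^ (1 - s) : ℝ) : ℂ) * Complex.exp x * Ai x s * I_sq
  have hre := congrArg Complex.re h'
  have him := congrArg Complex.im h'
  simp only [Complex.add_re, Complex.ofReal_re, Complex.re_ofReal_mul, Complex.I_re, mul_zero, add_zero,
    Complex.add_im, Complex.ofReal_im, Complex.im_ofReal_mul, Complex.I_im, mul_one, zero_add] at hre him
  exact ⟨by linarith, him⟩

/-- `π/Γ(s) = e^x x^{1-s} B(x,s)`. -/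
lemma Bi_gamma (s : ℝ) (hs : 1 < s) (hsi : ∀ n : ℤ, s ≠ n) (x : ℝ) (hx : 0 < x) :
    Real.Gamma s * (Real.exp x * x ^ (1 - s) * Bi x s) = Real.pi := by
  rw [(vert_real s hs hsi x hx).2]
  have h := Real.Gamma_mul_Gamma_one_sub s
  have hsin : Real.sin (Real.pi * s) ≠ 0 := by
    rw [Ne, Real.sin_eq_zero_iff]
    rintro ⟨n, hn⟩
    apply hsi n
    have := Real.pi_ne_zero
    apply mul_left_cancel₀ this; linarith
  have : Real.sin (Real.pi * (1 - s)) = Real.sin (Real.pi * s) := by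
    rw [mul_sub, mul_one, Real.sin_pi_sub]
  rw [this, ← mul_assoc, h]
  field_simp

end KSL

end

section
open MeasureTheory Set Topology

namespace KSL

lemma mono_zero (f f' : ℝ → ℝ) (hd : ∀ u, HasDerivAt f (f' u) u) (h0 : f 0 = 0)
    (hn : ∀ u, 0 < u → 0 ≤ f' u) (u : ℝ) (hu : 0 ≤ u) : 0 ≤ f u := by
  have hm : MonotoneOn f (Ici 0) := by
    apply monotoneOn_of_hasDerivWithinAt_nonneg (convex_Ici 0)
      (fun x _ => (hd x).continuousAt.continuousWithinAt)
      (fun x _ => (hd x).hasDerivWithinAt)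
    intro x hx
    rw [interior_Ici] at hx
    exact hn x hx
  have := hm self_mem_Ici hu hu
  rwa [h0] at this

lemma arctan_bd1 (u : ℝ) (hu : 0 ≤ u) : 0 ≤ u - Real.arctan u := by
  apply mono_zero (fun u => u - Real.arctan u) (fun u => 1 - 1 / (1 + u ^ 2))
    (fun u => (hasDerivAt_id' u).sub (Real.hasDerivAt_arctan u)) (by simp) _ u hu
  intro u hu
  rw [sub_nonneg, div_le_one (by positivity)]; nlinarith

lemma arctan_bd2 (u : ℝ) (hu : 0 ≤ u) : 0 ≤ u ^ 3 / 3 - (u - Real.arctan u) := by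
  apply mono_zero (fun u => u ^ 3 / 3 - (u - Real.arctan u)) (fun u => u ^ 2 - (1 - 1 / (1 + u ^ 2)))
    (fun u => ?_) (by simp) _ u hu
  · intro u hu
    have : u ^ 2 - (1 - 1 / (1 + u ^ 2)) = u ^ 4 / (1 + u ^ 2) := by field_simp; ring
    rw [this]; positivity
  · have := ((hasDerivAt_pow 3 u).div_const 3).sub ((hasDerivAt_id' u).sub (Real.hasDerivAt_arctan u))
    exact this.congr_deriv (by norm_num)

lemma arctan_bd3 (u : ℝ) (hu : 0 ≤ u) : 0 ≤ u ^ 5 / 5 - (u ^ 3 / 3 - (u - Real.arctan u)) := by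
  apply mono_zero (fun u => u ^ 5 / 5 - (u ^ 3 / 3 - (u - Real.arctan u)))
    (fun u => u ^ 4 - (u ^ 2 - (1 - 1 / (1 + u ^ 2))))
    (fun u => ?_) (by simp) _ u hu
  · intro u hu
    have : u ^ 4 - (u ^ 2 - (1 - 1 / (1 + u ^ 2))) = u ^ 6 / (1 + u ^ 2) := by field_simp; ring
    rw [this]; positivity
  · have := ((hasDerivAt_pow 5 u).div_const 5).sub
      (((hasDerivAt_pow 3 u).div_const 3).sub ((hasDerivAt_id' u).sub (Real.hasDerivAt_arctan u)))
    exact this.congr_deriv (by norm_num)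

/-- Moment statement. -/
def Mom (k : ℕ) (s v : ℝ) : Prop :=
  IntegrableOn (fun u : ℝ => u ^ k * (1 + u ^ 2) ^ (-s / 2)) (Ioi 0) ∧
    ∫ u in Ioi (0 : ℝ), u ^ k * (1 + u ^ 2) ^ (-s / 2) = v

lemma mom1 (s : ℝ) (hs : 2 < s) : Mom 1 s (1 / (s - 2)) := by
  have hd : ∀ u ∈ Ici (0 : ℝ), HasDerivAt (fun u : ℝ => -(1 + u ^ 2) ^ (1 - s / 2) / (s - 2))
      (u ^ 1 * (1 + u ^ 2) ^ (-s / 2)) u := by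
    intro u _
    have h1 : HasDerivAt (fun u : ℝ => 1 + u ^ 2) (2 * u) u := by
      have := (hasDerivAt_pow 2 u).const_add 1
      exact this.congr_deriv (by norm_num)
    have h2 := (h1.rpow_const (p := 1 - s / 2) (Or.inl (by positivity))).neg.div_const (s - 2)
    refine h2.congr_deriv ?_
    rw [show 1 - s / 2 - 1 = -s / 2 by ring]
    have : s - 2 ≠ 0 := by linarith
    field_simp
    ring
  have hn : ∀ u ∈ Ioi (0 : ℝ), 0 ≤ u ^ 1 * (1 + u ^ 2) ^ (-s / 2) := by
    intro u hu
    have : (0 : ℝ) < u := hu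
    positivity
  have hl : Tendsto (fun u : ℝ => -(1 + u ^ 2) ^ (1 - s / 2) / (s - 2)) atTop (𝓝 0) := by
    have h1 : Tendsto (fun u : ℝ => 1 + u ^ 2) atTop atTop :=
      tendsto_atTop_add_const_left _ _ (tendsto_pow_atTop two_ne_zero)
    have h2 := (tendsto_rpow_neg_atTop (y := s / 2 - 1) (by linarith)).comp h1
    have h3 := h2.neg.div_const (s - 2)
    simp only [neg_zero, zero_div] at h3
    refine h3.congr (fun u => ?_)
    simp only [Function.comp_apply]
    ring_nf
  refine ⟨integrableOn_Ioi_deriv_of_nonneg' hd hn hl, ?_⟩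
  rw [integral_Ioi_of_hasDerivAt_of_nonneg' hd hn hl]
  simp [neg_div]

lemma mom_step (k : ℕ) (s v w : ℝ) (h1 : Mom k (s - 2) v) (h2 : Mom k s w) : Mom (k + 2) s (v - w) := by
  have hf : (fun u : ℝ => u ^ k * (1 + u ^ 2) ^ (-(s - 2) / 2) - u ^ k * (1 + u ^ 2) ^ (-s / 2)) =
      (fun u : ℝ => u ^ (k + 2) * (1 + u ^ 2) ^ (-s / 2)) := by
    funext u
    have : (1 + u ^ 2) ^ (-(s - 2) / 2) = (1 + u ^ 2) ^ (-s / 2) * (1 + u ^ 2) := by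
      rw [← Real.rpow_add_one (by positivity)]; ring_nf
    rw [this]; ring
  refine ⟨?_, ?_⟩
  · have := h1.1.sub h2.1
    rw [← hf]; exact this
  · rw [← h1.2, ← h2.2, ← integral_sub h1.1 h2.1]
    exact (congrArg (fun f => ∫ u in Ioi (0 : ℝ), f u) hf).symm

lemma mom3 (s : ℝ) (hs : 4 < s) : Mom 3 s (2 / ((s - 2) * (s - 4))) := by
  have := mom_step 1 s _ _ (mom1 (s - 2) (by linarith)) (mom1 s (by linarith))
  convert this using 1
  have h1 : s - 2 ≠ 0 := by linarith
  have h2 : s - 4 ≠ 0 := by linarith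
  rw [show s - 2 - 2 = s - 4 by ring]
  field_simp
  ring

lemma mom5 (s : ℝ) (hs : 6 < s) : Mom 5 s (8 / ((s - 2) * (s - 4) * (s - 6))) := by
  have := mom_step 3 s _ _ (mom3 (s - 2) (by linarith)) (mom3 s (by linarith))
  convert this using 1
  have h1 : s - 2 ≠ 0 := by linarith
  have h2 : s - 4 ≠ 0 := by linarith
  have h3 : s - 6 ≠ 0 := by linarith
  rw [show s - 2 - 2 = s - 4 by ring, show s - 2 - 4 = s - 6 by ring]
  field_simp
  ring

lemma mom7 (s : ℝ) (hs : 8 < s) : Mom 7 s (48 / ((s - 2) * (s - 4) * (s - 6) * (s - 8))) := by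
  have := mom_step 5 s _ _ (mom5 (s - 2) (by linarith)) (mom5 s (by linarith))
  convert this using 1
  have h1 : s - 2 ≠ 0 := by linarith
  have h2 : s - 4 ≠ 0 := by linarith
  have h3 : s - 6 ≠ 0 := by linarith
  have h4 : s - 8 ≠ 0 := by linarith
  rw [show s - 2 - 2 = s - 4 by ring, show s - 2 - 4 = s - 6 by ring, show s - 2 - 6 = s - 8 by ring]
  field_simp
  ring

lemma mom9 (s : ℝ) (hs : 10 < s) :
    Mom 9 s (384 / ((s - 2) * (s - 4) * (s - 6) * (s - 8) * (s - 10))) := by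
  have := mom_step 7 s _ _ (mom7 (s - 2) (by linarith)) (mom7 s (by linarith))
  convert this using 1
  have h1 : s - 2 ≠ 0 := by linarith
  have h2 : s - 4 ≠ 0 := by linarith
  have h3 : s - 6 ≠ 0 := by linarith
  have h4 : s - 8 ≠ 0 := by linarith
  have h5 : s - 10 ≠ 0 := by linarith
  rw [show s - 2 - 2 = s - 4 by ring, show s - 2 - 4 = s - 6 by ring, show s - 2 - 6 = s - 8 by ring,
    show s - 2 - 8 = s - 10 by ring]
  field_simp
  ring

/-- Upper bounds for the moments when `s ≥ 20`. -/
lemma mom_bounds (s : ℝ) (hs : 20 ≤ s) :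
    1 / (s - 2) ≤ 2 / s ∧ 2 / ((s - 2) * (s - 4)) ≤ 8 / s ^ 2 ∧
    8 / ((s - 2) * (s - 4) * (s - 6)) ≤ 64 / s ^ 3 ∧
    48 / ((s - 2) * (s - 4) * (s - 6) * (s - 8)) ≤ 768 / s ^ 4 ∧
    384 / ((s - 2) * (s - 4) * (s - 6) * (s - 8) * (s - 10)) ≤ 12288 / s ^ 5 := by
  have h0 : 0 < s / 2 := by linarith
  have h1 : s / 2 ≤ s - 2 := by linarith
  have h2 : s / 2 ≤ s - 4 := by linarith
  have h3 : s / 2 ≤ s - 6 := by linarith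
  have h4 : s / 2 ≤ s - 8 := by linarith
  have h5 : s / 2 ≤ s - 10 := by linarith
  generalize s - 2 = p2 at *
  generalize s - 4 = p4 at *
  generalize s - 6 = p6 at *
  generalize s - 8 = p8 at *
  generalize s - 10 = p10 at *
  have g1 : 0 < p2 := by linarith
  have g2 : 0 < p4 := by linarith
  have g3 : 0 < p6 := by linarith
  have g4 : 0 < p8 := by linarith
  have g5 : 0 < p10 := by linarith
  refine ⟨?_, ?_, ?_, ?_, ?_⟩
  · calc _ ≤ 1 / (s / 2) := by gcongr
      _ = _ := by field_simp
  · calc _ ≤ 2 / ((s / 2) * (s / 2)) := by gcongr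
      _ = _ := by field_simp; norm_num
  · calc _ ≤ 8 / ((s / 2) * (s / 2) * (s / 2)) := by gcongr
      _ = _ := by field_simp; norm_num
  · calc _ ≤ 48 / ((s / 2) * (s / 2) * (s / 2) * (s / 2)) := by gcongr
      _ = _ := by field_simp; norm_num
  · calc _ ≤ 384 / ((s / 2) * (s / 2) * (s / 2) * (s / 2) * (s / 2)) := by gcongr
      _ = _ := by field_simp; norm_num

lemma abs_sin_sub (t : ℝ) : |Real.sin t - t| ≤ |t| ^ 3 := by
  have key : ∀ t : ℝ, 0 ≤ t → |Real.sin t - t| ≤ t ^ 3 := by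
    intro t ht
    have h1 := Real.sin_le ht
    have h2 := Real.sin_ge_sub_cube ht
    have : 0 ≤ t ^ 3 := by positivity
    rw [abs_le]; constructor <;> linarith
  rcases le_total 0 t with h | h
  · rw [abs_of_nonneg h]; exact key t h
  · have := key (-t) (by linarith)
    rw [Real.sin_neg, show -Real.sin t - -t = -(Real.sin t - t) by ring, abs_neg] at this
    rwa [abs_of_nonpos h]

lemma theta_bd (y s u : ℝ) (hs : 0 ≤ s) (hu : 0 ≤ u) :
    |y * u - s * Real.arctan u| ≤ |y - s| * u + s * u ^ 3 / 3 := by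
  have h1 := arctan_bd1 u hu
  have h2 := arctan_bd2 u hu
  have : y * u - s * Real.arctan u = (y - s) * u + s * (u - Real.arctan u) := by ring
  rw [this]
  refine (abs_add_le _ _).trans ?_
  rw [abs_mul, abs_of_nonneg hu, abs_of_nonneg (mul_nonneg hs h1)]
  nlinarith

lemma cube_add (p q : ℝ) (hp : 0 ≤ p) (hq : 0 ≤ q) : (p + q) ^ 3 ≤ 4 * (p ^ 3 + q ^ 3) := by
  nlinarith [mul_nonneg (add_nonneg hp hq) (sq_nonneg (p - q))]

lemma Ai_pt (y s u : ℝ) (hs : 0 ≤ s) (hu : 0 ≤ u) :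
    |Real.sin (y * u - s * Real.arctan u) - ((y - s) * u + s * u ^ 3 / 3)| ≤
      4 * |y - s| ^ 3 * u ^ 3 + s ^ 3 * u ^ 9 + s * u ^ 5 := by
  set t := y * u - s * Real.arctan u with ht
  have h1 := abs_sin_sub t
  have h2 := theta_bd y s u hs hu
  have h3 := arctan_bd2 u hu
  have h4 := arctan_bd3 u hu
  have e : t - ((y - s) * u + s * u ^ 3 / 3) = - (s * (u ^ 3 / 3 - (u - Real.arctan u))) := by
    rw [ht]; ring
  have h5 : |t - ((y - s) * u + s * u ^ 3 / 3)| ≤ s * u ^ 5 := by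
    rw [e, abs_neg, abs_of_nonneg (mul_nonneg hs h3)]
    have : 0 ≤ u ^ 5 := by positivity
    apply mul_le_mul_of_nonneg_left _ hs
    linarith
  have h6 : |t| ^ 3 ≤ 4 * |y - s| ^ 3 * u ^ 3 + s ^ 3 * u ^ 9 := by
    calc |t| ^ 3 ≤ (|y - s| * u + s * u ^ 3 / 3) ^ 3 := by gcongr
      _ ≤ 4 * ((|y - s| * u) ^ 3 + (s * u ^ 3 / 3) ^ 3) := cube_add _ _ (by positivity) (by positivity)
      _ = 4 * |y - s| ^ 3 * u ^ 3 + (4 / 27) * (s ^ 3 * u ^ 9) := by ring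
      _ ≤ _ := by
        have : 0 ≤ s ^ 3 * u ^ 9 := by positivity
        linarith
  calc _ = |(Real.sin t - t) + (t - ((y - s) * u + s * u ^ 3 / 3))| := by ring_nf
    _ ≤ _ := abs_add_le _ _
    _ ≤ _ := by linarith

lemma Ai_est (y s : ℝ) (hs : 20 ≤ s) :
    |Ai y s - ((y - s) / (s - 2) + 2 * s / (3 * ((s - 2) * (s - 4))))| ≤
      12500 * (1 + |y - s| ^ 3) / s ^ 2 := by
  have m1 := mom1 s (by linarith)
  have m3 := mom3 s (by linarith)
  have m5 := mom5 s (by linarith)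
  have m9 := mom9 s (by linarith)
  have hA := Ai_int y s (by linarith)
  have hM : IntegrableOn (fun u : ℝ => (y - s) * (u ^ 1 * (1 + u ^ 2) ^ (-s / 2)) +
    s / 3 * (u ^ 3 * (1 + u ^ 2) ^ (-s / 2))) (Ioi 0) := (m1.1.const_mul _).add (m3.1.const_mul _)
  have hMv : ∫ u in Ioi (0 : ℝ), ((y - s) * (u ^ 1 * (1 + u ^ 2) ^ (-s / 2)) +
    s / 3 * (u ^ 3 * (1 + u ^ 2) ^ (-s / 2))) = (y - s) / (s - 2) + 2 * s / (3 * ((s - 2) * (s - 4))) := by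
    rw [integral_add (m1.1.const_mul _) (m3.1.const_mul _), integral_const_mul, integral_const_mul,
      m1.2, m3.2]
    have h1 : s - 2 ≠ 0 := by linarith
    have h2 : s - 4 ≠ 0 := by linarith
    field_simp
  have hE : IntegrableOn (fun u : ℝ => 4 * |y - s| ^ 3 * (u ^ 3 * (1 + u ^ 2) ^ (-s / 2)) +
    s ^ 3 * (u ^ 9 * (1 + u ^ 2) ^ (-s / 2)) + s * (u ^ 5 * (1 + u ^ 2) ^ (-s / 2))) (Ioi 0) :=
    ((m3.1.const_mul _).add (m9.1.const_mul _)).add (m5.1.const_mul _)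
  rw [← hMv, Ai, ← integral_sub hA hM]
  have hb : |∫ u in Ioi (0 : ℝ), ((1 + u ^ 2) ^ (-s / 2) * Real.sin (y * u - s * Real.arctan u) -
      ((y - s) * (u ^ 1 * (1 + u ^ 2) ^ (-s / 2)) + s / 3 * (u ^ 3 * (1 + u ^ 2) ^ (-s / 2))))| ≤
      ∫ u in Ioi (0 : ℝ), (4 * |y - s| ^ 3 * (u ^ 3 * (1 + u ^ 2) ^ (-s / 2)) +
    s ^ 3 * (u ^ 9 * (1 + u ^ 2) ^ (-s / 2)) + s * (u ^ 5 * (1 + u ^ 2) ^ (-s / 2))) := by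
    rw [← Real.norm_eq_abs]
    apply norm_integral_le_of_norm_le hE
    filter_upwards [ae_restrict_mem measurableSet_Ioi] with u hu
    have hp := Ai_pt y s u (by linarith) (le_of_lt hu)
    have hw : 0 ≤ (1 + u ^ 2) ^ (-s / 2) := by positivity
    have e : (1 + u ^ 2) ^ (-s / 2) * Real.sin (y * u - s * Real.arctan u) -
      ((y - s) * (u ^ 1 * (1 + u ^ 2) ^ (-s / 2)) + s / 3 * (u ^ 3 * (1 + u ^ 2) ^ (-s / 2))) =
      (1 + u ^ 2) ^ (-s / 2) * (Real.sin (y * u - s * Real.arctan u) - ((y - s) * u + s * u ^ 3 / 3)) := by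
      ring
    rw [e, Real.norm_eq_abs, abs_mul, abs_of_nonneg hw]
    refine (mul_le_mul_of_nonneg_left hp hw).trans (le_of_eq ?_)
    ring
  refine hb.trans ?_
  have hadd : ∫ u in Ioi (0 : ℝ), (4 * |y - s| ^ 3 * (u ^ 3 * (1 + u ^ 2) ^ (-s / 2)) +
    s ^ 3 * (u ^ 9 * (1 + u ^ 2) ^ (-s / 2)) + s * (u ^ 5 * (1 + u ^ 2) ^ (-s / 2))) =
    4 * |y - s| ^ 3 * (2 / ((s - 2) * (s - 4))) +
    s ^ 3 * (384 / ((s - 2) * (s - 4) * (s - 6) * (s - 8) * (s - 10))) +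
    s * (8 / ((s - 2) * (s - 4) * (s - 6))) := by
    rw [← m3.2, ← m5.2, ← m9.2, ← integral_const_mul, ← integral_const_mul, ← integral_const_mul]
    rw [← integral_add (m3.1.const_mul _) (m9.1.const_mul _)]
    exact integral_add ((m3.1.const_mul _).add (m9.1.const_mul _)) (m5.1.const_mul _)
  rw [hadd]
  obtain ⟨-, b3, b5, -, b9⟩ := mom_bounds s hs
  have hs0 : 0 < s := by linarith
  calc _ ≤ 4 * |y - s| ^ 3 * (8 / s ^ 2) + s ^ 3 * (12288 / s ^ 5) + s * (64 / s ^ 3) := by gcongr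
    _ = (32 * |y - s| ^ 3 + 12352) / s ^ 2 := by field_simp; ring
    _ ≤ _ := by
      have : 0 ≤ |y - s| ^ 3 := by positivity
      gcongr
      linarith

end KSL

end

section
open MeasureTheory Set Topology

namespace KSL

lemma yAi_est (y s : ℝ) (hs : 20 ≤ s) (hy : 0 < y) :
    |y * Ai y s - (y - s + 2 / 3)| ≤ 13000 * (1 + |y - s|) ^ 4 / s := by
  have h := Ai_est y s hs
  set δ := y - s with hδ
  have hy' : y = s + δ := by rw [hδ]; ring
  set D := |δ| with hD
  have hD0 : 0 ≤ D := abs_nonneg _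
  have hs0 : 0 < s := by linarith
  have h1 : s - 2 ≠ 0 := by linarith
  have h2 : s - 4 ≠ 0 := by linarith
  set M := δ / (s - 2) + 2 * s / (3 * ((s - 2) * (s - 4))) with hM
  have e1 : y * M - (δ + 2 / 3) = δ * (δ + 2) * (1 / (s - 2)) +
      (1 / 3) * (δ * s + 6 * s - 8) * (2 / ((s - 2) * (s - 4))) := by
    rw [hM, hy']; field_simp; ring
  obtain ⟨b1, b3, -, -, -⟩ := mom_bounds s hs
  have p1 : 0 ≤ 1 / (s - 2) := by apply div_nonneg <;> linarith
  have p2 : 0 ≤ 2 / ((s - 2) * (s - 4)) := by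
    apply div_nonneg (by norm_num); apply mul_nonneg <;> linarith
  have t1 : |δ * (δ + 2) * (1 / (s - 2))| ≤ D * (D + 2) * (2 / s) := by
    rw [abs_mul, abs_mul, abs_of_nonneg p1]
    have : |δ + 2| ≤ D + 2 := (abs_add_le _ _).trans (by simp [hD])
    gcongr
  have t2 : |(1 / 3) * (δ * s + 6 * s - 8) * (2 / ((s - 2) * (s - 4)))| ≤
      (1 / 3) * (D * s + 6 * s) * (8 / s ^ 2) := by
    rw [abs_mul, abs_mul, abs_of_nonneg p2, abs_of_nonneg (by norm_num : (0 : ℝ) ≤ 1 / 3)]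
    have : |δ * s + 6 * s - 8| ≤ D * s + 6 * s := by
      have h3 : |δ * s| = D * s := by rw [abs_mul, abs_of_pos hs0]
      have h4 := abs_le.1 h3.le
      rw [abs_le]; constructor <;> linarith [h4.1, h4.2]
    gcongr
  have t3 : |y * (Ai y s - M)| ≤ (s + D) * (12500 * (1 + D ^ 3) / s ^ 2) := by
    rw [abs_mul, abs_of_pos hy]
    have : y ≤ s + D := by rw [hy']; linarith [le_abs_self δ]
    gcongr
  have hE : (1 : ℝ) ≤ 1 + D := by linarith
  have q1 : D * (D + 2) * (2 / s) ≤ 2 * (1 + D) ^ 4 / s := by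
    have : D * (D + 2) ≤ (1 + D) ^ 4 := by
      nlinarith [pow_le_pow_right₀ hE (show 2 ≤ 4 by norm_num)]
    calc _ ≤ (1 + D) ^ 4 * (2 / s) := by gcongr
      _ = _ := by ring
  have q2 : (1 / 3) * (D * s + 6 * s) * (8 / s ^ 2) ≤ 16 * (1 + D) ^ 4 / s := by
    have e : (1 / 3) * (D * s + 6 * s) * (8 / s ^ 2) = (8 / 3) * (D + 6) / s := by field_simp
    rw [e]
    have : 1 + D ≤ (1 + D) ^ 4 := le_self_pow₀ hE (by norm_num)
    apply div_le_div_of_nonneg_right _ hs0.le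
    linarith
  have q3 : (s + D) * (12500 * (1 + D ^ 3) / s ^ 2) ≤ 12500 * (1 + D) ^ 4 / s := by
    have f1 : s + D ≤ s * (1 + D) := by nlinarith
    have f2 : 1 + D ^ 3 ≤ (1 + D) ^ 3 := by nlinarith [mul_nonneg hD0 hD0]
    calc _ ≤ s * (1 + D) * (12500 * (1 + D) ^ 3 / s ^ 2) := by gcongr
      _ = _ := by field_simp
  have e2 : y * Ai y s - (δ + 2 / 3) = y * (Ai y s - M) + (y * M - (δ + 2 / 3)) := by ring
  rw [e2, e1]
  refine (abs_add_le _ _).trans ?_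
  have := abs_add_le (δ * (δ + 2) * (1 / (s - 2)))
      ((1 / 3) * (δ * s + 6 * s - 8) * (2 / ((s - 2) * (s - 4))))
  have e3 : 13000 * (1 + D) ^ 4 / s = 2 * (1 + D) ^ 4 / s + 16 * (1 + D) ^ 4 / s
    + 12500 * (1 + D) ^ 4 / s + 482 * ((1 + D) ^ 4 / s) := by ring
  have e4 : 0 ≤ (1 + D) ^ 4 / s := by positivity
  linarith

lemma Bi_pt (y s u : ℝ) (hs : 0 < s) (hu : 0 ≤ u) :
    |(1 + u ^ 2) ^ (-s / 2) * Real.cos (y * u - s * Real.arctan u) - Real.exp (-(s / 2) * u ^ 2)| ≤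
      (1 + u ^ 2) ^ (-s / 2) * (|y - s| ^ 2 * (u ^ 1 + u ^ 3) + s ^ 2 * (u ^ 5 + u ^ 7) +
        s * (u ^ 3 + u ^ 5)) := by
  set t := y * u - s * Real.arctan u with ht
  set w := (1 + u ^ 2) ^ (-s / 2) with hw
  have hw0 : 0 < w := by rw [hw]; positivity
  have h2 := theta_bd y s u hs.le hu
  have c1 : |Real.cos t - 1| ≤ |y - s| ^ 2 * u ^ 2 + s ^ 2 * u ^ 6 := by
    have h1 := Real.one_sub_sq_div_two_le_cos (x := t)
    have h3 := Real.cos_le_one t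
    have h4 : t ^ 2 ≤ (|y - s| * u + s * u ^ 3 / 3) ^ 2 := by
      rw [← sq_abs t]; gcongr
    rw [abs_le]
    have h5 : (|y - s| * u + s * u ^ 3 / 3) ^ 2 ≤ 2 * (|y - s| ^ 2 * u ^ 2 + s ^ 2 * u ^ 6) := by
      nlinarith [sq_nonneg (|y - s| * u - s * u ^ 3 / 3), sq_nonneg (s * u ^ 3)]
    have h6 : 0 ≤ |y - s| ^ 2 * u ^ 2 + s ^ 2 * u ^ 6 := by positivity
    constructor <;> linarith
  have c2 : |w - Real.exp (-(s / 2) * u ^ 2)| ≤ w * (s * u ^ 4) := by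
    set L := Real.log (1 + u ^ 2) with hL
    have hpos : 0 < 1 + u ^ 2 := by positivity
    have l1 : L ≤ u ^ 2 := by have := Real.log_le_sub_one_of_pos hpos; linarith
    have l2 : u ^ 2 - u ^ 4 ≤ L := by
      have := Real.one_sub_inv_le_log_of_pos hpos
      have h3 : u ^ 2 - u ^ 4 ≤ 1 - (1 + u ^ 2)⁻¹ := by
        rw [← sub_nonneg]
        have : 1 - (1 + u ^ 2)⁻¹ - (u ^ 2 - u ^ 4) = u ^ 6 / (1 + u ^ 2) := by field_simp; ring
        rw [this]; positivity
      linarith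
    have hwe : w = Real.exp (L * (-s / 2)) := by rw [hw, Real.rpow_def_of_pos hpos]
    have hee : Real.exp (-(s / 2) * u ^ 2) = w * Real.exp (-(s / 2) * (u ^ 2 - L)) := by
      rw [hwe, ← Real.exp_add]; ring_nf
    have h1 := Real.add_one_le_exp (-(s / 2) * (u ^ 2 - L))
    have h3 : Real.exp (-(s / 2) * (u ^ 2 - L)) ≤ 1 := by
      apply Real.exp_le_one_iff.2; nlinarith
    rw [hee, show w - w * Real.exp (-(s / 2) * (u ^ 2 - L)) = w * (1 - Real.exp (-(s / 2) * (u ^ 2 - L))) by ring,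
      abs_mul, abs_of_pos hw0]
    apply mul_le_mul_of_nonneg_left _ hw0.le
    rw [abs_of_nonneg (by linarith)]
    have h4 : 0 ≤ s * u ^ 4 := by positivity
    nlinarith
  have e : w * Real.cos t - Real.exp (-(s / 2) * u ^ 2) =
    w * (Real.cos t - 1) + (w - Real.exp (-(s / 2) * u ^ 2)) := by ring
  have v2 : u ^ 2 ≤ u ^ 1 + u ^ 3 := by nlinarith [mul_nonneg hu (sq_nonneg (u - 1)), sq_nonneg u]
  have v4 : u ^ 4 ≤ u ^ 3 + u ^ 5 := by
    have : u ^ 3 + u ^ 5 - u ^ 4 = u ^ 2 * (u ^ 1 + u ^ 3 - u ^ 2) := by ring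
    nlinarith [mul_nonneg (sq_nonneg u) (sub_nonneg.2 v2)]
  have v6 : u ^ 6 ≤ u ^ 5 + u ^ 7 := by
    have : u ^ 5 + u ^ 7 - u ^ 6 = u ^ 4 * (u ^ 1 + u ^ 3 - u ^ 2) := by ring
    nlinarith [mul_nonneg (pow_nonneg hu 4) (sub_nonneg.2 v2)]
  rw [e]
  refine (abs_add_le _ _).trans ?_
  rw [abs_mul, abs_of_pos hw0]
  calc _ ≤ w * (|y - s| ^ 2 * u ^ 2 + s ^ 2 * u ^ 6) + w * (s * u ^ 4) := by gcongr
    _ = w * (|y - s| ^ 2 * u ^ 2 + s ^ 2 * u ^ 6 + s * u ^ 4) := by ring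
    _ ≤ _ := by gcongr

lemma Bi_est (y s : ℝ) (hs : 20 ≤ s) :
    |Bi y s - Real.sqrt (Real.pi / (s / 2)) / 2| ≤ 1000 * (1 + |y - s| ^ 2) / s := by
  have hs0 : 0 < s := by linarith
  have m1 := mom1 s (by linarith)
  have m3 := mom3 s (by linarith)
  have m5 := mom5 s (by linarith)
  have m7 := mom7 s (by linarith)
  have hB := Bi_int y s (by linarith)
  have hG : IntegrableOn (fun u : ℝ => Real.exp (-(s / 2) * u ^ 2)) (Ioi 0) :=
    (integrable_exp_neg_mul_sq (by linarith)).integrableOn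
  set D := |y - s| ^ 2 with hD
  have hD0 : 0 ≤ D := by positivity
  have i1 := m1.1.const_mul D
  have i3 := m3.1.const_mul (D + s)
  have i5 := m5.1.const_mul (s ^ 2 + s)
  have i7 := m7.1.const_mul (s ^ 2)
  rw [← integral_gaussian_Ioi, Bi, ← integral_sub hB hG]
  have hb : |∫ u in Ioi (0 : ℝ), ((1 + u ^ 2) ^ (-s / 2) * Real.cos (y * u - s * Real.arctan u) -
      Real.exp (-(s / 2) * u ^ 2))| ≤ ∫ u in Ioi (0 : ℝ), (D * (u ^ 1 * (1 + u ^ 2) ^ (-s / 2)) +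
      (D + s) * (u ^ 3 * (1 + u ^ 2) ^ (-s / 2)) + ((s ^ 2 + s) * (u ^ 5 * (1 + u ^ 2) ^ (-s / 2)) +
      s ^ 2 * (u ^ 7 * (1 + u ^ 2) ^ (-s / 2)))) := by
    rw [← Real.norm_eq_abs]
    apply norm_integral_le_of_norm_le ((i1.add i3).add (i5.add i7))
    filter_upwards [ae_restrict_mem measurableSet_Ioi] with u hu
    refine (Bi_pt y s u hs0 (le_of_lt hu)).trans (le_of_eq ?_)
    simp only [Pi.add_apply]
    ring
  refine hb.trans ?_
  have hadd : ∫ u in Ioi (0 : ℝ), (D * (u ^ 1 * (1 + u ^ 2) ^ (-s / 2)) +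
      (D + s) * (u ^ 3 * (1 + u ^ 2) ^ (-s / 2)) + ((s ^ 2 + s) * (u ^ 5 * (1 + u ^ 2) ^ (-s / 2)) +
      s ^ 2 * (u ^ 7 * (1 + u ^ 2) ^ (-s / 2)))) = D * (1 / (s - 2)) +
      (D + s) * (2 / ((s - 2) * (s - 4))) + ((s ^ 2 + s) * (8 / ((s - 2) * (s - 4) * (s - 6))) +
      s ^ 2 * (48 / ((s - 2) * (s - 4) * (s - 6) * (s - 8)))) := by
    rw [← m1.2, ← m3.2, ← m5.2, ← m7.2, ← integral_const_mul, ← integral_const_mul, ← integral_const_mul,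
      ← integral_const_mul, ← integral_add i1 i3, ← integral_add i5 i7]
    exact integral_add (i1.add i3) (i5.add i7)
  rw [hadd]
  obtain ⟨b1, b3, b5, b7, -⟩ := mom_bounds s hs
  calc _ ≤ D * (2 / s) + (D + s) * (8 / s ^ 2) + ((s ^ 2 + s) * (64 / s ^ 3) + s ^ 2 * (768 / s ^ 4)) := by
        gcongr
    _ = (2 * D + 8 * (D / s) + 8 + 64 + 64 / s + 768 / s) / s := by field_simp; ring
    _ ≤ _ := by
      have a1 : D / s ≤ D := div_le_self hD0 (by linarith)
      have a2 : 64 / s ≤ 64 / 20 := by gcongr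
      have a3 : 768 / s ≤ 768 / 20 := by gcongr
      gcongr
      linarith

/-- Size of the prefactor. -/
lemma gam_est (K : ℝ) : ∃ C X : ℝ, 0 < C ∧ 1 ≤ X ∧ ∀ x s : ℝ, X ≤ x → |x - s| ≤ K → (∀ n : ℤ, s ≠ n) →
    |Real.Gamma s * Real.exp x * x ^ (-s) - 2 * Real.pi / Real.sqrt (2 * Real.pi * x)| ≤ C / x := by
  set c := Real.sqrt (2 * Real.pi) with hc
  have hc0 : 0 < c := by rw [hc]; have := Real.pi_pos; positivity
  have hc2 : c ^ 2 = 2 * Real.pi := by rw [hc, Real.sq_sqrt]; have := Real.pi_pos; positivity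
  set C1 := 2000 * (1 + K ^ 2) + c * |K| with hC1
  have hC10 : 0 < C1 := by rw [hC1]; positivity
  refine ⟨4 * C1, 40 + 2 * |K| + (4 * C1 / c) ^ 2, by positivity, ?_, ?_⟩
  · have : 0 ≤ (4 * C1 / c) ^ 2 := by positivity
    linarith [abs_nonneg K]
  intro x s hx hxs hsi
  have hsq : 0 ≤ (4 * C1 / c) ^ 2 := by positivity
  have hKK : K ≤ |K| := le_abs_self K
  have hK0 : 0 ≤ |K| := abs_nonneg K
  have hK0' : 0 ≤ K := (abs_nonneg _).trans hxs
  have hx40 : 40 ≤ x := by linarith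
  have hx0 : 0 < x := by linarith
  have hab := abs_le.1 hxs
  have hs2 : x / 2 ≤ s := by linarith [hab.1, hab.2]
  have hs20 : 20 ≤ s := by linarith
  have hs0 : 0 < s := by linarith
  set r := Real.sqrt x with hr
  have hr0 : 0 < r := Real.sqrt_pos.2 hx0
  have hr2 : r ^ 2 = x := Real.sq_sqrt hx0.le
  set t := Real.sqrt s with ht
  have ht0 : 0 < t := Real.sqrt_pos.2 hs0
  have ht2 : t ^ 2 = s := Real.sq_sqrt hs0.le
  have ht1 : 1 ≤ t := by rw [ht]; apply Real.one_le_sqrt.2; linarith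
  have hr4 : 4 * C1 / c ≤ r := by
    rw [hr]; apply Real.le_sqrt_of_sq_le; linarith
  have hB0 : Real.sqrt (Real.pi / (s / 2)) / 2 = c / (2 * t) := by
    have : Real.pi / (s / 2) = (2 * Real.pi) / s := by field_simp
    rw [this, Real.sqrt_div (by have := Real.pi_pos; positivity)]
    rw [div_div, mul_comm t 2]
  have hB := Bi_est x s hs20
  rw [hB0] at hB
  have hBb : |Bi x s - c / (2 * r)| ≤ C1 / x := by
    have h1 : 1000 * (1 + |x - s| ^ 2) / s ≤ 2000 * (1 + K ^ 2) / x := by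
      calc _ ≤ 1000 * (1 + K ^ 2) / (x / 2) := by gcongr
        _ = _ := by field_simp; norm_num
    have h2 : |c / (2 * t) - c / (2 * r)| ≤ c * |K| / x := by
      have e : c / (2 * t) - c / (2 * r) = c * (x - s) / (2 * t * r * (r + t)) := by
        have : r + t ≠ 0 := by positivity
        rw [← hr2, ← ht2]; field_simp; ring
      rw [e, abs_div, abs_mul, abs_of_pos hc0, abs_of_pos (by positivity : 0 < 2 * t * r * (r + t))]
      have h3 : x ≤ 2 * t * r * (r + t) := by
        rw [← hr2]; nlinarith [mul_pos hr0 hr0, mul_pos ht0 hr0, mul_pos (mul_pos ht0 hr0) ht0]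
      have hxK : |x - s| ≤ |K| := hxs.trans hKK
      exact div_le_div₀ (by positivity) (mul_le_mul_of_nonneg_left hxK hc0.le) hx0 h3
    calc _ = |(Bi x s - c / (2 * t)) + (c / (2 * t) - c / (2 * r))| := by ring_nf
      _ ≤ _ := abs_add_le _ _
      _ ≤ 2000 * (1 + K ^ 2) / x + c * |K| / x := by linarith
      _ = _ := by rw [hC1]; ring
  set g := Real.Gamma s * Real.exp x * x ^ (-s) with hg
  have hgB : g * (x * Bi x s) = c ^ 2 / 2 := by
    have h := Bi_gamma s (by linarith) hsi x hx0
    have : x ^ (1 - s) = x ^ (-s) * x := by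
      rw [← Real.rpow_add_one hx0.ne']; ring_nf
    rw [this] at h
    rw [hc2, hg]; linarith
  have hT : 2 * Real.pi / Real.sqrt (2 * Real.pi * x) = c / r := by
    rw [Real.sqrt_mul (by have := Real.pi_pos; positivity) x, ← hc, ← hr, ← hc2]
    field_simp
  rw [hT]
  set b := Bi x s with hb
  have hxb : |2 * (x * b) - c * r| ≤ 2 * C1 := by
    have e : 2 * (x * b) - c * r = 2 * x * (b - c / (2 * r)) := by
      rw [← hr2]; field_simp
    rw [e, abs_mul, abs_of_pos (by positivity : 0 < 2 * x)]
    calc _ ≤ 2 * x * (C1 / x) := by gcongr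
      _ = _ := by field_simp
  have hcr : 4 * C1 ≤ c * r := by
    rw [div_le_iff₀ hc0] at hr4; linarith
  have hxb4 : c * r / 4 ≤ x * b := by
    have := (abs_le.1 hxb).1; linarith
  have hxb0 : 0 < x * b := lt_of_lt_of_le (by positivity) hxb4
  have e : g - c / r = -(c * (2 * (x * b) - c * r)) / (2 * (x * b) * r) := by
    have : g = c ^ 2 / 2 / (x * b) := by rw [eq_div_iff hxb0.ne']; exact hgB
    have hb0 : b ≠ 0 := fun h => by rw [h, mul_zero] at hxb0; exact lt_irrefl _ hxb0
    rw [this]; field_simp; ring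
  rw [e, abs_div, abs_neg, abs_mul, abs_of_pos hc0, abs_of_pos (by positivity : 0 < 2 * (x * b) * r)]
  calc _ ≤ c * (2 * C1) / (2 * (c * r / 4) * r) := by gcongr
    _ = 4 * C1 / x := by rw [← hr2]; field_simp
end KSL

end

section
open MeasureTheory Set Topology

namespace KSL

noncomputable def po (a : ℝ) (n : ℕ) : ℝ := (ascPochhammer ℝ n).eval a

noncomputable def invG (z : ℝ) : ℝ := (Real.Gamma z)⁻¹

lemma po_zero (a : ℝ) : po a 0 = 1 := by simp [po]

lemma po_succ (a : ℝ) (n : ℕ) : po a (n + 1) = po a n * (a + n) := by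
  simp [po, ascPochhammer_succ_eval]

lemma po_succ_left (a : ℝ) (n : ℕ) : po a (n + 1) = a * po (a + 1) n := by
  simp [po, ascPochhammer_succ_left, Polynomial.eval_comp]

lemma invG_rec (z : ℝ) : invG z = z * invG (z + 1) := by
  unfold invG
  rcases eq_or_ne z 0 with h | h
  · subst h; simp
  · rw [Real.Gamma_add_one h, mul_inv, ← mul_assoc, mul_inv_cancel₀ h, one_mul]

lemma invG_po (a : ℝ) (n : ℕ) : invG a = po a n * invG (a + n) := by
  induction n with
  | zero => simp [po_zero]
  | succ n ih =>
    rw [po_succ, ih, invG_rec (a + n)]; push_cast; ring_nf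

noncomputable def mt (a b x : ℝ) (n : ℕ) : ℝ := po a n * invG (b + n) * x ^ n / n.factorial

noncomputable def MM (a b x : ℝ) : ℝ := ∑' n, mt a b x n

lemma mt_summable (a b x : ℝ) : Summable (mt a b x) := by
  apply summable_of_ratio_norm_eventually_le (r := 1 / 2) (by norm_num)
  obtain ⟨M, hM⟩ := exists_nat_gt (|a| + 2 * |b| + 8 * |x| + 1)
  filter_upwards [eventually_ge_atTop M] with n hn
  have hn' : (M : ℝ) ≤ n := by exact_mod_cast hn
  have h1 : invG (b + n) = (b + n) * invG (b + (n + 1 : ℕ)) := by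
    rw [invG_rec]; push_cast; ring_nf
  have ha0 := abs_nonneg a
  have hb0 := abs_nonneg b
  have hx0 := abs_nonneg x
  have hbn : (n : ℝ) / 2 ≤ b + n := by have := neg_abs_le b; linarith
  have hn1 : (1 : ℝ) < n := by linarith
  have han : |a + n| ≤ 2 * n := by
    rw [abs_le]; constructor <;> linarith [neg_abs_le a, le_abs_self a]
  have hbp : 0 < b + n := by linarith
  have e : mt a b x (n + 1) * ((b + n) * (n + 1)) = mt a b x n * ((a + n) * x) := by
    unfold mt
    rw [h1, po_succ, Nat.factorial_succ, pow_succ]; push_cast; field_simp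
  have e2 := congrArg abs e
  rw [abs_mul, abs_mul (mt a b x n), abs_mul (a + n), abs_of_pos (by positivity : 0 < (b + n) * ((n : ℝ) + 1))] at e2
  rw [Real.norm_eq_abs, Real.norm_eq_abs]
  have hA := abs_nonneg (mt a b x n)
  set A := |mt a b x n|
  have hB := abs_nonneg (mt a b x (n + 1))
  set B := |mt a b x (n + 1)|
  have h2 : |a + n| * |x| ≤ 1 / 2 * ((b + n) * (n + 1)) := by
    calc _ ≤ 2 * n * |x| := by gcongr
      _ ≤ 2 * n * ((n + 1) / 8) := by gcongr; linarith
      _ ≤ 1 / 2 * ((n / 2) * (n + 1)) := by nlinarith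
      _ ≤ _ := by gcongr
  have h3 : B * ((b + n) * (n + 1)) ≤ (1 / 2 * A) * ((b + n) * (n + 1)) := by
    rw [e2]; nlinarith
  exact le_of_mul_le_mul_right h3 (by positivity)

lemma MM_zero_add (a b x : ℝ) : MM a b x = mt a b x 0 + ∑' n, mt a b x (n + 1) :=
  (mt_summable a b x).tsum_eq_zero_add

lemma MM_a (a b x : ℝ) : MM (a - 1) b x = MM a b x - x * MM a (b + 1) x := by
  rw [MM_zero_add (a - 1), MM_zero_add a b, MM, ← tsum_mul_left, add_sub_assoc,
    ← ((summable_nat_add_iff 1).2 (mt_summable a b x)).tsum_sub ((mt_summable a (b + 1) x).mul_left x)]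
  congr 1
  · simp [mt, po_zero]
  · congr 1; ext n
    unfold mt
    have h : po (a - 1) (n + 1) = (a - 1) * po a n := by rw [po_succ_left]; ring_nf
    have e : b + 1 + n = b + (n + 1 : ℕ) := by push_cast; ring
    rw [h, po_succ, Nat.factorial_succ, pow_succ, e]; push_cast; field_simp; ring

lemma MM_b (a b x : ℝ) : x * (b - a) * MM a (b + 1) x =
    (b - 1 + x) * MM a b x - MM a (b - 1) x := by
  have hs := mt_summable a b x
  have hs' := (summable_nat_add_iff 1).2 hs
  have h1 : (b - 1 + x) * MM a b x = (b - 1) * mt a b x 0 +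
      ∑' n, ((b - 1) * mt a b x (n + 1) + x * mt a b x n) := by
    rw [Summable.tsum_add (hs'.mul_left _) (hs.mul_left _), tsum_mul_left, tsum_mul_left, ← MM, MM_zero_add]
    have := MM_zero_add a b x
    rw [add_mul, ← this]; rw [this]; ring
  rw [h1, MM_zero_add a (b - 1), MM, ← tsum_mul_left]
  have h0 : (b - 1) * mt a b x 0 = mt a (b - 1) x 0 := by
    unfold mt; have := invG_rec (b - 1); simp [po_zero, this]
  rw [h0, add_sub_add_left_eq_sub, ← Summable.tsum_sub]
  · congr 1; ext n
    unfold mt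
    have e1 : b + 1 + n = b + n + 1 := by ring
    have e2 : b + (n + 1 : ℕ) = b + n + 1 := by push_cast; ring
    have e3 : b - 1 + (n + 1 : ℕ) = b + n := by push_cast; ring
    rw [e1, e2, e3, invG_rec (b + n), po_succ, Nat.factorial_succ, pow_succ]
    push_cast; field_simp; ring
  · exact (hs'.mul_left _).add (hs.mul_left _)
  · exact (summable_nat_add_iff 1).2 (mt_summable a (b - 1) x)

noncomputable def EE (a b : ℝ) (N : ℕ) (x : ℝ) : ℝ :=
  invG a * x ^ (a - b) * Real.exp x *
    ∑ j ∈ Finset.range N, po (b - a) j * po (1 - a) j / (j.factorial * x ^ j)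

lemma po_diff (β : ℝ) (n : ℕ) : po (β + 1) (n + 1) - po β (n + 1) = (n + 1) * po (β + 1) n := by
  rw [po_succ_left β, po_succ]; ring

lemma EE_a (a b : ℝ) (N : ℕ) (x : ℝ) (hx : 0 < x) :
    EE (a - 1) b N x = EE a b (N + 1) x - x * EE a (b + 1) (N + 1) x := by
  unfold EE
  have e1 : x ^ (a - b) = x * x ^ (a - (b + 1)) := by
    rw [mul_comm, ← Real.rpow_add_one hx.ne']; ring_nf
  have e2 : a - 1 - b = a - (b + 1) := by ring
  have e3 : invG (a - 1) = (a - 1) * invG a := by rw [invG_rec (a - 1)]; ring_nf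
  rw [e2, e1, e3]
  have hsum : (∑ j ∈ Finset.range (N + 1), po (b + 1 - a) j * po (1 - a) j / (j.factorial * x ^ j)) -
      ∑ j ∈ Finset.range (N + 1), po (b - a) j * po (1 - a) j / (j.factorial * x ^ j) =
      (1 - a) / x * ∑ j ∈ Finset.range N,
        po (b - (a - 1)) j * po (1 - (a - 1)) j / (j.factorial * x ^ j) := by
    rw [← Finset.sum_sub_distrib, Finset.sum_range_succ', Finset.mul_sum]
    simp only [po_zero, sub_self, add_zero]
    apply Finset.sum_congr rfl
    intro n _
    have h1 := po_diff (b - a) n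
    have f1 : b - a + 1 = b + 1 - a := by ring
    have f2 : b - (a - 1) = b + 1 - a := by ring
    have f3 : 1 - (a - 1) = 1 - a + 1 := by ring
    rw [f1] at h1
    rw [← sub_div, ← sub_mul, h1, f2, f3, po_succ_left (1 - a), Nat.factorial_succ, pow_succ]
    push_cast; field_simp
  have : (∑ j ∈ Finset.range (N + 1), po (b + 1 - a) j * po (1 - a) j / (j.factorial * x ^ j)) =
      (∑ j ∈ Finset.range (N + 1), po (b - a) j * po (1 - a) j / (j.factorial * x ^ j)) +
      (1 - a) / x * ∑ j ∈ Finset.range N,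
        po (b - (a - 1)) j * po (1 - (a - 1)) j / (j.factorial * x ^ j) := by linarith
  rw [this]; field_simp; ring

lemma EE_b (a b : ℝ) (N : ℕ) (x : ℝ) (hx : 0 < x) :
    x * (b - a) * EE a (b + 1) N x =
      x * EE a b (N + 1) x + (b - 1) * EE a b N x - EE a (b - 1) (N + 1) x := by
  unfold EE
  have e1 : x ^ (a - b) = x * x ^ (a - (b + 1)) := by
    rw [mul_comm, ← Real.rpow_add_one hx.ne']; ring_nf
  have e2 : x ^ (a - (b - 1)) = x * x ^ (a - b) := by
    rw [mul_comm, ← Real.rpow_add_one hx.ne']; ring_nf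
  rw [e2, e1]
  set S0 := ∑ j ∈ Finset.range N, po (b - a) j * po (1 - a) j / (j.factorial * x ^ j) with hS0
  set S1 := ∑ j ∈ Finset.range (N + 1), po (b - a) j * po (1 - a) j / (j.factorial * x ^ j) with hS1
  set S2 := ∑ j ∈ Finset.range (N + 1), po (b - 1 - a) j * po (1 - a) j / (j.factorial * x ^ j) with hS2
  set S3 := ∑ j ∈ Finset.range N, po (b + 1 - a) j * po (1 - a) j / (j.factorial * x ^ j) with hS3
  have hsum : x * (S1 - S2) + (b - 1) * S0 = (b - a) * S3 := by
    rw [hS1, hS2, hS0, hS3, ← Finset.sum_sub_distrib, Finset.sum_range_succ', Finset.mul_sum,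
      Finset.mul_sum]
    simp only [po_zero, sub_self, add_zero]
    rw [Finset.mul_sum, ← Finset.sum_add_distrib]
    apply Finset.sum_congr rfl
    intro n _
    have h1 := po_diff (b - 1 - a) n
    have f1 : b - 1 - a + 1 = b - a := by ring
    have f2 : b + 1 - a = b - a + 1 := by ring
    rw [f1] at h1
    have h2 : (b - a) * po (b + 1 - a) n = po (b - a) n * (b - a + n) := by
      rw [f2, ← po_succ_left, po_succ]
    rw [← sub_div, ← sub_mul, h1, po_succ (1 - a), Nat.factorial_succ, pow_succ]
    rw [mul_div_assoc' (b - a), ← mul_assoc (b - a), h2]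
    push_cast; field_simp; ring
  linear_combination (-invG a * x * x ^ (a - (b + 1)) * Real.exp x) * hsum

noncomputable def Ph (a b : ℝ) (N : ℕ) (x : ℝ) : ℝ := MM a b x - EE a b N x

lemma Ph_a (a b : ℝ) (N : ℕ) (x : ℝ) (hx : 0 < x) :
    Ph (a - 1) b N x = Ph a b (N + 1) x - x * Ph a (b + 1) (N + 1) x := by
  unfold Ph; rw [EE_a a b N x hx, MM_a]; ring

lemma Ph_b (a b : ℝ) (N : ℕ) (x : ℝ) (hx : 0 < x) :
    x * (b - a) * Ph a (b + 1) N x =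
      x * Ph a b (N + 1) x + (b - 1) * Ph a b N x - Ph a (b - 1) (N + 1) x := by
  unfold Ph; have := EE_b a b N x hx; have := MM_b a b x; linarith

noncomputable def Mn (a b : ℝ) (N : ℕ) (x : ℝ) : ℝ :=
  x ^ (-a) * invG (b - a) * (Real.cos (Real.pi * a) +
    2 * Real.sin (Real.pi * a) / Real.sqrt (2 * Real.pi * x) * (2 / 3 - (N - x - 2 * a + b)))

lemma Mn_a (a b : ℝ) (N : ℕ) (x : ℝ) (hx : 0 < x) :
    Mn (a - 1) b N x = - (x * Mn a (b + 1) (N + 1) x) := by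
  unfold Mn
  have e1 : x ^ (-(a - 1)) = x ^ (-a) * x := by
    rw [← Real.rpow_add_one hx.ne']; ring_nf
  have e2 : Real.pi * (a - 1) = Real.pi * a - Real.pi := by ring
  have e3 : b - (a - 1) = b + 1 - a := by ring
  rw [e1, e2, e3, Real.cos_sub_pi, Real.sin_sub_pi]; push_cast; ring

lemma Mn_b (a b : ℝ) (N : ℕ) (x : ℝ) :
    (b - a) * Mn a (b + 1) N x = Mn a b (N + 1) x := by
  unfold Mn
  have e3 : b + 1 - a = b - a + 1 := by ring
  rw [invG_rec (b - a), e3]; push_cast; ring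

def SS (a b : ℝ) : Prop := ∀ K : ℝ, ∃ C X : ℝ, ∀ x, X ≤ x → ∀ N : ℕ, |(N : ℝ) - x| ≤ K →
  |Ph a b N x - Mn a b N x| ≤ C * x ^ (-a - 1)

lemma Mn_bd (a b K : ℝ) : ∃ C, ∀ x : ℝ, 1 ≤ x → ∀ N : ℕ, |(N : ℝ) - x| ≤ K →
    |Mn a b N x| ≤ C * x ^ (-a) := by
  refine ⟨|invG (b - a)| * (1 + 2 * (2 / 3 + K + |2 * a| + |b|)), fun x hx N hN => ?_⟩
  have hx0 : 0 < x := by linarith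
  have hp : 0 < x ^ (-a) := Real.rpow_pos_of_pos hx0 _
  unfold Mn
  rw [abs_mul, abs_mul, abs_of_pos hp]
  have hq : 1 ≤ Real.sqrt (2 * Real.pi * x) := by
    apply Real.one_le_sqrt.2; nlinarith [Real.pi_gt_three]
  have hq0 : 0 < Real.sqrt (2 * Real.pi * x) := by linarith
  have h1 : |Real.cos (Real.pi * a) +
    2 * Real.sin (Real.pi * a) / Real.sqrt (2 * Real.pi * x) * (2 / 3 - (N - x - 2 * a + b))| ≤
      1 + 2 * (2 / 3 + K + |2 * a| + |b|) := by
    refine (abs_add_le _ _).trans (add_le_add (Real.abs_cos_le_one _) ?_)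
    rw [abs_mul]
    apply mul_le_mul _ _ (abs_nonneg _) (by norm_num)
    · rw [abs_div, abs_of_pos hq0, abs_mul, div_le_iff₀ hq0]
      have := Real.abs_sin_le_one (Real.pi * a)
      rw [abs_of_pos (by norm_num : (0 : ℝ) < 2)]; linarith
    · rw [abs_le] at *
      constructor <;> linarith [neg_abs_le (2 * a), le_abs_self (2 * a), neg_abs_le b, le_abs_self b, hN.1, hN.2]
  calc _ ≤ x ^ (-a) * |invG (b - a)| * (1 + 2 * (2 / 3 + K + |2 * a| + |b|)) := by gcongr
    _ = _ := by ring

lemma Ph_bd (a b : ℝ) (h : SS a b) (K : ℝ) : ∃ C X, ∀ x : ℝ, X ≤ x → ∀ N : ℕ, |(N : ℝ) - x| ≤ K →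
    |Ph a b N x| ≤ C * x ^ (-a) := by
  obtain ⟨C, X, h1⟩ := h K
  obtain ⟨D, h2⟩ := Mn_bd a b K
  refine ⟨|C| + D, max X 1, fun x hx N hN => ?_⟩
  have hx1 : 1 ≤ x := (le_max_right _ _).trans hx
  have hx0 : 0 < x := by linarith
  have g1 := h1 x ((le_max_left _ _).trans hx) N hN
  have g2 := h2 x hx1 N hN
  have e : x ^ (-a - 1) ≤ x ^ (-a) := Real.rpow_le_rpow_of_exponent_le hx1 (by linarith)
  have e0 : 0 < x ^ (-a - 1) := Real.rpow_pos_of_pos hx0 _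
  calc |Ph a b N x| = |(Ph a b N x - Mn a b N x) + Mn a b N x| := by ring_nf
    _ ≤ _ := abs_add_le _ _
    _ ≤ C * x ^ (-a - 1) + D * x ^ (-a) := add_le_add g1 g2
    _ ≤ |C| * x ^ (-a) + D * x ^ (-a) := by
      gcongr
      exact le_abs_self C
    _ = _ := by ring

lemma SS_a (a b : ℝ) (h : SS a b) (h' : SS a (b + 1)) : SS (a - 1) b := by
  intro K
  obtain ⟨C, X, h1⟩ := Ph_bd a b h (K + 1)
  obtain ⟨C', X', h2⟩ := h' (K + 1)
  refine ⟨C + C', max (max X X') 1, fun x hx N hN => ?_⟩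
  have hx1 : 1 ≤ x := (le_max_right _ _).trans hx
  have hx2 := (le_max_left _ _).trans hx
  have hx0 : 0 < x := by linarith
  have hN' : |((N + 1 : ℕ) : ℝ) - x| ≤ K + 1 := by
    push_cast; rw [abs_le] at *; constructor <;> linarith [hN.1, hN.2]
  have g1 := h1 x ((le_max_left _ _).trans hx2) (N + 1) hN'
  have g2 := h2 x ((le_max_right _ _).trans hx2) (N + 1) hN'
  rw [Ph_a a b N x hx0, Mn_a a b N x hx0]
  have e : x ^ (-(a - 1) - 1) = x ^ (-a) := by ring_nf
  have e' : x ^ (-a) = x ^ (-a - 1) * x := by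
    rw [← Real.rpow_add_one hx0.ne']; ring_nf
  rw [e]
  calc _ = |Ph a b (N + 1) x - x * (Ph a (b + 1) (N + 1) x - Mn a (b + 1) (N + 1) x)| := by ring_nf
    _ ≤ |Ph a b (N + 1) x| + |x * (Ph a (b + 1) (N + 1) x - Mn a (b + 1) (N + 1) x)| := abs_sub _ _
    _ ≤ C * x ^ (-a) + x * (C' * x ^ (-a - 1)) := by
      rw [abs_mul, abs_of_pos hx0]; gcongr
    _ = _ := by rw [e']; ring

lemma SS_b (a b : ℝ) (hab : b - a ≠ 0) (h : SS a b) (h' : SS a (b - 1)) : SS a (b + 1) := by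
  intro K
  obtain ⟨C, X, h1⟩ := h (K + 1)
  obtain ⟨C2, X2, h2⟩ := Ph_bd a b h (K + 1)
  obtain ⟨C3, X3, h3⟩ := Ph_bd a (b - 1) h' (K + 1)
  refine ⟨(C + |b - 1| * C2 + C3) / |b - a|, max (max X (max X2 X3)) 1, fun x hx N hN => ?_⟩
  have hx1 : 1 ≤ x := (le_max_right _ _).trans hx
  have hx2 := (le_max_left _ _).trans hx
  have hx3 := (le_max_right _ _).trans hx2
  have hx0 : 0 < x := by linarith
  have hN' : |((N + 1 : ℕ) : ℝ) - x| ≤ K + 1 := by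
    push_cast; rw [abs_le] at *; constructor <;> linarith [hN.1, hN.2]
  have g1 := h1 x ((le_max_left _ _).trans hx2) (N + 1) hN'
  have g2 := h2 x ((le_max_left _ _).trans hx3) N (by linarith)
  have g3 := h3 x ((le_max_right _ _).trans hx3) (N + 1) hN'
  have e' : x ^ (-a) = x ^ (-a - 1) * x := by
    rw [← Real.rpow_add_one hx0.ne']; ring_nf
  have hba : 0 < |b - a| := abs_pos.2 hab
  rw [div_mul_eq_mul_div, le_div_iff₀ hba]
  refine le_of_mul_le_mul_left ?_ hx0
  calc x * (|Ph a (b + 1) N x - Mn a (b + 1) N x| * |b - a|)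
      = |x * (b - a) * Ph a (b + 1) N x - x * ((b - a) * Mn a (b + 1) N x)| := by
        rw [mul_assoc, ← mul_sub, ← mul_sub, abs_mul, abs_mul, abs_of_pos hx0]; ring
    _ = |x * (Ph a b (N + 1) x - Mn a b (N + 1) x) + (b - 1) * Ph a b N x - Ph a (b - 1) (N + 1) x| := by
        rw [Ph_b a b N x hx0, Mn_b]; ring_nf
    _ ≤ |x * (Ph a b (N + 1) x - Mn a b (N + 1) x)| + |(b - 1) * Ph a b N x| + |Ph a (b - 1) (N + 1) x| :=
        (abs_sub _ _).trans (add_le_add_left (abs_add_le _ _) _)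
    _ ≤ x * (C * x ^ (-a - 1)) + |b - 1| * (C2 * x ^ (-a)) + C3 * x ^ (-a) := by
        rw [abs_mul, abs_mul, abs_of_pos hx0]; gcongr
    _ = _ := by rw [e']; ring

lemma MM_self (a x : ℝ) : MM a a x = invG a * Real.exp x := by
  have : mt a a x = fun n => invG a * (x ^ n / n.factorial) := by
    ext n; unfold mt; rw [← invG_po, mul_div_assoc]
  rw [MM, this, tsum_mul_left, Real.exp_eq_exp_ℝ, NormedSpace.exp_eq_tsum_div]

lemma Ph_self (a : ℝ) (N : ℕ) (x : ℝ) : Ph a a (N + 1) x = 0 := by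
  unfold Ph EE
  rw [MM_self, Finset.sum_range_succ', Finset.sum_eq_zero]
  · simp [po_zero]
  · intro n _; rw [sub_self, po_succ_left]; simp

lemma Ph_neg (a : ℝ) (x : ℝ) (hx : 0 < x) (n : ℕ) :
    (∀ N, n + 1 ≤ N → Ph a (a - n) N x = 0) ∧ (∀ N, n + 2 ≤ N → Ph a (a - (n + 1 : ℕ)) N x = 0) := by
  induction n with
  | zero =>
    have h0 : ∀ N, 0 + 1 ≤ N → Ph a (a - (0 : ℕ)) N x = 0 := by
      intro N hN
      obtain ⟨M, rfl⟩ := Nat.exists_eq_add_of_le hN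
      rw [zero_add, add_comm]; simpa using Ph_self a M x
    refine ⟨h0, fun N hN => ?_⟩
    obtain ⟨M, rfl⟩ := Nat.exists_eq_add_of_le hN
    have h := Ph_b a a (M + 1) x hx
    rw [Ph_self, Ph_self] at h
    have e : 0 + 2 + M = M + 1 + 1 := by ring
    rw [e]; push_cast; linarith
  | succ n ih =>
    refine ⟨ih.2, fun N hN => ?_⟩
    obtain ⟨M, rfl⟩ := Nat.exists_eq_add_of_le hN
    have h := Ph_b a (a - (n + 1 : ℕ)) (n + 1 + 1 + M) x hx
    have e1 : a - (n + 1 : ℕ) + 1 = a - n := by push_cast; ring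
    have e2 : a - (n + 1 : ℕ) - 1 = a - (n + 1 + 1 : ℕ) := by push_cast; ring
    have e3 : n + 1 + 1 + M + 1 = n + 1 + 2 + M := by ring
    rw [e1, e2, ih.1 _ (by omega), ih.2 _ (by omega), ih.2 _ (by omega), e3] at h
    linarith

lemma SS_neg (a : ℝ) (n : ℕ) : SS a (a - n) := by
  intro K
  refine ⟨0, max 1 (n + 1 + K), fun x hx N hN => ?_⟩
  have hx1 : 1 ≤ x := (le_max_left _ _).trans hx
  have hx2 : n + 1 + K ≤ x := (le_max_right _ _).trans hx
  have hN2 : n + 1 ≤ N := by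
    have := (abs_le.1 hN).1
    have h : ((n + 1 : ℕ) : ℝ) ≤ N := by push_cast; linarith
    exact_mod_cast h
  have h0 : invG (a - n - a) = 0 := by
    unfold invG; rw [inv_eq_zero, Real.Gamma_eq_zero_iff]; exact ⟨n, by ring⟩
  rw [(Ph_neg a x (by linarith) n).1 N hN2, Mn, h0]; simp

end KSL

end

section
open MeasureTheory Set Topology

namespace KSL

noncomputable def cj (p : ℝ) (j : ℕ) : ℝ := po (-p) j / j.factorial

noncomputable def wf (s : ℝ) : ℝ := max (1 - s) 0

noncomputable def PP (p : ℝ) (N : ℕ) (s : ℝ) : ℝ := ∑ j ∈ Finset.range N, cj p j * s ^ j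

noncomputable def Rr (p : ℝ) (N : ℕ) (s : ℝ) : ℝ := wf s ^ p - PP p N s

lemma wf_nonneg (s : ℝ) : 0 ≤ wf s := le_max_right _ _

lemma wf_cont : Continuous wf := by unfold wf; fun_prop

lemma PP_cont (p : ℝ) (N : ℕ) : Continuous (PP p N) := by unfold PP; fun_prop

lemma Rr_cont (p : ℝ) (hp : 0 ≤ p) (N : ℕ) : Continuous (Rr p N) := by
  unfold Rr
  exact (wf_cont.rpow_const (fun _ => Or.inr hp)).sub (PP_cont p N)

lemma cj_succ (p : ℝ) (j : ℕ) : (j + 1) * cj p (j + 1) = (j - p) * cj p j := by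
  unfold cj; rw [po_succ, Nat.factorial_succ]; push_cast; field_simp; ring

lemma cj_succ_left (p : ℝ) (j : ℕ) : (j + 1) * cj p (j + 1) = -p * cj (p - 1) j := by
  unfold cj; rw [po_succ_left, Nat.factorial_succ]
  have : -p + 1 = -(p - 1) := by ring
  rw [this]; push_cast; field_simp

lemma cj_zero (p : ℝ) : cj p 0 = 1 := by simp [cj, po_zero]

lemma PP_deriv (p : ℝ) (N : ℕ) (s : ℝ) :
    HasDerivAt (PP p N) (∑ j ∈ Finset.range N, cj p j * (j * s ^ (j - 1))) s := by
  unfold PP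
  apply HasDerivAt.fun_sum
  intro j _
  exact (hasDerivAt_pow j s).const_mul _

lemma PP_deriv' (p : ℝ) (N : ℕ) (s : ℝ) :
    HasDerivAt (PP p (N + 1)) (-p * PP (p - 1) N s) s := by
  refine (PP_deriv p (N + 1) s).congr_deriv ?_
  rw [Finset.sum_range_succ']
  unfold PP
  rw [Finset.mul_sum]
  simp only [Nat.cast_zero, zero_mul, mul_zero, add_zero]
  apply Finset.sum_congr rfl
  intro j _
  have := cj_succ_left p j
  push_cast
  linear_combination s ^ j * this

lemma PP_ode (p : ℝ) (N : ℕ) (s : ℝ) :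
    (1 - s) * (∑ j ∈ Finset.range N, cj p j * (j * s ^ (j - 1))) + p * PP p N s =
      -(N * cj p N * s ^ (N - 1)) := by
  induction N with
  | zero => simp [PP]
  | succ N ih =>
    have e : PP p (N + 1) s = PP p N s + cj p N * s ^ N := by
      unfold PP; rw [Finset.sum_range_succ]
    rw [Finset.sum_range_succ, e]
    have h := cj_succ p N
    have h2 : (N : ℝ) * s ^ (N - 1) * s = N * s ^ N := by
      cases N with
      | zero => simp
      | succ n => rw [Nat.add_sub_cancel, mul_assoc, ← pow_succ]
    rw [Nat.add_sub_cancel]; push_cast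
    linear_combination ih - cj p N * h2 + s ^ N * h

lemma near_bound (N : ℕ) : ∀ p : ℝ, ∃ C, 0 ≤ C ∧ ∀ s : ℝ, 0 ≤ s → s ≤ 1 / 2 →
    |(1 - s) ^ p - PP p N s| ≤ C * s ^ N := by
  induction N with
  | zero =>
    intro p
    refine ⟨2 ^ |p|, by positivity, fun s h0 h1 => ?_⟩
    have hp : 0 < (1 - s) ^ p := Real.rpow_pos_of_pos (by linarith) _
    simp only [PP, Finset.range_zero, Finset.sum_empty, sub_zero, pow_zero, mul_one]
    rw [abs_of_pos hp]
    calc (1 - s) ^ p ≤ (1 - s) ^ (-|p|) := by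
          apply Real.rpow_le_rpow_of_exponent_ge (by linarith) (by linarith); exact neg_abs_le p
      _ ≤ (1 / 2 : ℝ) ^ (-|p|) := by
          apply Real.rpow_le_rpow_of_nonpos (by norm_num) (by linarith); simp
      _ = _ := by rw [one_div, Real.inv_rpow (by norm_num), Real.rpow_neg (by norm_num), inv_inv]
  | succ N ih =>
    intro p
    obtain ⟨C, hC, h⟩ := ih (p - 1)
    refine ⟨|p| * C, by positivity, fun s h0 h1 => ?_⟩
    set f : ℝ → ℝ := fun s => (1 - s) ^ p - PP p (N + 1) s with hf
    have hd : ∀ t ∈ Icc (0 : ℝ) s, HasDerivWithinAt f (-p * ((1 - t) ^ (p - 1) - PP (p - 1) N t)) (Icc 0 s) t := by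
      intro t ht
      have h2 : HasDerivAt (fun s : ℝ => (1 - s) ^ p) (-1 * p * (1 - t) ^ (p - 1)) t := by
        have := ((hasDerivAt_id t).const_sub 1).rpow_const (p := p) (Or.inl (by simp only [id]; linarith [ht.2]))
        simpa using this
      exact ((h2.sub (PP_deriv' p N t)).congr_deriv (by ring)).hasDerivWithinAt
    have hb : ∀ t ∈ Ico (0 : ℝ) s, ‖-p * ((1 - t) ^ (p - 1) - PP (p - 1) N t)‖ ≤ |p| * (C * s ^ N) := by
      intro t ht
      rw [norm_mul, norm_neg, Real.norm_eq_abs, Real.norm_eq_abs]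
      gcongr
      refine (h t ht.1 (by linarith [ht.2])).trans ?_
      gcongr
      · exact ht.1
      · exact ht.2.le
    have := norm_image_sub_le_of_norm_deriv_le_segment' hd hb s (right_mem_Icc.2 h0)
    have f0 : f 0 = 0 := by
      simp [hf, PP, Finset.sum_range_succ', cj_zero]
    rw [f0, sub_zero, Real.norm_eq_abs] at this
    calc _ ≤ _ := this
      _ = _ := by rw [pow_succ]; ring

lemma Rr_bound (p : ℝ) (hp : 0 ≤ p) (N : ℕ) : ∃ C, 0 ≤ C ∧ ∀ s : ℝ, 0 ≤ s →
    |Rr p N s| ≤ C * s ^ N := by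
  obtain ⟨C, hC, h⟩ := near_bound N p
  set D := 2 ^ N * (1 + ∑ j ∈ Finset.range N, |cj p j|) with hD
  have hD0 : 0 ≤ D := by positivity
  refine ⟨C + D, by positivity, fun s hs => ?_⟩
  have hsN : 0 ≤ s ^ N := by positivity
  rcases le_or_gt s (1 / 2) with h1 | h1
  · have e : Rr p N s = (1 - s) ^ p - PP p N s := by
      unfold Rr wf; rw [max_eq_left (by linarith)]
    rw [e]; refine (h s hs h1).trans ?_
    nlinarith
  · have hj : ∀ j ≤ N, s ^ j ≤ 2 ^ N * s ^ N := by
      intro j hj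
      have : (1 : ℝ) ≤ (2 * s) ^ (N - j) := one_le_pow₀ (by linarith)
      calc s ^ j ≤ s ^ j * (2 * s) ^ (N - j) := le_mul_of_one_le_right (by positivity) this
        _ = 2 ^ (N - j) * s ^ N := by
          rw [mul_pow, mul_left_comm, ← pow_add]; congr 2; omega
        _ ≤ _ := by gcongr; norm_num; omega
    have hw : |wf s ^ p| ≤ 2 ^ N * s ^ N := by
      rw [abs_of_nonneg (Real.rpow_nonneg (wf_nonneg s) p)]
      have : wf s ^ p ≤ 1 := Real.rpow_le_one (wf_nonneg s) (by unfold wf; simp; linarith) hp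
      have := hj 0 (Nat.zero_le _); rw [pow_zero] at this; linarith
    have hP : |PP p N s| ≤ 2 ^ N * s ^ N * ∑ j ∈ Finset.range N, |cj p j| := by
      unfold PP; rw [Finset.mul_sum]
      refine (Finset.abs_sum_le_sum_abs _ _).trans (Finset.sum_le_sum fun j hjN => ?_)
      rw [abs_mul, abs_of_nonneg (by positivity : 0 ≤ s ^ j), mul_comm]
      gcongr
      exact hj j (Finset.mem_range.1 hjN).le
    calc _ ≤ |wf s ^ p| + |PP p N s| := abs_sub _ _
      _ ≤ D * s ^ N := by rw [hD]; linarith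
      _ ≤ _ := by nlinarith

lemma wf_deriv (p : ℝ) (hp : 0 < p) (s : ℝ) :
    HasDerivAt (fun t => wf t ^ (p + 1)) (-(p + 1) * wf s ^ p) s := by
  have key : ∀ s : ℝ, s ≤ 1 → HasDerivWithinAt (fun t => wf t ^ (p + 1)) (-(p + 1) * wf s ^ p) (Iic 1) s := by
    intro s hs
    have h := (((hasDerivAt_id s).const_sub 1).rpow_const (p := p + 1) (Or.inr (by linarith))).hasDerivWithinAt (s := Iic 1)
    have e : ∀ t ≤ 1, wf t = 1 - t := fun t ht => by unfold wf; rw [max_eq_left (by linarith)]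
    refine (h.congr ?_ ?_).congr_deriv ?_
    · intro t ht; rw [e t ht]; rfl
    · rw [e s hs]; rfl
    · rw [e s hs]; simp
  have key2 : ∀ s : ℝ, 1 ≤ s → HasDerivWithinAt (fun t => wf t ^ (p + 1)) (-(p + 1) * wf s ^ p) (Ici 1) s := by
    intro s hs
    have e : ∀ t, 1 ≤ t → wf t = 0 := fun t ht => by unfold wf; rw [max_eq_right (by linarith)]
    refine ((hasDerivWithinAt_const s (Ici 1) (0 : ℝ)).congr ?_ ?_).congr_deriv ?_
    · intro t ht; rw [e t ht, Real.zero_rpow (by linarith)]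
    · rw [e s hs, Real.zero_rpow (by linarith)]
    · rw [e s hs, Real.zero_rpow (by linarith)]; simp
  rcases lt_trichotomy s 1 with h | h | h
  · exact (key s h.le).hasDerivAt (Iic_mem_nhds h)
  · subst h
    have := (key 1 le_rfl).union (key2 1 le_rfl)
    rwa [Iic_union_Ici, hasDerivWithinAt_univ] at this
  · exact (key2 s h.le).hasDerivAt (Ici_mem_nhds h)

lemma wf_mul (p : ℝ) (hp : 0 < p) (s : ℝ) : (1 - s) * wf s ^ p = wf s ^ (p + 1) := by
  unfold wf
  rcases lt_or_ge s 1 with h | h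
  · rw [max_eq_left (by linarith), Real.rpow_add_one (by linarith)]; ring
  · rw [max_eq_right (by linarith), Real.zero_rpow (by linarith), Real.zero_rpow (by linarith), mul_zero]

lemma KR_deriv (p : ℝ) (hp : 0 < p) (N : ℕ) (s : ℝ) :
    HasDerivAt (fun t => (1 - t) * Rr p N t) (-(p + 1) * Rr p N s + N * cj p N * s ^ (N - 1)) s := by
  have e : (fun t => (1 - t) * Rr p N t) = fun t => wf t ^ (p + 1) - (1 - t) * PP p N t := by
    ext t; unfold Rr; rw [mul_sub, wf_mul p hp]
  rw [e]
  have h1 : HasDerivAt (fun t : ℝ => 1 - t) (-1) s := by simpa using (hasDerivAt_id s).const_sub 1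
  refine ((wf_deriv p hp s).sub (h1.mul (PP_deriv p N s))).congr_deriv ?_
  have := PP_ode p N s
  unfold Rr
  linear_combination -this

lemma exp_rpow_int (q x : ℝ) (hq : 0 < q) (hx : 0 < x) :
    IntegrableOn (fun s : ℝ => Real.exp (-(x * s)) * s ^ (q - 1)) (Ioi 0) := by
  have := integrableOn_rpow_mul_exp_neg_mul_rpow (p := 1) (s := q - 1) (b := x) (by linarith) one_pos hx
  refine this.congr_fun (fun s _ => ?_) measurableSet_Ioi
  simp only [Real.rpow_one]; rw [mul_comm, neg_mul]

lemma exp_rpow_val (q x : ℝ) (hq : 0 < q) (hx : 0 < x) :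
    ∫ s in Ioi (0 : ℝ), Real.exp (-(x * s)) * s ^ (q - 1) = x ^ (-q) * Real.Gamma q := by
  have := Real.integral_rpow_mul_exp_neg_mul_Ioi hq hx
  rw [one_div, Real.inv_rpow hx.le, ← Real.rpow_neg hx.le] at this
  rw [← this]; congr 1; ext s; ring

noncomputable def Jf (p : ℝ) (N : ℕ) (β x : ℝ) : ℝ :=
  ∫ s in Ioi (0 : ℝ), Real.exp (-(x * s)) * s ^ (β - 1) * Rr p N s

lemma Jf_int (p : ℝ) (hp : 0 < p) (N : ℕ) (β x : ℝ) (hx : 0 < x) (hβ : 0 < β + N) :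
    IntegrableOn (fun s : ℝ => Real.exp (-(x * s)) * s ^ (β - 1) * Rr p N s) (Ioi 0) := by
  obtain ⟨C, hC, h⟩ := Rr_bound p hp.le N
  refine Integrable.mono' ((exp_rpow_int (β + N) x hβ hx).const_mul C) ?_ ?_
  · apply ContinuousOn.aestronglyMeasurable _ measurableSet_Ioi
    apply ContinuousOn.mul (ContinuousOn.mul (by fun_prop) _) (Rr_cont p hp.le N).continuousOn
    intro s hs
    exact (Real.continuousAt_rpow_const s _ (Or.inl (ne_of_gt hs))).continuousWithinAt
  · filter_upwards [ae_restrict_mem measurableSet_Ioi] with s hs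
    have hs0 : 0 < s := hs
    have e : s ^ (β + N - 1) = s ^ (β - 1) * s ^ N := by
      rw [← Real.rpow_natCast, ← Real.rpow_add hs0]; ring_nf
    rw [norm_mul, Real.norm_of_nonneg (by positivity), Real.norm_eq_abs, e]
    calc _ ≤ Real.exp (-(x * s)) * s ^ (β - 1) * (C * s ^ N) := by gcongr; exact h s hs0.le
      _ = _ := by ring

end KSL

end

section
open MeasureTheory Set Topology

namespace KSL

lemma Jf_rec (p : ℝ) (hp : 0 < p) (N : ℕ) (hN : 1 ≤ N) (β x : ℝ) (hx : 0 < x) (hβ : 1 < β + N)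
    (hβ1 : β ≠ 1) :
    (β - 1) * Jf p N (β - 1) x = (x + β + p) * Jf p N β x - x * Jf p N (β + 1) x -
      N * cj p N * (x ^ (-(β + N - 1)) * Real.Gamma (β + N - 1)) := by
  obtain ⟨C, hC, hR⟩ := Rr_bound p hp.le N
  set f : ℝ → ℝ → ℝ := fun γ s => Real.exp (-(x * s)) * s ^ (γ - 1) * Rr p N s with hf
  set g : ℝ → ℝ := fun s => Real.exp (-(x * s)) * s ^ (β + N - 1 - 1) with hg
  have i0 : IntegrableOn (f (β - 1)) (Ioi 0) := Jf_int p hp N (β - 1) x hx (by linarith)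
  have i1 : IntegrableOn (f β) (Ioi 0) := Jf_int p hp N β x hx (by linarith)
  have i2 : IntegrableOn (f (β + 1)) (Ioi 0) := Jf_int p hp N (β + 1) x hx (by linarith)
  have ig : IntegrableOn g (Ioi 0) := exp_rpow_int (β + N - 1) x (by linarith) hx
  set H : ℝ → ℝ := fun s => Real.exp (-(x * s)) * s ^ (β - 1) * ((1 - s) * Rr p N s) with hH
  set H' : ℝ → ℝ := fun s => (x * f (β + 1) s + (β - 1) * f (β - 1) s) +
      (-(x + β + p) * f β s + N * cj p N * g s) with hH'
  have iH' : IntegrableOn H' (Ioi 0) :=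
    ((i2.const_mul x).add (i0.const_mul (β - 1))).add ((i1.const_mul _).add (ig.const_mul _))
  have rp : ∀ s : ℝ, 0 < s → s ^ β = s ^ (β - 1 - 1) * s * s ∧ s ^ (β - 1) = s ^ (β - 1 - 1) * s ∧
      s ^ (β + N - 1 - 1) = s ^ (β - 1 - 1) * s * s ^ (N - 1) := by
    intro s hs
    have h1 : s ^ (β - 1) = s ^ (β - 1 - 1) * s := by
      rw [← Real.rpow_add_one hs.ne']; ring_nf
    refine ⟨?_, h1, ?_⟩
    · rw [← h1, ← Real.rpow_add_one hs.ne']; ring_nf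
    · rw [← h1, ← Real.rpow_natCast, ← Real.rpow_add hs]
      push_cast [hN]; ring_nf
  have iH : IntegrableOn H (Ioi 0) := by
    refine (i1.sub i2).congr_fun (fun s hs => ?_) measurableSet_Ioi
    obtain ⟨e1, e2, e3⟩ := rp s hs
    simp only [Pi.sub_apply, hf, hH]
    rw [add_sub_cancel_right, e1, e2]; ring
  have hd : ∀ s ∈ Ioi (0 : ℝ), HasDerivAt H (H' s) s := by
    intro s hs
    have hs0 : 0 < s := hs
    have d1 : HasDerivAt (fun s : ℝ => Real.exp (-(x * s))) (Real.exp (-(x * s)) * (-x)) s := by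
      have := ((hasDerivAt_id s).const_mul x).neg.exp
      simpa using this
    have d2 : HasDerivAt (fun s : ℝ => s ^ (β - 1)) ((β - 1) * s ^ (β - 1 - 1)) s :=
      Real.hasDerivAt_rpow_const (Or.inl hs0.ne')
    refine ((d1.mul d2).mul (KR_deriv p hp N s)).congr_deriv ?_
    obtain ⟨e1, e2, e3⟩ := rp s hs
    simp only [hH', hf, hg, Pi.mul_apply]
    rw [add_sub_cancel_right, e3, e1, e2]; ring
  have hlim : Tendsto H atTop (𝓝 0) := tendsto_zero_of_hasDerivAt_of_integrableOn_Ioi hd iH' iH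
  have H0 : H 0 = 0 := by
    simp only [hH]; rw [Real.zero_rpow (sub_ne_zero.2 hβ1)]; simp
  have hcont : ContinuousWithinAt H (Ici 0) 0 := by
    unfold ContinuousWithinAt
    rw [H0]
    have t : Tendsto (fun s : ℝ => C * s ^ (β + N - 1)) (𝓝[Ici 0] 0) (𝓝 0) := by
      have h := ((Real.continuousAt_rpow_const 0 (β + N - 1) (Or.inr (by linarith))).tendsto.const_mul C)
      rw [Real.zero_rpow (by linarith), mul_zero] at h
      exact h.mono_left nhdsWithin_le_nhds
    apply squeeze_zero_norm' _ t
    have hm : Icc (0 : ℝ) 1 ∈ 𝓝[Ici 0] 0 := Icc_mem_nhdsGE one_pos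
    filter_upwards [hm] with s hs
    rcases eq_or_lt_of_le hs.1 with h | h
    · rw [← h, H0, norm_zero]; exact mul_nonneg hC (Real.rpow_nonneg le_rfl _)
    · simp only [hH]
      have e : s ^ (β + N - 1) = s ^ (β - 1) * s ^ N := by
        rw [← Real.rpow_natCast, ← Real.rpow_add h]; ring_nf
      have h1 : Real.exp (-(x * s)) ≤ 1 := by rw [Real.exp_le_one_iff]; nlinarith
      have h2 : |1 - s| ≤ 1 := by rw [abs_le]; constructor <;> linarith [hs.1, hs.2]
      rw [norm_mul, Real.norm_of_nonneg (by positivity), Real.norm_eq_abs, abs_mul, e]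
      calc _ ≤ 1 * s ^ (β - 1) * (1 * (C * s ^ N)) := by gcongr; exact hR s h.le
        _ = _ := by ring
  have hI := integral_Ioi_of_hasDerivAt_of_tendsto hcont hd iH' hlim
  rw [H0, sub_zero] at hI
  have hI2 : ∫ s in Ioi (0 : ℝ), H' s = x * Jf p N (β + 1) x + (β - 1) * Jf p N (β - 1) x +
      (-(x + β + p) * Jf p N β x + N * cj p N * (x ^ (-(β + N - 1)) * Real.Gamma (β + N - 1))) := by
    have a1 : ∫ s in Ioi (0 : ℝ), (x * f (β + 1) s + (β - 1) * f (β - 1) s) =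
        x * Jf p N (β + 1) x + (β - 1) * Jf p N (β - 1) x := by
      rw [integral_add (i2.const_mul x) (i0.const_mul (β - 1)), integral_const_mul, integral_const_mul]; rfl
    have a2 : ∫ s in Ioi (0 : ℝ), (-(x + β + p) * f β s + N * cj p N * g s) =
        -(x + β + p) * Jf p N β x + N * cj p N * (x ^ (-(β + N - 1)) * Real.Gamma (β + N - 1)) := by
      rw [integral_add (i1.const_mul _) (ig.const_mul _), integral_const_mul, integral_const_mul,
        exp_rpow_val _ _ (by linarith) hx]; rfl
    rw [← a1, ← a2]
    exact integral_add ((i2.const_mul x).add (i0.const_mul (β - 1))) ((i1.const_mul _).add (ig.const_mul _))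
  rw [hI2] at hI
  linarith

lemma beta_wf (β q : ℝ) (hβ : 0 < β) (hq : 0 < q) :
    IntegrableOn (fun s : ℝ => s ^ (β - 1) * wf s ^ q) (Ioi 0) ∧
    ∫ s in Ioi (0 : ℝ), s ^ (β - 1) * wf s ^ q =
      Real.Gamma β * Real.Gamma (q + 1) / Real.Gamma (β + (q + 1)) := by
  have hc := Complex.betaIntegral_convergent (u := (β : ℂ)) (v := ((q + 1 : ℝ) : ℂ)) (by simpa using hβ)
    (by simp; linarith)
  have hb := ProbabilityTheory.beta_eq_betaIntegralReal β (q + 1) hβ (by linarith)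
  rw [intervalIntegrable_iff_integrableOn_Ioc_of_le zero_le_one] at hc
  have hz : ∀ s ∈ Ioi (0 : ℝ) \ Ioc 0 1, s ^ (β - 1) * wf s ^ q = 0 := by
    intro s hs
    have : 1 < s := by
      by_contra h; push Not at h; exact hs.2 ⟨hs.1, h⟩
    unfold wf
    rw [max_eq_right (by linarith), Real.zero_rpow hq.ne', mul_zero]
  have he : ∀ s ∈ Ioc (0 : ℝ) 1, (s : ℂ) ^ ((β : ℂ) - 1) * (1 - (s : ℂ)) ^ (((q + 1 : ℝ) : ℂ) - 1) =
      ((s ^ (β - 1) * wf s ^ q : ℝ) : ℂ) := by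
    intro s hs
    unfold wf
    rw [max_eq_left (by linarith [hs.2])]
    push_cast
    rw [Complex.ofReal_cpow hs.1.le, Complex.ofReal_cpow (by linarith [hs.2])]
    push_cast; ring_nf
  have hc2 : IntegrableOn (fun s : ℝ => s ^ (β - 1) * wf s ^ q) (Ioc 0 1) := by
    have : IntegrableOn (fun s : ℝ => ((s ^ (β - 1) * wf s ^ q : ℝ) : ℂ)) (Ioc 0 1) :=
      hc.congr_fun he measurableSet_Ioc
    exact this.re
  constructor
  · exact hc2.of_forall_sdiff_eq_zero measurableSet_Ioi hz
  · rw [setIntegral_eq_of_subset_of_forall_sdiff_eq_zero measurableSet_Ioi (fun s hs => hs.1) hz]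
    have h2 : Complex.betaIntegral β ((q + 1 : ℝ) : ℂ) = ((∫ s in Ioc (0 : ℝ) 1, s ^ (β - 1) * wf s ^ q : ℝ) : ℂ) := by
      unfold Complex.betaIntegral
      rw [intervalIntegral.integral_of_le zero_le_one, setIntegral_congr_fun measurableSet_Ioc he]
      exact integral_ofReal
    rw [h2, Complex.ofReal_re] at hb
    rw [← hb]; rfl

lemma Gamma_po (a : ℝ) (n : ℕ) (ha : ∀ k : ℕ, a ≠ -k) : Real.Gamma (a + n) = Real.Gamma a * po a n := by
  induction n with
  | zero => simp [po_zero]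
  | succ n ih =>
    have : a + n ≠ 0 := fun h => ha n (by linarith)
    push_cast
    rw [← add_assoc, Real.Gamma_add_one this, ih, po_succ]; ring

lemma base_int (p : ℝ) (hp : 0 < p) (β x : ℝ) (hβ : 0 < β) (hx : 0 < x) :
    ∫ s in Ioi (0 : ℝ), Real.exp (-(x * s)) * s ^ (β - 1) * wf s ^ p =
      Real.Gamma (p + 1) * Real.Gamma β * Real.exp (-x) * MM (p + 1) (β + (p + 1)) x := by
  set F : ℕ → ℝ → ℝ := fun n s => x ^ n / n.factorial * (s ^ (β - 1) * wf s ^ (p + n)) with hF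
  have hv : ∀ n : ℕ, IntegrableOn (F n) (Ioi 0) ∧ ∫ s in Ioi (0 : ℝ), F n s =
      Real.Gamma (p + 1) * Real.Gamma β * mt (p + 1) (β + (p + 1)) x n := by
    intro n
    have h := beta_wf β (p + n) hβ (by positivity)
    refine ⟨h.1.const_mul _, ?_⟩
    rw [integral_const_mul, h.2]
    have e1 : p + n + 1 = p + 1 + n := by ring
    have e2 : β + (p + 1 + n) = β + (p + 1) + n := by ring
    unfold mt invG
    rw [e1, e2, Gamma_po (p + 1) n (fun k hk => by have : (0 : ℝ) ≤ k := by positivity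
                                                   linarith)]
    field_simp
  have hnn : ∀ n, ∀ s ∈ Ioi (0 : ℝ), 0 ≤ F n s := by
    intro n s hs
    have := wf_nonneg s
    have hs0 : 0 < s := hs
    simp only [hF]; positivity
  have hS := mt_summable (p + 1) (β + (p + 1)) x
  have hsum := hasSum_integral_of_summable_integral_norm (μ := volume.restrict (Ioi 0)) (F := F)
    (fun n => (hv n).1) (by
      refine (hS.mul_left (Real.Gamma (p + 1) * Real.Gamma β)).congr (fun n => ?_)
      rw [← (hv n).2]
      refine (setIntegral_congr_fun measurableSet_Ioi (fun s hs => ?_))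
      exact (Real.norm_of_nonneg (hnn n s hs)).symm)
  have h1 : HasSum (fun n => ∫ s in Ioi (0 : ℝ), F n s)
      (Real.Gamma (p + 1) * Real.Gamma β * MM (p + 1) (β + (p + 1)) x) := by
    have := hS.hasSum.mul_left (Real.Gamma (p + 1) * Real.Gamma β)
    have e : (fun n => ∫ s in Ioi (0 : ℝ), F n s) = fun n => Real.Gamma (p + 1) * Real.Gamma β * mt (p + 1) (β + (p + 1)) x n := by
      ext n; exact (hv n).2
    rw [e]; exact this
  have h2 := hsum.unique h1
  have h3 : ∫ s in Ioi (0 : ℝ), Real.exp (-(x * s)) * s ^ (β - 1) * wf s ^ p =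
      ∫ s in Ioi (0 : ℝ), Real.exp (-x) * ∑' n, F n s := by
    refine setIntegral_congr_fun measurableSet_Ioi (fun s hs => ?_)
    have h4 : ∀ n : ℕ, wf s ^ (p + n) = wf s ^ p * wf s ^ n := by
      intro n
      rcases eq_or_lt_of_le (wf_nonneg s) with h | h
      · rw [← h, Real.zero_rpow (by positivity), Real.zero_rpow hp.ne', zero_mul]
      · rw [Real.rpow_add h, Real.rpow_natCast]
    have h5 : ∑' n, F n s = s ^ (β - 1) * wf s ^ p * Real.exp (x * wf s) := by
      rw [Real.exp_eq_exp_ℝ, NormedSpace.exp_eq_tsum_div, ← tsum_mul_left]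
      congr 1; ext n; simp only [hF]; rw [h4, mul_pow]; ring
    rw [h5]
    rcases lt_or_ge s 1 with h | h
    · have : wf s = 1 - s := by unfold wf; rw [max_eq_left (by linarith)]
      have e : Real.exp (-(x * s)) = Real.exp (-x) * Real.exp (x * wf s) := by
        rw [← Real.exp_add, this]; ring_nf
      rw [e]; ring
    · have : wf s = 0 := by unfold wf; rw [max_eq_right (by linarith)]
      rw [this, Real.zero_rpow hp.ne']; ring
  rw [h3, integral_const_mul, h2]; ring

noncomputable def Gf (p : ℝ) (N : ℕ) (β x : ℝ) : ℝ :=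
  Real.Gamma (p + 1) * Real.Gamma β * Real.exp (-x) * Ph (p + 1) (β + (p + 1)) N x

lemma A_pos (p : ℝ) (hp : 0 < p) (N : ℕ) (β x : ℝ) (hβ : 0 < β) (hx : 0 < x) :
    Gf p N β x = Jf p N β x := by
  have hnn : ∀ k : ℕ, β ≠ -k := fun k hk => by
    have : (0 : ℝ) ≤ k := by positivity
    linarith
  have hp1 : 0 < Real.Gamma (p + 1) := Real.Gamma_pos_of_pos (by linarith)
  have hi : ∀ j : ℕ, IntegrableOn (fun s : ℝ => cj p j * (Real.exp (-(x * s)) * s ^ (β + j - 1))) (Ioi 0) :=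
    fun j => (exp_rpow_int (β + j) x (by positivity) hx).const_mul _
  have hw : IntegrableOn (fun s : ℝ => Real.exp (-(x * s)) * s ^ (β - 1) * wf s ^ p) (Ioi 0) := by
    have := Jf_int p hp 0 β x hx (by simpa using hβ)
    simpa [Rr, PP] using this
  have h1 : Jf p N β x = (∫ s in Ioi (0 : ℝ), Real.exp (-(x * s)) * s ^ (β - 1) * wf s ^ p) -
      ∑ j ∈ Finset.range N, cj p j * (x ^ (-(β + j)) * Real.Gamma (β + j)) := by
    have e : ∀ j : ℕ, cj p j * (x ^ (-(β + j)) * Real.Gamma (β + j)) =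
        ∫ s in Ioi (0 : ℝ), cj p j * (Real.exp (-(x * s)) * s ^ (β + j - 1)) := by
      intro j; rw [integral_const_mul, exp_rpow_val _ _ (by positivity) hx]
    simp_rw [e]
    rw [← integral_finsetSum _ (fun j _ => hi j), ← integral_sub hw (integrable_finsetSum _ (fun j _ => hi j))]
    refine setIntegral_congr_fun measurableSet_Ioi (fun s hs => ?_)
    have hs0 : 0 < s := hs
    simp only [Rr, PP]
    rw [mul_sub, Finset.mul_sum]
    congr 1
    apply Finset.sum_congr rfl
    intro j _
    have : s ^ (β + j - 1) = s ^ (β - 1) * s ^ j := by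
      rw [← Real.rpow_natCast, ← Real.rpow_add hs0]; ring_nf
    rw [this]; ring
  rw [h1, base_int p hp β x hβ hx]
  unfold Gf Ph
  rw [mul_sub]
  congr 1
  unfold EE invG
  have e1 : p + 1 - (β + (p + 1)) = -β := by ring
  have e2 : β + (p + 1) - (p + 1) = β := by ring
  have e3 : 1 - (p + 1) = -p := by ring
  have e4 : Real.exp (-x) * Real.exp x = 1 := by rw [← Real.exp_add]; simp
  rw [e1, e2, e3, Finset.mul_sum, Finset.mul_sum]
  apply Finset.sum_congr rfl
  intro j _
  have e5 : x ^ (-(β + j)) = x ^ (-β) / x ^ j := by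
    rw [neg_add, Real.rpow_add hx, Real.rpow_neg hx.le j, Real.rpow_natCast]; rfl
  rw [Gamma_po β j hnn, e5]
  unfold cj
  field_simp
  linear_combination po β j * po (-p) j * e4

lemma Gf_rec (p : ℝ) (hp : 0 < p) (N : ℕ) (hN : 1 ≤ N) (β x : ℝ) (hx : 0 < x)
    (hβ : ∀ n : ℤ, β ≠ n) :
    (β - 1) * Gf p N (β - 1) x = (x + β + p) * Gf p N β x - x * Gf p N (β + 1) x -
      N * cj p N * (x ^ (-(β + N - 1)) * Real.Gamma (β + N - 1)) := by
  obtain ⟨M, rfl⟩ := Nat.exists_eq_add_of_le hN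
  rw [add_comm 1 M]
  have hp1 : 0 < Real.Gamma (p + 1) := Real.Gamma_pos_of_pos (by linarith)
  have h := Ph_b (p + 1) (β + (p + 1)) (M + 1) x hx
  have st : ∀ b, Ph (p + 1) b (M + 1 + 1) x = Ph (p + 1) b (M + 1) x -
      invG (p + 1) * x ^ (p + 1 - b) * Real.exp x * (po (b - (p + 1)) (M + 1) * cj p (M + 1) / x ^ (M + 1)) := by
    intro b
    unfold Ph EE
    rw [Finset.sum_range_succ _ (M + 1)]
    have e3 : 1 - (p + 1) = -p := by ring
    rw [e3]; unfold cj; field_simp; ring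
  rw [st, st] at h
  have f1 : p + 1 - (β + (p + 1)) = -β := by ring
  have f2 : β + (p + 1) - (p + 1) = β := by ring
  have f3 : p + 1 - (β + (p + 1) - 1) = -β + 1 := by ring
  have f4 : β + (p + 1) - 1 - (p + 1) = β - 1 := by ring
  rw [f1, f2, f3, f4, Real.rpow_add_one hx.ne'] at h
  have hd := po_diff (β - 1) M
  rw [sub_add_cancel] at hd
  have g1 : Real.Gamma (β + 1) = β * Real.Gamma β := Real.Gamma_add_one (by simpa using hβ 0)
  have g2 : Real.Gamma β = (β - 1) * Real.Gamma (β - 1) := by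
    have := Real.Gamma_add_one (s := β - 1) (sub_ne_zero.2 (by simpa using hβ 1))
    rwa [sub_add_cancel] at this
  have g3 : Real.Gamma (β + (M + 1 : ℕ) - 1) = Real.Gamma β * po β M := by
    rw [← Gamma_po β M (fun k hk => hβ (-k) (by push_cast; exact hk))]; push_cast; ring_nf
  have g4 : x ^ (-(β + (M + 1 : ℕ) - 1)) = x ^ (-β) * x / x ^ (M + 1) := by
    rw [show -(β + ((M + 1 : ℕ) : ℝ) - 1) = -β + 1 - ((M + 1 : ℕ) : ℝ) by ring, Real.rpow_sub hx, Real.rpow_natCast, Real.rpow_add_one hx.ne']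
  have e4 : Real.exp (-x) * Real.exp x = 1 := by rw [← Real.exp_add]; simp
  have e5 : Real.Gamma (p + 1) * invG (p + 1) = 1 := mul_inv_cancel₀ hp1.ne'
  rw [g3, g4]
  unfold Gf
  have k1 : β + 1 + (p + 1) = β + (p + 1) + 1 := by ring
  have k2 : β - 1 + (p + 1) = β + (p + 1) - 1 := by ring
  rw [k1, k2, g1]
  have hG : (β - 1) * (Real.Gamma (p + 1) * Real.Gamma (β - 1) * Real.exp (-x) *
      Ph (p + 1) (β + (p + 1) - 1) (M + 1) x) = Real.Gamma (p + 1) * Real.Gamma β * Real.exp (-x) *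
      Ph (p + 1) (β + (p + 1) - 1) (M + 1) x := by rw [g2]; ring
  rw [hG]
  have hx' : x ^ (M + 1) ≠ 0 := by positivity
  set Q := cj p (M + 1) / x ^ (M + 1) with hQ
  have q1 : ∀ y, y * cj p (M + 1) / x ^ (M + 1) = y * Q := fun y => by rw [hQ]; ring
  rw [q1, q1] at h
  have q2 : ((M + 1 : ℕ) : ℝ) * cj p (M + 1) * (x ^ (-β) * x / x ^ (M + 1) * (Real.Gamma β * po β M)) =
    (M + 1) * po β M * (Q * x ^ (-β) * x * Real.Gamma β) := by rw [hQ]; push_cast; ring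
  rw [q2, ← hd]
  linear_combination (Real.Gamma (p + 1) * Real.Gamma β * Real.exp (-x)) * h +
    (po β (M + 1) - po (β - 1) (M + 1)) * (Q * x ^ (-β) * x * Real.Gamma β) * (
      -Real.Gamma (p + 1) * invG (p + 1) * e4 - e5)

lemma A_all (p : ℝ) (hp : 0 < p) (N : ℕ) (x : ℝ) (hx : 0 < x) (n : ℕ) :
    ∀ β : ℝ, (∀ k : ℤ, β ≠ k) → -n < β → 0 < β + N → Gf p N β x = Jf p N β x := by
  induction n with
  | zero => intro β _ h _; exact A_pos p hp N β x (by simpa using h) hx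
  | succ n ih =>
    intro β hβ h1 h2
    rcases lt_or_ge 0 β with h | h
    · exact A_pos p hp N β x h hx
    · have hN : 1 ≤ N := by
        by_contra hh
        have : N = 0 := by omega
        rw [this] at h2; simp at h2; linarith
      push_cast at h1
      have s1 : ∀ k : ℤ, β + 1 ≠ k := fun k hk => hβ (k - 1) (by push_cast; linarith)
      have s2 : ∀ k : ℤ, β + 1 + 1 ≠ k := fun k hk => hβ (k - 2) (by push_cast; linarith)
      have r1 := Gf_rec p hp N hN (β + 1) x hx s1
      have r2 := Jf_rec p hp N hN (β + 1) x hx (by linarith) (by simpa using s1 1)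
      rw [ih (β + 1) s1 (by linarith) (by linarith), ih (β + 1 + 1) s2 (by linarith) (by linarith), ← r2] at r1
      rw [add_sub_cancel_right] at r1
      exact mul_left_cancel₀ (by simpa using hβ 0) r1

end KSL

end

section
open MeasureTheory Set Topology

namespace KSL

lemma Fub (p : ℝ) (hp : 0 < p) (N : ℕ) (μ x : ℝ) (hμ : 0 < μ) (hx : 0 < x) (hN : 0 < 1 - μ + N) :
    Real.Gamma μ * Jf p N (1 - μ) x = (∫ v in Ioi (0 : ℝ), v ^ (μ - 1) * Jf p N 1 (x + v)) ∧
    IntegrableOn (fun v : ℝ => v ^ (μ - 1) * Jf p N 1 (x + v)) (Ioi 0) := by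
  set F : ℝ → ℝ → ℝ := fun s v => Real.exp (-(x * s)) * Rr p N s * (Real.exp (-(s * v)) * v ^ (μ - 1)) with hF
  have hm : Measurable (Function.uncurry F) := by
    have h1 : Measurable (Rr p N) := (Rr_cont p hp.le N).measurable
    simp only [hF, Function.uncurry_def]
    fun_prop
  have i1 := Jf_int p hp N (1 - μ) x hx hN
  have hI : Integrable (Function.uncurry F) ((volume.restrict (Ioi 0)).prod (volume.restrict (Ioi 0))) := by
    rw [integrable_prod_iff hm.aestronglyMeasurable]
    constructor
    · filter_upwards [ae_restrict_mem measurableSet_Ioi] with s hs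
      exact (exp_rpow_int μ s hμ hs).const_mul (Real.exp (-(x * s)) * Rr p N s)
    · refine (i1.norm.const_mul (Real.Gamma μ)).congr ?_
      filter_upwards [ae_restrict_mem measurableSet_Ioi] with s hs
      have hs0 : 0 < s := hs
      have e : ∀ v ∈ Ioi (0 : ℝ), ‖Function.uncurry F (s, v)‖ =
          Real.exp (-(x * s)) * |Rr p N s| * (Real.exp (-(s * v)) * v ^ (μ - 1)) := by
        intro v hv
        have hv0 : 0 < v := hv
        simp only [Function.uncurry, hF]
        rw [norm_mul, norm_mul, Real.norm_of_nonneg (Real.exp_pos _).le, Real.norm_eq_abs,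
          Real.norm_of_nonneg (by positivity)]
      rw [setIntegral_congr_fun measurableSet_Ioi e, integral_const_mul, exp_rpow_val μ s hμ hs0,
        norm_mul, Real.norm_of_nonneg (by positivity), Real.norm_eq_abs]
      rw [show 1 - μ - 1 = -μ by ring]; ring
  have h := integral_integral_swap hI
  have l : ∫ s in Ioi (0 : ℝ), ∫ v in Ioi (0 : ℝ), F s v = Real.Gamma μ * Jf p N (1 - μ) x := by
    unfold Jf
    rw [← integral_const_mul]
    refine setIntegral_congr_fun measurableSet_Ioi (fun s hs => ?_)
    simp only [hF]
    rw [integral_const_mul, exp_rpow_val μ s hμ hs, show 1 - μ - 1 = -μ by ring]; ring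
  have r0 : ∀ v ∈ Ioi (0 : ℝ), ∫ s in Ioi (0 : ℝ), F s v = v ^ (μ - 1) * Jf p N 1 (x + v) := by
    intro v hv
    unfold Jf
    rw [← integral_const_mul]
    refine setIntegral_congr_fun measurableSet_Ioi (fun s hs => ?_)
    have e : Real.exp (-((x + v) * s)) = Real.exp (-(x * s)) * Real.exp (-(s * v)) := by
      rw [← Real.exp_add]; ring_nf
    simp only [hF, sub_self, Real.rpow_zero]
    rw [e]; ring
  have r : ∫ v in Ioi (0 : ℝ), ∫ s in Ioi (0 : ℝ), F s v = ∫ v in Ioi (0 : ℝ), v ^ (μ - 1) * Jf p N 1 (x + v) :=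
    setIntegral_congr_fun measurableSet_Ioi r0
  have hI2 : IntegrableOn (fun v => ∫ s in Ioi (0 : ℝ), F s v) (Ioi 0) := hI.integral_prod_right
  exact ⟨by rw [← l, ← r]; exact h, hI2.congr_fun r0 measurableSet_Ioi⟩

lemma Sr_rec (q : ℝ) (hq : ∀ n : ℤ, q ≠ n) (y : ℝ) : q * Sr q y = Real.exp y - y * Sr (q + 1) y := by
  have := Sp_rec q hq y
  have e : Sp (q + 1) (y : ℂ) = ((Sr (q + 1) y : ℝ) : ℂ) := Sp_ofReal (q + 1) y
  rw [Sp_ofReal] at this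
  rw [e] at this
  exact_mod_cast this

lemma MM_one (a : ℝ) (ha : ∀ n : ℤ, a ≠ n) (y : ℝ) : MM a (a + 1) y = invG a * Sr a y := by
  unfold MM Sr
  rw [← tsum_mul_left]
  congr 1; ext n
  have h : (n : ℝ) + a ≠ 0 := fun h => ha (-n) (by push_cast; linarith)
  unfold mt
  have e : a + 1 + n = a + n + 1 := by ring
  rw [invG_po a n, invG_rec (a + n), e]; field_simp; ring

lemma m_iter (a : ℝ) (ha : ∀ n : ℤ, a ≠ n) (y : ℝ) (hy : 0 < y) (N : ℕ) :
    y ^ a * Sr a y - Real.exp y * ∑ j ∈ Finset.range N, po (1 - a) j * y ^ (a - 1 - j) =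
      po (1 - a) N * (y ^ (a - N) * Sr (a - N) y) := by
  induction N with
  | zero => simp [po_zero]
  | succ N ih =>
    rw [Finset.sum_range_succ, mul_add, ← sub_sub, ih, po_succ]
    have hq : ∀ n : ℤ, a - N - 1 ≠ n := fun n h => ha (n + N + 1) (by push_cast; linarith)
    have h := Sr_rec (a - N - 1) hq y
    have e1 : y ^ (a - N) = y ^ (a - N - 1) * y := by
      rw [← Real.rpow_add_one hy.ne']; ring_nf
    have e2 : a - 1 - N = a - N - 1 := by ring
    have e3 : a - (N + 1 : ℕ) = a - N - 1 := by push_cast; ring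
    rw [sub_add_cancel] at h
    rw [e1, e2, e3]
    linear_combination po (1 - a) N * y ^ (a - N - 1) * h

lemma Ph_one (a : ℝ) (ha : ∀ n : ℤ, a ≠ n) (y : ℝ) (hy : 0 < y) (N : ℕ) (hN : a < N) :
    Ph a (a + 1) N y = y ^ (-a) * (Real.cos (Real.pi * a) + Real.sin (Real.pi * a) / Real.pi *
      Real.Gamma (N + 1 - a) * Real.exp y * y ^ (1 - (N + 1 - a)) * Ai y (N + 1 - a)) := by
  set s : ℝ := N + 1 - a with hs
  have hsi : ∀ n : ℤ, s ≠ n := fun n h => ha (N + 1 - n) (by push_cast; linarith)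
  have hv := (vert_real s (by linarith) hsi y hy).1
  have hm := m_iter a ha y hy N
  have e0 : a - N = 1 - s := by rw [hs]; ring
  rw [e0, hv] at hm
  have hya : 0 < y ^ a := Real.rpow_pos_of_pos hy _
  have hE : EE a (a + 1) N y = invG a * y ^ (-a) * (Real.exp y * ∑ j ∈ Finset.range N, po (1 - a) j * y ^ (a - 1 - j)) := by
    unfold EE
    rw [Finset.mul_sum, Finset.mul_sum, Finset.mul_sum]
    apply Finset.sum_congr rfl
    intro j _
    have h1 : po (a + 1 - a) j = j.factorial := by
      have : a + 1 - a = 1 := by ring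
      rw [this]; unfold po; exact ascPochhammer_eval_one ℝ j
    have h2 : y ^ (-a) * y ^ (a - 1 - j) = y ^ (a - (a + 1)) / y ^ j := by
      rw [← Real.rpow_natCast y j, ← Real.rpow_add hy, ← Real.rpow_sub hy]; ring_nf
    rw [h1]
    have h3 : (j.factorial : ℝ) ≠ 0 := by positivity
    have h4 : (j.factorial : ℝ) * po (1 - a) j / (j.factorial * y ^ j) = po (1 - a) j / y ^ j := by
      field_simp
    rw [h4]
    linear_combination -(invG a * Real.exp y * po (1 - a) j) * h2
  have hP : Ph a (a + 1) N y = invG a * y ^ (-a) * (po (1 - a) N *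
      (Real.Gamma (1 - s) * Real.cos (Real.pi * (1 - s)) + Real.exp y * y ^ (1 - s) * Ai y s)) := by
    unfold Ph
    rw [MM_one a ha, hE, ← hm]
    have : y ^ (-a) * y ^ a = 1 := by rw [← Real.rpow_add hy]; simp
    linear_combination -(invG a * Sr a y) * this
  have hsin : Real.sin (Real.pi * a) ≠ 0 := by
    intro h
    rw [Real.sin_eq_zero_iff] at h
    obtain ⟨n, hn⟩ := h
    apply ha n
    have := Real.pi_pos.ne'
    rw [mul_comm] at hn
    exact (mul_left_cancel₀ this hn).symm
  have g1 := Real.Gamma_mul_Gamma_one_sub a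
  have g2 := Real.Gamma_mul_Gamma_one_sub s
  have g3 : Real.Gamma s = Real.Gamma (1 - a) * po (1 - a) N := by
    rw [← Gamma_po (1 - a) N (fun k hk => ha (k + 1) (by push_cast; linarith)), hs]; ring_nf
  have t1 : Real.pi * (1 - s) = Real.pi * a - N * Real.pi := by rw [hs]; ring
  have t2 : Real.pi * s = Real.pi - (Real.pi * a - N * Real.pi) := by rw [hs]; ring
  rw [t2, Real.sin_pi_sub, Real.sin_sub_nat_mul_pi] at g2
  rw [t1, Real.cos_sub_nat_mul_pi] at hP
  have hpi := Real.pi_pos.ne'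
  have hGa : Real.Gamma a ≠ 0 := by
    intro h; rw [Real.Gamma_eq_zero_iff] at h; obtain ⟨m, hm⟩ := h; exact ha (-m) (by push_cast; exact hm)
  generalize Real.sin (Real.pi * a) = S at *
  generalize Real.cos (Real.pi * a) = Cc at *
  have hk : invG a * po (1 - a) N = S / Real.pi * Real.Gamma s := by
    unfold invG; rw [g3]
    rw [eq_div_iff hsin] at g1
    field_simp
    linear_combination -po (1 - a) N * g1
  have h1 : ((-1 : ℝ) ^ N) * (-1) ^ N = 1 := by rw [← mul_pow]; simp
  have hn : ((-1 : ℝ) ^ N) ≠ 0 := by positivity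
  have g2' : Real.Gamma s * Real.Gamma (1 - s) * (-1) ^ N * S = Real.pi := by
    rw [g2]; field_simp
  have hk2 : invG a * po (1 - a) N * (Real.Gamma (1 - s) * ((-1) ^ N * Cc)) =
      Cc := by
    rw [hk]; field_simp
    linear_combination Cc * g2'
  rw [hP]
  linear_combination y ^ (-a) * hk2 + y ^ (-a) * Real.exp y * y ^ (1 - s) * Ai y s * hk

end KSL

end

section
open MeasureTheory Set Topology

namespace KSL

lemma pw1 (x v n : ℝ) (M : ℕ) (hM : 1 ≤ M) (hx : 2 * M ≤ x) (hv : 0 ≤ v) (hn : x / 2 ≤ n) :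
    (1 + v / x) ^ (-n) ≤ (2 * M) ^ M / (1 + v) ^ M := by
  have hM' : (1 : ℝ) ≤ M := by exact_mod_cast hM
  have hx0 : 0 < x := by linarith
  have ht : 0 ≤ v / x := by positivity
  have h1 : (1 + v / x) ^ (x / 2) ≤ (1 + v / x) ^ n :=
    Real.rpow_le_rpow_of_exponent_le (by linarith) hn
  have h2 : (1 + v / x) ^ (x / 2) = ((1 + v / x) ^ (x / (2 * M))) ^ M := by
    rw [← Real.rpow_natCast, ← Real.rpow_mul (by positivity)]; congr 1; field_simp
  have h3 : 1 + v / (2 * M) ≤ (1 + v / x) ^ (x / (2 * M)) := by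
    have := one_add_mul_self_le_rpow_one_add (s := v / x) (by linarith) (p := x / (2 * M))
      (by rw [le_div_iff₀ (by positivity)]; linarith)
    calc _ = 1 + x / (2 * M) * (v / x) := by field_simp
      _ ≤ _ := this
  have h4 : (1 + v) / (2 * M) ≤ 1 + v / (2 * M) := by
    rw [add_div]; gcongr; rw [div_le_one (by positivity)]; linarith
  have h5 : ((1 + v) / (2 * M)) ^ M ≤ (1 + v / x) ^ n := by
    calc _ ≤ ((1 + v / x) ^ (x / (2 * M))) ^ M := by
          apply pow_le_pow_left₀ (by positivity) (h4.trans h3)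
      _ ≤ _ := by rw [← h2]; exact h1
  rw [Real.rpow_neg (by positivity)]
  calc _ ≤ (((1 + v) / (2 * M)) ^ M)⁻¹ := by gcongr
    _ = _ := by rw [div_pow, inv_div]

lemma pw3 (v : ℝ) (M : ℕ) (hM : 1 ≤ M) (hv : 0 ≤ v) :
    Real.exp (-v) ≤ (2 * M) ^ M / (1 + v) ^ M := by
  have hM' : (1 : ℝ) ≤ M := by exact_mod_cast hM
  refine le_trans ?_ (pw1 (2 * M) v (2 * M) M hM le_rfl hv (by linarith))
  rw [Real.rpow_neg (by positivity), Real.exp_neg]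
  gcongr
  have h : 1 + v / (2 * M) ≤ Real.exp (v / (2 * M)) := by linarith [Real.add_one_le_exp (v / (2 * (M : ℝ)))]
  calc _ ≤ (Real.exp (v / (2 * M))) ^ (2 * (M : ℝ)) := by gcongr
    _ = _ := by rw [← Real.exp_mul]; congr 1; field_simp

lemma exp_diff (A v : ℝ) : |Real.exp (-A) - Real.exp (-v)| ≤ |A - v| * (Real.exp (-A) + Real.exp (-v)) := by
  have h1 : ∀ A v : ℝ, Real.exp (-A) - Real.exp (-v) ≤ |A - v| * (Real.exp (-A) + Real.exp (-v)) := by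
    intro A v
    have e : Real.exp (-v) = Real.exp (-A) * Real.exp (A - v) := by rw [← Real.exp_add]; ring_nf
    have h := Real.add_one_le_exp (A - v)
    have h2 : v - A ≤ |A - v| := by rw [abs_sub_comm]; exact le_abs_self _
    have p1 := Real.exp_pos (-A)
    have p2 := Real.exp_pos (-v)
    calc _ ≤ Real.exp (-A) * (v - A) := by rw [e]; nlinarith
      _ ≤ Real.exp (-A) * |A - v| := by gcongr
      _ ≤ _ := by nlinarith [abs_nonneg (A - v)]
  rw [abs_le]
  constructor
  · have := h1 v A; rw [abs_sub_comm] at this; linarith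
  · exact h1 A v

lemma pw2 (x v n : ℝ) (hx : 0 < x) (hv : 0 ≤ v) :
    |(1 + v / x) ^ (-n) - Real.exp (-v)| ≤
      ((v ^ 2 + |n - x| * v) / x) * ((1 + v / x) ^ (-n) + Real.exp (-v)) := by
  have ht : 0 ≤ v / x := by positivity
  set t := v / x with htd
  have hvt : v = x * t := by rw [htd]; field_simp
  have e : (1 + t) ^ (-n) = Real.exp (-(n * Real.log (1 + t))) := by
    rw [Real.rpow_def_of_pos (by linarith)]; congr 1; ring
  rw [e]
  refine (exp_diff _ _).trans ?_
  have l1 : Real.log (1 + t) ≤ t := by linarith [Real.log_le_sub_one_of_pos (by linarith : 0 < 1 + t)]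
  have l2 : t - t ^ 2 ≤ Real.log (1 + t) := by
    have := Real.one_sub_inv_le_log_of_pos (by linarith : 0 < 1 + t)
    refine le_trans ?_ this
    have h : (1 + t)⁻¹ ≤ 1 - t + t ^ 2 := by
      rw [inv_le_iff_one_le_mul₀ (by linarith)]; nlinarith [pow_nonneg ht 3]
    linarith
  have l0 : 0 ≤ Real.log (1 + t) := Real.log_nonneg (by linarith)
  gcongr
  have : (v ^ 2 + |n - x| * v) / x = x * t ^ 2 + |n - x| * t := by rw [hvt]; field_simp
  rw [this]
  calc |n * Real.log (1 + t) - v| = |(n - x) * Real.log (1 + t) + x * (Real.log (1 + t) - t)| := by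
        rw [hvt]; ring_nf
    _ ≤ |(n - x) * Real.log (1 + t)| + |x * (Real.log (1 + t) - t)| := abs_add_le _ _
    _ ≤ |n - x| * t + x * t ^ 2 := by
        rw [abs_mul, abs_mul, abs_of_pos hx, abs_of_nonneg l0]
        gcongr
        rw [abs_le]; constructor <;> linarith [sq_nonneg t]
    _ = _ := by ring

lemma pw4 (x v a : ℝ) (hx : 0 < x) (hv : 0 ≤ v) (ha : 0 ≤ a) : |(1 + v / x) ^ (-a) - 1| ≤ a * v / x := by
  have ht : 0 ≤ v / x := by positivity
  have e : (1 + v / x) ^ (-a) = Real.exp (-(a * Real.log (1 + v / x))) := by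
    rw [Real.rpow_def_of_pos (by linarith)]; congr 1; ring
  have l1 : Real.log (1 + v / x) ≤ v / x := by
    linarith [Real.log_le_sub_one_of_pos (by linarith : 0 < 1 + v / x)]
  have l0 : 0 ≤ Real.log (1 + v / x) := Real.log_nonneg (by linarith)
  have h1 : (1 + v / x) ^ (-a) ≤ 1 := Real.rpow_le_one_of_one_le_of_nonpos (by linarith) (by linarith)
  rw [abs_of_nonpos (by linarith), e]
  have := Real.add_one_le_exp (-(a * Real.log (1 + v / x)))
  have h2 : a * Real.log (1 + v / x) ≤ a * (v / x) := by gcongr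
  rw [mul_div_assoc]; linarith

lemma pwE (x v n K : ℝ) (M : ℕ) (hM : 1 ≤ M) (hx : 2 * M ≤ x) (hv : 0 ≤ v) (hn : x / 2 ≤ n)
    (hK : |n - x| ≤ K) :
    |(1 + v / x) ^ (-n) - Real.exp (-v)| ≤
      2 * (1 + K) * (2 * M) ^ M / x * ((1 + v) ^ 2 / (1 + v) ^ M) := by
  have hM' : (1 : ℝ) ≤ M := by exact_mod_cast hM
  have hx0 : 0 < x := by linarith
  have hK0 : 0 ≤ K := (abs_nonneg _).trans hK
  refine (pw2 x v n hx0 hv).trans ?_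
  have h1 := pw1 x v n M hM hx hv hn
  have h2 := pw3 v M hM hv
  have h3 : v ^ 2 + |n - x| * v ≤ (1 + K) * (1 + v) ^ 2 := by
    have : |n - x| * v ≤ K * v := by gcongr
    nlinarith [mul_nonneg hK0 hv, mul_nonneg hK0 (sq_nonneg v)]
  calc _ ≤ (((1 + K) * (1 + v) ^ 2) / x) * ((2 * M) ^ M / (1 + v) ^ M + (2 * M) ^ M / (1 + v) ^ M) := by
        gcongr
    _ = _ := by ring

lemma wt_int (μ : ℝ) (hμ : 0 < μ) (m : ℕ) (hm : μ + 1 ≤ m) :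
    IntegrableOn (fun v : ℝ => v ^ (μ - 1) * (1 / (1 + v) ^ m)) (Ioi 0) := by
  have hmeas : ∀ s : Set ℝ, AEStronglyMeasurable (fun v : ℝ => v ^ (μ - 1) * (1 / (1 + v) ^ m)) (volume.restrict s) := by
    intro s
    have : Measurable (fun v : ℝ => v ^ (μ - 1) * (1 / (1 + v) ^ m)) := by fun_prop
    exact this.aestronglyMeasurable
  rw [← Ioc_union_Ioi_eq_Ioi zero_le_one]
  apply IntegrableOn.union
  · have h := (intervalIntegral.intervalIntegrable_rpow' (a := 0) (b := 1) (r := μ - 1) (by linarith))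
    rw [intervalIntegrable_iff_integrableOn_Ioc_of_le zero_le_one] at h
    refine Integrable.mono' h (hmeas _) ?_
    filter_upwards [ae_restrict_mem measurableSet_Ioc] with v hv
    have hv0 := hv.1
    rw [Real.norm_of_nonneg (by positivity)]
    apply mul_le_of_le_one_right (by positivity)
    rw [div_le_one (by positivity)]
    exact one_le_pow₀ (by linarith)
  · have h := integrableOn_Ioi_rpow_of_lt (a := -2) (c := 1) (by norm_num) one_pos
    refine Integrable.mono' h (hmeas _) ?_
    filter_upwards [ae_restrict_mem measurableSet_Ioi] with v hv
    have hv1 : 1 < v := hv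
    have hv0 : 0 < v := by linarith
    rw [Real.norm_of_nonneg (by positivity)]
    have h1 : v ^ (μ + 1) ≤ (1 + v) ^ m := by
      calc v ^ (μ + 1) ≤ v ^ (m : ℝ) := Real.rpow_le_rpow_of_exponent_le hv1.le hm
        _ = v ^ m := Real.rpow_natCast _ _
        _ ≤ _ := by gcongr; linarith
    calc _ ≤ v ^ (μ - 1) * (1 / v ^ (μ + 1)) := by gcongr
      _ = v ^ (-2 : ℝ) := by
        rw [one_div, ← Real.rpow_neg hv0.le, ← Real.rpow_add hv0]; ring_nf

end KSL

end

section
open MeasureTheory Set Topology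
namespace KSL

lemma Wid (a : ℝ) (ha : ∀ n : ℤ, a ≠ n) (x v : ℝ) (hx : 0 < x) (hv : 0 ≤ v) (N : ℕ) (hN : a < N) :
    x ^ a * (Real.exp (-v) * Ph a (a + 1) N (x + v)) =
      Real.cos (Real.pi * a) * (Real.exp (-v) * (1 + v / x) ^ (-a)) +
      Real.sin (Real.pi * a) / Real.pi *
        ((Real.Gamma (N + 1 - a) * Real.exp x * x ^ (-(N + 1 - a : ℝ))) * (1 + v / x) ^ (-(N + 1 : ℝ)) *
          ((x + v) * Ai (x + v) (N + 1 - a))) := by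
  have hy : 0 < x + v := by linarith
  have ht : 0 < 1 + v / x := by positivity
  rw [Ph_one a ha (x + v) hy N hN]
  have e1 : x + v = x * (1 + v / x) := by field_simp
  have e2 : (x + v) ^ (-a) = x ^ (-a) * (1 + v / x) ^ (-a) := by
    rw [e1, Real.mul_rpow hx.le ht.le]
  have e3 : (x + v) ^ (1 - (N + 1 - a) : ℝ) =
      (x + v) * (x ^ (-(N + 1 - a : ℝ)) * (1 + v / x) ^ (-(N + 1 - a : ℝ))) := by
    rw [← Real.mul_rpow hx.le ht.le, ← e1, sub_eq_add_neg, Real.rpow_add hy, Real.rpow_one]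
  have e4 : (1 + v / x) ^ (-(N + 1 : ℝ)) = (1 + v / x) ^ (-a) * (1 + v / x) ^ (-(N + 1 - a : ℝ)) := by
    rw [← Real.rpow_add ht]; ring_nf
  have e5 : x ^ a * x ^ (-a) = 1 := by rw [← Real.rpow_add hx]; simp
  have e6 : Real.exp (-v) * Real.exp (x + v) = Real.exp x := by rw [← Real.exp_add]; ring_nf
  rw [e2, e3, e4, ← e6]
  generalize x ^ a = A at *
  generalize x ^ (-a) = B at *
  generalize Ai (x + v) (N + 1 - a) = G
  generalize (1 + v / x) ^ (-a) = H at *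
  generalize (1 + v / x) ^ (-(N + 1 - a : ℝ)) = H2 at *
  generalize x ^ (-(N + 1 - a : ℝ)) = H3 at *
  generalize Real.cos (Real.pi * a) = c
  generalize Real.sin (Real.pi * a) = S
  generalize Real.Gamma (N + 1 - a) = Ga
  linear_combination (Real.exp (-v) * H * (c + S / Real.pi * Ga * Real.exp (x + v) * ((x + v) * (H3 * H2)) * G)) * e5

lemma ptw (a : ℝ) (ha0 : 0 < a) (ha : ∀ n : ℤ, a ≠ n) (K : ℝ) (M : ℕ) (hM : 1 ≤ M) :
    ∃ C X : ℝ, 0 ≤ C ∧ 1 ≤ X ∧ ∀ x, X ≤ x → ∀ N : ℕ, |(N : ℝ) - x| ≤ K → a < N ∧ ∀ v, 0 ≤ v →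
      |x ^ a * (Real.exp (-v) * Ph a (a + 1) N (x + v)) - Real.exp (-v) *
        (Real.cos (Real.pi * a) + 2 * Real.sin (Real.pi * a) / Real.sqrt (2 * Real.pi * x) *
          (x + v - (N + 1 - a) + 2 / 3))| ≤ C / x * ((1 + v) ^ 4 / (1 + v) ^ M) := by
  by_cases hK : 0 ≤ K
  swap
  · exact ⟨0, 1, le_rfl, le_rfl, fun x hx N hN => absurd ((abs_nonneg _).trans hN) hK⟩
  obtain ⟨C, X, hC, hX, hg⟩ := gam_est (K + a + 1)
  set P : ℝ := 1 + (K + a + 1) with hP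
  set Q : ℝ := (2 * (M : ℝ)) ^ M with hQ
  have hQ0 : 0 < Q := by have : (1 : ℝ) ≤ M := by exact_mod_cast hM
                         positivity
  have hP1 : 1 ≤ P := by linarith
  have hpi := Real.pi_gt_three
  refine ⟨Q * (a + (2 * Real.pi + C) * 26000 * P ^ 4 + 2 * (2 * Real.pi + C) * P ^ 2 + C * P),
    max X (max (2 * M) (40 + 2 * (K + a + 1))), by positivity, hX.trans (le_max_left _ _), fun x hx N hN => ?_⟩
  have hx1 : X ≤ x := (le_max_left _ _).trans hx
  have hx2 : 2 * M ≤ x := ((le_max_left _ _).trans (le_max_right _ _)).trans hx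
  have hx3 : 40 + 2 * (K + a + 1) ≤ x := ((le_max_right _ _).trans (le_max_right _ _)).trans hx
  have hx0 : 0 < x := by linarith
  have hN' := abs_le.1 hN
  have haN : a < N := by linarith
  refine ⟨haN, fun v hv => ?_⟩
  set s : ℝ := N + 1 - a with hs
  have hsi : ∀ n : ℤ, s ≠ n := fun n h => ha (N + 1 - n) (by push_cast; linarith)
  have hxs : |x - s| ≤ K + a + 1 := by rw [abs_le]; constructor <;> linarith
  have hsx : x / 2 ≤ s := by linarith
  have hgg := hg x s hx1 hxs hsi
  set g := Real.Gamma s * Real.exp x * x ^ (-s) with hgdef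
  set γ := 2 * Real.pi / Real.sqrt (2 * Real.pi * x) with hγ
  have hγ0 : 0 ≤ γ := by positivity
  have hγ1 : γ ≤ 2 * Real.pi := by
    apply div_le_self (by positivity)
    rw [Real.one_le_sqrt]; nlinarith
  have hgb : |g| ≤ 2 * Real.pi + C := by
    have h1 : |g| ≤ |γ| + |g - γ| := by
      have := abs_add_le γ (g - γ); simpa using this
    rw [abs_of_nonneg hγ0] at h1
    have : C / x ≤ C := div_le_self hC.le (by linarith)
    linarith
  set u : ℝ := 1 + v with hu
  have hu1 : 1 ≤ u := by linarith
  set h := (x + v) * Ai (x + v) s with hh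
  set h0 := x + v - s + 2 / 3 with hh0
  have hxvs : 1 + |x + v - s| ≤ P * u := by
    have : |x + v - s| ≤ |x - s| + v := by
      have := abs_add_le (x - s) v
      rw [abs_of_nonneg hv] at this
      rw [show x + v - s = x - s + v by ring]; exact this
    nlinarith
  have hdh : |h - h0| ≤ 26000 * P ^ 4 * u ^ 4 / x := by
    refine (yAi_est (x + v) s (by linarith) (by linarith)).trans ?_
    calc 13000 * (1 + |x + v - s|) ^ 4 / s ≤ 13000 * (P * u) ^ 4 / (x / 2) := by gcongr
      _ = _ := by field_simp; ring
  have hh0b : |h0| ≤ P * u := by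
    refine le_trans ?_ hxvs
    have := abs_add_le (x + v - s) (2 / 3)
    rw [abs_of_nonneg (by norm_num : (0 : ℝ) ≤ 2 / 3)] at this
    linarith
  set E := (1 + v / x) ^ (-(N + 1 : ℝ)) with hE
  have hE0 : 0 ≤ E := by positivity
  have hE1 : E ≤ Q / u ^ M := pw1 x v (N + 1) M hM hx2 hv (by linarith)
  have hE2 : |E - Real.exp (-v)| ≤ 2 * P * Q / x * (u ^ 2 / u ^ M) :=
    pwE x v (N + 1) (K + a + 1) M hM hx2 hv (by linarith) (by rw [abs_le]; constructor <;> linarith)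
  have hev : Real.exp (-v) ≤ Q / u ^ M := pw3 v M hM hv
  have h4 := pw4 x v a hx0 hv ha0.le
  rw [Wid a ha x v hx0 hv N haN]
  set c := Real.cos (Real.pi * a)
  set S := Real.sin (Real.pi * a)
  have hc : |c| ≤ 1 := Real.abs_cos_le_one _
  have hS : |S / Real.pi| ≤ 1 := by
    rw [abs_div, abs_of_pos Real.pi_pos, div_le_one Real.pi_pos]
    exact (Real.abs_sin_le_one _).trans (by linarith)
  have hSg : 2 * S / Real.sqrt (2 * Real.pi * x) = S / Real.pi * γ := by
    rw [hγ]; field_simp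
  rw [hSg]
  set ev := Real.exp (-v)
  have hev0 : 0 < ev := Real.exp_pos _
  set B := (1 + v / x) ^ (-a)
  have e : c * (ev * B) + S / Real.pi * (g * E * h) - ev * (c + S / Real.pi * γ * h0) =
     c * (ev * (B - 1)) + S / Real.pi * (g * (E * (h - h0)) + g * ((E - ev) * h0) + (g - γ) * (ev * h0)) := by ring
  rw [e]
  have uM : 0 < u ^ M := by positivity
  have t1 : |c * (ev * (B - 1))| ≤ Q * a / x * (u ^ 4 / u ^ M) := by
    rw [abs_mul, abs_mul, abs_of_pos hev0]
    calc |c| * (ev * |B - 1|) ≤ 1 * (Q / u ^ M * (a * v / x)) := by gcongr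
      _ = Q * a / x * (v / u ^ M) := by ring
      _ ≤ _ := by
        gcongr
        calc v ≤ u := by linarith
          _ = u ^ 1 := by ring
          _ ≤ u ^ 4 := pow_le_pow_right₀ hu1 (by norm_num)
  have t2 : |g * (E * (h - h0))| ≤ Q * ((2 * Real.pi + C) * 26000 * P ^ 4) / x * (u ^ 4 / u ^ M) := by
    rw [abs_mul g, abs_mul E, abs_of_nonneg hE0]
    calc |g| * (E * |h - h0|) ≤ (2 * Real.pi + C) * (Q / u ^ M * (26000 * P ^ 4 * u ^ 4 / x)) := by gcongr
      _ = _ := by ring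
  have t3 : |g * ((E - ev) * h0)| ≤ Q * (2 * (2 * Real.pi + C) * P ^ 2) / x * (u ^ 4 / u ^ M) := by
    rw [abs_mul g, abs_mul (E - ev)]
    calc |g| * (|E - ev| * |h0|) ≤ (2 * Real.pi + C) * (2 * P * Q / x * (u ^ 2 / u ^ M) * (P * u)) := by gcongr
      _ = Q * (2 * (2 * Real.pi + C) * P ^ 2) / x * (u ^ 3 / u ^ M) := by ring
      _ ≤ _ := by
        have : u ^ 3 ≤ u ^ 4 := pow_le_pow_right₀ hu1 (by norm_num)
        gcongr
  have t4 : |(g - γ) * (ev * h0)| ≤ Q * (C * P) / x * (u ^ 4 / u ^ M) := by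
    rw [abs_mul, abs_mul, abs_of_pos hev0]
    calc |g - γ| * (ev * |h0|) ≤ C / x * (Q / u ^ M * (P * u)) := by gcongr
      _ = Q * (C * P) / x * (u ^ 1 / u ^ M) := by ring
      _ ≤ _ := by
        have : u ^ 1 ≤ u ^ 4 := pow_le_pow_right₀ hu1 (by norm_num)
        gcongr ?_ * (?_ / ?_)
  have t5 : |S / Real.pi * (g * (E * (h - h0)) + g * ((E - ev) * h0) + (g - γ) * (ev * h0))| ≤
      |g * (E * (h - h0))| + |g * ((E - ev) * h0)| + |(g - γ) * (ev * h0)| := by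
    rw [abs_mul]
    refine (mul_le_of_le_one_left (abs_nonneg _) hS).trans ?_
    exact abs_add_three _ _ _
  refine (abs_add_le _ _).trans ?_
  have : Q * (a + (2 * Real.pi + C) * 26000 * P ^ 4 + 2 * (2 * Real.pi + C) * P ^ 2 + C * P) / x * (u ^ 4 / u ^ M)
    = Q * a / x * (u ^ 4 / u ^ M) + Q * ((2 * Real.pi + C) * 26000 * P ^ 4) / x * (u ^ 4 / u ^ M) +
     Q * (2 * (2 * Real.pi + C) * P ^ 2) / x * (u ^ 4 / u ^ M) + Q * (C * P) / x * (u ^ 4 / u ^ M) := by ring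
  linarith

lemma SS_one (a : ℝ) (ha0 : 0 < a) (ha : ∀ n : ℤ, a ≠ n) : SS a (a + 1) := by
  intro K
  obtain ⟨C, X, hC, hX, h⟩ := ptw a ha0 ha K 1 le_rfl
  refine ⟨C, X, fun x hx N hN => ?_⟩
  have hx0 : 0 < x := by linarith
  have h1 := (h x hx N hN).2 0 le_rfl
  have hp : 0 < x ^ (-a) := Real.rpow_pos_of_pos hx0 _
  have e5 : x ^ (-a) * x ^ a = 1 := by rw [← Real.rpow_add hx0]; simp
  have e6 : x ^ (-a - 1) = x ^ (-a) / x := Real.rpow_sub_one hx0.ne' _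
  simp only [neg_zero, Real.exp_zero, one_mul, add_zero, one_pow, div_one, mul_one] at h1
  have e : Ph a (a + 1) N x - Mn a (a + 1) N x = x ^ (-a) * (x ^ a * Ph a (a + 1) N x -
     (Real.cos (Real.pi * a) + 2 * Real.sin (Real.pi * a) / Real.sqrt (2 * Real.pi * x) *
          (x - (N + 1 - a) + 2 / 3))) := by
    unfold Mn
    have : invG (a + 1 - a) = 1 := by simp [invG]
    rw [this]
    linear_combination (-(Ph a (a + 1) N x)) * e5
  rw [e, abs_mul, abs_of_pos hp, e6]
  calc _ ≤ x ^ (-a) * (C / x) := by gcongr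
    _ = _ := by ring

lemma SS_main (a : ℝ) (ha1 : 1 < a) (ha : ∀ n : ℤ, a ≠ n) (μ : ℝ) (hμ : 0 < μ) (hμn : ∀ n : ℤ, μ ≠ n) :
    SS a (a + 1 - μ) := by
  intro K
  obtain ⟨m, hm⟩ := exists_nat_ge (μ + 1)
  obtain ⟨C, X, hC, hX, h⟩ := ptw a (by linarith) ha K (4 + m) (by omega)
  set I := ∫ v in Ioi (0 : ℝ), v ^ (μ - 1) * (1 / (1 + v) ^ m) with hI
  set Gm := Real.Gamma μ with hGm
  set Gb := Real.Gamma (1 - μ) with hGb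
  have hGm0 : 0 < Gm := Real.Gamma_pos_of_pos hμ
  have hβ : ∀ k : ℤ, 1 - μ ≠ k := fun k hk => hμn (1 - k) (by push_cast; linarith)
  have hGb0 : Gb ≠ 0 := Real.Gamma_ne_zero fun k hk => hβ (-k) (by push_cast; linarith)
  refine ⟨|(Gm * Gb)⁻¹| * (C * I), max X (μ + |K|), fun x hx' N hN => ?_⟩
  have hx : X ≤ x := (le_max_left _ _).trans hx'
  have hx2 : μ + |K| ≤ x := (le_max_right _ _).trans hx'
  have hx0 : 0 < x := by linarith
  obtain ⟨haN, hv⟩ := h x hx N hN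
  have hN' := abs_le.1 hN
  have hKK := le_abs_self K
  have hNμ : 0 < 1 - μ + N := by linarith
  obtain ⟨F1, F2⟩ := Fub (a - 1) (by linarith) N μ x hμ hx0 hNμ
  obtain ⟨n, hn⟩ := exists_nat_gt (μ - 1)
  have A1 := A_all (a - 1) (by linarith) N x hx0 n (1 - μ) hβ (by linarith) hNμ
  have A2 : ∀ v ∈ Ioi (0 : ℝ), v ^ (μ - 1) * Jf (a - 1) N 1 (x + v) =
      (Real.Gamma a * Real.exp (-x)) * (v ^ (μ - 1) * (Real.exp (-v) * Ph a (a + 1) N (x + v))) := by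
    intro v hv
    have hv0 : 0 < v := hv
    rw [← A_pos (a - 1) (by linarith) N 1 (x + v) one_pos (by linarith)]
    unfold Gf
    have e1 : a - 1 + 1 = a := by ring
    rw [e1, add_comm 1 a, Real.Gamma_one, neg_add, Real.exp_add]; ring
  have hGa : 0 < Real.Gamma a := Real.Gamma_pos_of_pos (by linarith)
  have hk : Real.Gamma a * Real.exp (-x) ≠ 0 := by positivity
  rw [integrableOn_congr_fun A2 measurableSet_Ioi] at F2
  have F2' : IntegrableOn (fun v => v ^ (μ - 1) * (Real.exp (-v) * Ph a (a + 1) N (x + v))) (Ioi 0) := by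
    have := F2.const_mul (Real.Gamma a * Real.exp (-x))⁻¹
    refine Integrable.congr this (Eventually.of_forall fun v => ?_)
    simp only []
    rw [← mul_assoc, inv_mul_cancel₀ hk, one_mul]
  rw [setIntegral_congr_fun measurableSet_Ioi A2, integral_const_mul, ← A1] at F1
  have F3 : Gm * Gb * Ph a (a + 1 - μ) N x =
      ∫ v in Ioi (0 : ℝ), v ^ (μ - 1) * (Real.exp (-v) * Ph a (a + 1) N (x + v)) := by
    apply mul_left_cancel₀ hk
    rw [← F1]; unfold Gf
    have e1 : a - 1 + 1 = a := by ring
    have e2 : 1 - μ + a = a + 1 - μ := by ring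
    rw [e1, e2]; ring
  set c := Real.cos (Real.pi * a) with hc
  set S := 2 * Real.sin (Real.pi * a) / Real.sqrt (2 * Real.pi * x) with hS
  set d := x - (N + 1 - a) + 2 / 3 with hd
  -- the model integral
  have i1 : IntegrableOn (fun v : ℝ => Real.exp (-(1 * v)) * v ^ (μ - 1)) (Ioi 0) := exp_rpow_int μ 1 hμ one_pos
  have i2 : IntegrableOn (fun v : ℝ => Real.exp (-(1 * v)) * v ^ (μ + 1 - 1)) (Ioi 0) :=
    exp_rpow_int (μ + 1) 1 (by linarith) one_pos
  have v1 : ∫ v in Ioi (0 : ℝ), Real.exp (-(1 * v)) * v ^ (μ - 1) = Gm := by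
    rw [exp_rpow_val μ 1 hμ one_pos]; simp [hGm]
  have v2 : ∫ v in Ioi (0 : ℝ), Real.exp (-(1 * v)) * v ^ (μ + 1 - 1) = μ * Gm := by
    rw [exp_rpow_val (μ + 1) 1 (by linarith) one_pos, Real.Gamma_add_one hμ.ne']; simp [hGm]
  have eq0 : ∀ v ∈ Ioi (0 : ℝ), v ^ (μ - 1) * (Real.exp (-v) * (c + S * (x + v - (N + 1 - a) + 2 / 3))) =
      (c + S * d) * (Real.exp (-(1 * v)) * v ^ (μ - 1)) + S * (Real.exp (-(1 * v)) * v ^ (μ + 1 - 1)) := by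
    intro v hv
    have hv0 : 0 < v := hv
    have : v ^ (μ + 1 - 1) = v ^ (μ - 1) * v := by
      rw [← Real.rpow_add_one hv0.ne']; ring_nf
    rw [this, hd, one_mul]; ring
  have G2 : IntegrableOn (fun v => v ^ (μ - 1) * (Real.exp (-v) * (c + S * (x + v - (N + 1 - a) + 2 / 3)))) (Ioi 0) := by
    rw [integrableOn_congr_fun eq0 measurableSet_Ioi]
    exact (i1.const_mul _).add (i2.const_mul _)
  have G3 : ∫ v in Ioi (0 : ℝ), v ^ (μ - 1) * (Real.exp (-v) * (c + S * (x + v - (N + 1 - a) + 2 / 3))) =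
      Gm * (c + S * (d + μ)) := by
    rw [setIntegral_congr_fun measurableSet_Ioi eq0, integral_add (i1.const_mul _) (i2.const_mul _),
      integral_const_mul, integral_const_mul, v1, v2]; ring
  have key : |x ^ a * (Gm * Gb * Ph a (a + 1 - μ) N x) - Gm * (c + S * (d + μ))| ≤ C / x * I := by
    rw [F3, ← G3, ← integral_const_mul, ← integral_sub (F2'.const_mul _) G2, hI, ← integral_const_mul,
      ← Real.norm_eq_abs]
    apply norm_integral_le_of_norm_le ((wt_int μ hμ m hm).const_mul _)
    filter_upwards [ae_restrict_mem measurableSet_Ioi] with v hv'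
    have hv0 : 0 < v := hv'
    have h1 := hv v hv0.le
    have hw : 0 < v ^ (μ - 1) := Real.rpow_pos_of_pos hv0 _
    rw [Real.norm_eq_abs]
    have : x ^ a * (v ^ (μ - 1) * (Real.exp (-v) * Ph a (a + 1) N (x + v))) -
      v ^ (μ - 1) * (Real.exp (-v) * (c + S * (x + v - (N + 1 - a) + 2 / 3))) =
      v ^ (μ - 1) * (x ^ a * (Real.exp (-v) * Ph a (a + 1) N (x + v)) -
       Real.exp (-v) * (c + S * (x + v - (N + 1 - a) + 2 / 3))) := by ring
    rw [this, abs_mul, abs_of_pos hw]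
    have e4 : (1 + v) ^ 4 / (1 + v) ^ (4 + m) = 1 / (1 + v) ^ m := by
      rw [pow_add]; field_simp
    rw [e4] at h1
    calc _ ≤ v ^ (μ - 1) * (C / x * (1 / (1 + v) ^ m)) := by gcongr
      _ = _ := by ring
  have hp : 0 < x ^ (-a) := Real.rpow_pos_of_pos hx0 _
  have e5 : x ^ (-a) * x ^ a = 1 := by rw [← Real.rpow_add hx0]; simp
  have e6 : x ^ (-a - 1) = x ^ (-a) / x := Real.rpow_sub_one hx0.ne' _
  have e : Ph a (a + 1 - μ) N x - Mn a (a + 1 - μ) N x =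
      x ^ (-a) * ((Gm * Gb)⁻¹ * (x ^ a * (Gm * Gb * Ph a (a + 1 - μ) N x) - Gm * (c + S * (d + μ)))) := by
    unfold Mn
    have : invG (a + 1 - μ - a) = Gb⁻¹ := by
      unfold invG; rw [hGb]; congr 2; ring
    rw [this]
    have q1 : (Gm * Gb)⁻¹ * (x ^ a * (Gm * Gb * Ph a (a + 1 - μ) N x) - Gm * (c + S * (d + μ))) =
       x ^ a * Ph a (a + 1 - μ) N x - Gb⁻¹ * (c + S * (d + μ)) := by
      field_simp
    rw [q1, ← hc, ← hS, hd]; linear_combination (-(Ph a (a + 1 - μ) N x)) * e5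
  rw [e, abs_mul, abs_of_pos hp, e6, abs_mul]
  calc _ ≤ x ^ (-a) * (|(Gm * Gb)⁻¹| * (C / x * I)) := by gcongr
    _ = _ := by ring

lemma SS_big (a : ℝ) (ha1 : 1 < a) (ha : ∀ n : ℤ, a ≠ n) (b : ℝ) : SS a b := by
  by_cases hi : ∃ k : ℤ, b - a = k
  · obtain ⟨k, hk⟩ := hi
    have hnat : ∀ n : ℕ, SS a (a + n) ∧ SS a (a + n + 1) := by
      intro n
      induction n with
      | zero =>
        refine ⟨?_, by simpa using SS_one a (by linarith) ha⟩
        simpa using SS_neg a 0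
      | succ n ih =>
        have := SS_b a (a + n + 1) (by ring_nf; positivity) ih.2 (by simpa using ih.1)
        push_cast
        rw [← add_assoc]
        exact ⟨ih.2, this⟩
    rcases le_total 0 k with h | h
    · obtain ⟨n, rfl⟩ := Int.eq_ofNat_of_zero_le h
      have : b = a + n := by push_cast at hk; linarith
      rw [this]; exact (hnat n).1
    · obtain ⟨n, hn⟩ := Int.eq_ofNat_of_zero_le (neg_nonneg.2 h)
      have hk2 : k = -(n : ℤ) := by simpa using congrArg Neg.neg hn
      rw [hk2] at hk
      have : b = a - n := by push_cast at hk; linarith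
      rw [this]; exact SS_neg a n
  · push Not at hi
    have hall : ∀ n : ℕ, ∀ b : ℝ, (∀ k : ℤ, b - a ≠ k) → b - a < 1 + n → SS a b := by
      intro n
      induction n with
      | zero =>
        intro b hb hlt
        have := SS_main a ha1 ha (a + 1 - b) (by push_cast at hlt; linarith)
          (fun k hk => hb (1 - k) (by push_cast; linarith))
        convert this using 1; ring
      | succ n ih =>
        intro b hb hlt
        push_cast at hlt
        have h1 := ih (b - 1) (fun k hk => hb (k + 1) (by push_cast; linarith)) (by linarith)
        have h2 := ih (b - 1 - 1) (fun k hk => hb (k + 2) (by push_cast; linarith)) (by linarith)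
        have := SS_b a (b - 1) (fun h => hb 1 (by push_cast; linarith)) h1 h2
        simpa using this
    obtain ⟨n, hn⟩ := exists_nat_gt (b - a)
    exact hall n b hi (by linarith)

lemma SS_all (a : ℝ) (ha : ∀ n : ℤ, a ≠ n) (b : ℝ) : SS a b := by
  have hall : ∀ n : ℕ, ∀ a : ℝ, (∀ k : ℤ, a ≠ k) → 1 - n < a → ∀ b, SS a b := by
    intro n
    induction n with
    | zero => intro a ha h b; exact SS_big a (by simpa using h) ha b
    | succ n ih =>
      intro a ha h b
      push_cast at h
      have h1 := ih (a + 1) (fun k hk => ha (k - 1) (by push_cast; linarith)) (by linarith)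
      simpa using SS_a (a + 1) b (h1 b) (h1 (b + 1))
  obtain ⟨n, hn⟩ := exists_nat_gt (1 - a)
  exact hall n a ha (by linarith) b

end KSL

end

section
namespace KSL

lemma poC (a : ℝ) (n : ℕ) : (ascPochhammer ℂ n).eval (a : ℂ) = ((po a n : ℝ) : ℂ) := by
  induction n with
  | zero => simp [po]
  | succ n ih => rw [ascPochhammer_succ_eval, ih, po_succ]; push_cast; ring

lemma kumC (a b x : ℝ) (hb : ∀ n : ℕ, b ≠ -(n : ℝ)) :
    (1 / Complex.Gamma (b : ℂ)) * kummer (a : ℂ) (b : ℂ) (x : ℂ) = ((MM a b x : ℝ) : ℂ) := by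
  unfold kummer MM
  rw [← tsum_mul_left, Complex.ofReal_tsum]
  congr 1; ext n
  have h1 : po b n ≠ 0 := by
    intro h
    have h2 := invG_po b n
    rw [h, zero_mul] at h2
    exact inv_ne_zero (Real.Gamma_ne_zero hb) h2
  have h3 : invG (b + n) = invG b / po b n := by
    rw [invG_po b n]; field_simp
  unfold mt
  rw [poC, poC, Complex.Gamma_ofReal, h3, invG]
  push_cast
  ring

lemma main_real (a b x : ℝ) (hb : ∀ n : ℕ, b ≠ -(n : ℝ)) (hx : 0 < x) (hm : 0 ≤ x + 2 * a - b) :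
    ((1 / Complex.Gamma (b : ℂ)) * kummer (a : ℂ) (b : ℂ) (x : ℂ) -
            ((x : ℂ) ^ ((a : ℂ) - (b : ℂ)) * Complex.exp (x : ℂ) / Complex.Gamma (a : ℂ)) *
              ∑ j ∈ Finset.range (⌊x + 2 * a - b⌋.toNat),
                (ascPochhammer ℂ j).eval ((b : ℂ) - (a : ℂ)) *
                  (ascPochhammer ℂ j).eval (1 - (a : ℂ)) / (j.factorial * (x : ℂ) ^ j)) -
          (x : ℂ) ^ (-(a : ℂ)) / Complex.Gamma ((b : ℂ) - (a : ℂ)) *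
            ((Real.cos (Real.pi * a) +
                2 * Real.sin (Real.pi * a) / Real.sqrt (2 * Real.pi * x) *
                  (2 / 3 - ((⌊x + 2 * a - b⌋ : ℝ) - x - 2 * a + b)) : ℝ) : ℂ) =
    ((Ph a b ⌊x + 2 * a - b⌋.toNat x - Mn a b ⌊x + 2 * a - b⌋.toNat x : ℝ) : ℂ) := by
  have hfl : ((⌊x + 2 * a - b⌋.toNat : ℕ) : ℝ) = (⌊x + 2 * a - b⌋ : ℝ) := by
    have := Int.toNat_of_nonneg (Int.floor_nonneg.2 hm)
    exact_mod_cast this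
  rw [kumC a b x hb]
  have e1 : (x : ℂ) ^ ((a : ℂ) - (b : ℂ)) = ((x ^ (a - b) : ℝ) : ℂ) := by
    rw [Complex.ofReal_cpow hx.le]; push_cast; rfl
  have e2 : (x : ℂ) ^ (-(a : ℂ)) = ((x ^ (-a) : ℝ) : ℂ) := by
    rw [Complex.ofReal_cpow hx.le]; push_cast; rfl
  have e3 : (b : ℂ) - a = ((b - a : ℝ) : ℂ) := by push_cast; rfl
  have e4 : (1 : ℂ) - a = ((1 - a : ℝ) : ℂ) := by push_cast; rfl
  rw [e1, e2, e3, e4, Complex.Gamma_ofReal, Complex.Gamma_ofReal]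
  simp only [poC]
  unfold Ph Mn EE invG
  rw [hfl, ← Complex.ofReal_exp]
  push_cast
  ring

end KSL


end

/-- Two-term form of the subdominant algebraic contribution on the Stokes line `arg z = 0`:
with optimal truncation index `m₀(x) = ⌊x + 2a − b⌋` and `α(x) = m₀(x) − x − 2a + b`, the
remainder equals
`(x^{−a}/Γ(b−a)) [cos(πa) + (2 sin(πa)/√(2πx)) (2/3 − α(x))] + O(x^{−a−1})`. -/
theorem kummer_stokes_line_two_terms (a b : ℝ)
    (ha : ∀ n : ℤ, a ≠ (n : ℝ)) (hb : ∀ n : ℕ, b ≠ -(n : ℝ)) (hba : ∀ n : ℕ, b - a ≠ -(n : ℝ)) :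
    (fun x : ℝ =>
        ((1 / Complex.Gamma (b : ℂ)) * kummer (a : ℂ) (b : ℂ) (x : ℂ) -
            ((x : ℂ) ^ ((a : ℂ) - (b : ℂ)) * Complex.exp (x : ℂ) / Complex.Gamma (a : ℂ)) *
              ∑ j ∈ Finset.range (⌊x + 2 * a - b⌋.toNat),
                (ascPochhammer ℂ j).eval ((b : ℂ) - (a : ℂ)) *
                  (ascPochhammer ℂ j).eval (1 - (a : ℂ)) / (j.factorial * (x : ℂ) ^ j)) -
          (x : ℂ) ^ (-(a : ℂ)) / Complex.Gamma ((b : ℂ) - (a : ℂ)) *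
            ((Real.cos (Real.pi * a) +
                2 * Real.sin (Real.pi * a) / Real.sqrt (2 * Real.pi * x) *
                  (2 / 3 - ((⌊x + 2 * a - b⌋ : ℝ) - x - 2 * a + b)) : ℝ) : ℂ))
      =O[atTop] fun x : ℝ => x ^ (-a - 1) := by
  obtain ⟨C, X, h⟩ := KSL.SS_all a ha b (|2 * a - b| + 1)
  apply IsBigO.of_bound C
  filter_upwards [eventually_ge_atTop X, eventually_gt_atTop 0, eventually_ge_atTop (b - 2 * a)] with x h1 h2 h3
  have hm : 0 ≤ x + 2 * a - b := by linarith
  rw [KSL.main_real a b x hb h2 hm, Complex.norm_real, Real.norm_eq_abs, Real.norm_eq_abs,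
    abs_of_pos (Real.rpow_pos_of_pos h2 _)]
  apply h x h1
  have hfl : ((⌊x + 2 * a - b⌋.toNat : ℕ) : ℝ) = (⌊x + 2 * a - b⌋ : ℝ) := by
    have := Int.toNat_of_nonneg (Int.floor_nonneg.2 hm)
    exact_mod_cast this
  rw [hfl, abs_le]
  have f1 := Int.floor_le (x + 2 * a - b)
  have f2 := Int.lt_floor_add_one (x + 2 * a - b)
  have g1 := le_abs_self (2 * a - b)
  have g2 := neg_abs_le (2 * a - b)
  constructor <;> linarith
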